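/- Assume ε = 1/6 or ε = −1/6. Then there exist h₀ > 0 and C > 0, depending only on V₁ and V₂, such that for every C^∞ 1-periodic φ : ℝ → ℂ and every positive integer N with h = 1/N ≤ h₀, the Nyström system with data g = Wφ has a unique solution (φ₀,…,φ_{N−1}), and max_{0 ≤ j ≤ N−1} |φ_j − φ(t_j)| ≤ C h² ‖φ‖₄. -/

import Mathlib

/-!
The argument takes place in the space `ℓ¹(ℤ)` of Fourier coefficients. Expanding the smooth
parts of the kernels in the variables `s` and `s - t` (`exists_rep`), the operator `W` and, for
each `N`, the Nyström matrix tested against characters both take the form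
`M_N e_m = pS_N(m) e_m + Σ_i kS_N(i,m) e_{m+i.1}` (`Rep.wop`, `disc_main`), where the parameter
value `N = 0` encodes the continuous operator. The principal symbol `pS` comes from the constant
diagonal value `α` of `A₁` and has order one; the remainder `kS` has lower order.

For `ε = ±1/6` two things happen. The discrete principal symbol is elliptic uniformly in `N`
(`le_norm_pS`), and the scheme is consistent of second order (`pS_conv`, `kS_conv`): the
first-order error term carries the factor `log |2 sin (π ε)|`, which vanishes because
`2 sin (π/6) = 1`.

Aliasing the frequencies modulo `N` and dividing by the principal symbol (`Bop`) turns the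
discrete system into `1 + R_N` with `R_N → R_0` in operator norm (`Rep.rop_conv`). The limit `R_0`
is compact on `ℓ¹(ℤ)`, and `1 + R_0` is injective: an element of its kernel is smooth by a
bootstrap in weighted `ℓ¹` norms, so that injectivity of `W` on smooth functions applies
(`Rep.eq_zero`). The Fredholm alternative then gives a stability bound uniform in large `N`
(`Rep.stable`, `Rep.nys_stable`), hence unique solvability of the square Nyström system.

The convergence estimate follows from stability and the `O(h²)` consistency error measured in
`ℓ¹` (`Rep.consistency`), since `Σ ⟨m⟩³ |φ̂(m)| ≤ C ‖φ‖₄` by Cauchy–Schwarz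
(`tsum_le_sobNorm`) and the sup norm of a function is at most the `ℓ¹` norm of its coefficients.
-/

noncomputable section

/-- Smooth kernel data, 1-periodic in each variable. -/
def SPK (A : ℝ → ℝ → ℂ) : Prop :=
  ContDiff ℝ (⊤ : ℕ∞) (fun p : ℝ × ℝ => A p.1 p.2) ∧
    (∀ s t, A (s + 1) t = A s t) ∧ (∀ s t, A s (t + 1) = A s t)

/-- Logarithmic kernel `V(s,t) = (i/(2π)) A(s,t) log(sin²(π(s−t))) + K(s,t)`. -/
def logKer (A K : ℝ → ℝ → ℂ) (s t : ℝ) : ℂ :=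
  Complex.I / (2 * Real.pi) * A s t * (Real.log (Real.sin (Real.pi * (s - t)) ^ 2) : ℂ) + K s t

/-- Grid point `s_{j+ε} = (j − 1/2 + ε)h`. -/
def sg (h ε : ℝ) (j : ℤ) : ℝ := ((j : ℝ) - 1 / 2 + ε) * h

/-- Grid point `t_{j+ε} = (j + ε)h`. -/
def tg (h ε : ℝ) (j : ℤ) : ℝ := ((j : ℝ) + ε) * h

/-- Integral operator with kernel `V`. -/
def Vop (V : ℝ → ℝ → ℂ) (φ : ℝ → ℂ) (s : ℝ) : ℂ := ∫ t in (0:ℝ)..1, V s t * φ t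

/-- Hypersingular operator `W = −D V₁ D + V₂`. -/
def Wop (V1 V2 : ℝ → ℝ → ℂ) (φ : ℝ → ℂ) (s : ℝ) : ℂ :=
  -deriv (Vop V1 (deriv φ)) s + Vop V2 φ s

/-- Nyström matrix entries `W^ε_{ij}`. -/
def Wmat (V1 V2 : ℝ → ℝ → ℂ) (h ε : ℝ) (i j : ℤ) : ℂ :=
  V1 (sg h ε (i + 1)) (sg h 0 (j + 1)) - V1 (sg h ε i) (sg h 0 (j + 1))
    - V1 (sg h ε (i + 1)) (sg h 0 j) + V1 (sg h ε i) (sg h 0 j)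
    + (h : ℂ) ^ 2 * V2 (tg h ε i) (tg h 0 j)

/-- Fourier coefficient of a 1-periodic function. -/
def fc (u : ℝ → ℂ) (m : ℤ) : ℂ :=
  ∫ t in (0:ℝ)..1, u t * Complex.exp (-(2 * Real.pi * Complex.I * (m : ℂ) * (t : ℂ)))

/-- Periodic Sobolev norm of order `r`. -/
def sobNorm (r : ℝ) (u : ℝ → ℂ) : ℝ :=
  Real.sqrt (‖fc u 0‖ ^ 2 +
    ∑' m : ℤ, if m = 0 then 0 else |(m : ℝ)| ^ (2 * r) * ‖fc u m‖ ^ 2)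

/-- 1-periodic step function on the ε-shifted grid with coefficients `v`. -/
def stepf (N : ℕ) (ε : ℝ) (v : ZMod N → ℂ) (s : ℝ) : ℂ :=
  v ((⌊s * N + 1 / 2 - ε⌋ : ℤ) : ZMod N)

/-- Midpoint quadrature error matrix entries `E^ε_{ij}`. -/
def Emat (V2 : ℝ → ℝ → ℂ) (h ε : ℝ) (i j : ℤ) : ℂ :=
  (∫ s in (sg h ε i)..(sg h ε (i + 1)), ∫ t in (sg h 0 j)..(sg h 0 (j + 1)), V2 s t)
    - (h : ℂ) ^ 2 * V2 (tg h ε i) (tg h 0 j)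

/-- Spectral (ℓ²-operator) norm of a complex `N×N` matrix. -/
def specNorm {N : ℕ} (M : Matrix (Fin N) (Fin N) ℂ) : ℝ :=
  ‖LinearMap.toContinuousLinearMap (Matrix.toEuclideanLin M)‖

/-- The function `C̄₁(t) = −(1/(2πi)) log(4 sin²(πt))`. -/
def Cbar1 (t : ℝ) : ℂ :=
  -(1 / (2 * Real.pi * Complex.I)) * (Real.log (4 * Real.sin (Real.pi * t) ^ 2) : ℂ)

end

/-- The Nyström linear system with data `g = Wφ`:
`Σ_j W^ε_{ij} v_j = h (Wφ)(t_{i+ε})`, `i = 0,…,N−1`. -/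
def Nys (V1 V2 : ℝ → ℝ → ℂ) (ε : ℝ) (N : ℕ) [NeZero N] (φ : ℝ → ℂ)
    (v : ZMod N → ℂ) : Prop :=
  ∀ i : ZMod N,
    (∑ j : ZMod N,
        Wmat V1 V2 (1 / (N : ℝ)) ε ((i.val : ℕ) : ℤ) ((j.val : ℕ) : ℤ) * v j)
      = (1 / (N : ℂ)) * Wop V1 V2 φ (tg (1 / (N : ℝ)) ε ((i.val : ℕ) : ℤ))

noncomputable section

namespace NysLog

open Complex (I)
open scoped Real

/-! ### Characters and the logarithmic convolution kernel -/

/-- The character `x ↦ exp(2πinx)` of period one. -/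
def e (n : ℤ) (x : ℝ) : ℂ := Complex.exp (2 * π * I * n * x)

/-- The kernel `log(4 sin²(πx))`, with the value `log 4` at integers coming from
`Real.log 0 = 0`, so that `logKer` is `A·(ell − log 4) + K` everywhere, diagonal included. -/
def ell (x : ℝ) : ℝ := Real.log (Real.sin (π * x) ^ 2) + Real.log 4

lemma hasSum_of_eq {ι α : Type*} [AddCommMonoid α] [TopologicalSpace α] {f g : ι → α} {a : α}
    (h : HasSum f a) (hfg : ∀ i, g i = f i) : HasSum g a := by
  rwa [funext hfg]

lemma e_add (m n : ℤ) (x : ℝ) : e (m + n) x = e m x * e n x := by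
  simp only [e, ← Complex.exp_add]; push_cast; ring_nf

lemma e_add_arg (n : ℤ) (x y : ℝ) : e n (x + y) = e n x * e n y := by
  simp only [e, ← Complex.exp_add]; push_cast; ring_nf

@[simp] lemma e_zero (x : ℝ) : e 0 x = 1 := by simp [e]

@[simp] lemma e_zero_arg (n : ℤ) : e n 0 = 1 := by simp [e]

@[simp] lemma norm_e (n : ℤ) (x : ℝ) : ‖e n x‖ = 1 := by
  have : (2 * π * I * n * x : ℂ) = ((2 * π * n * x : ℝ) : ℂ) * I := by push_cast; ring
  rw [e, this, Complex.norm_exp_ofReal_mul_I]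

lemma e_ne_zero (n : ℤ) (x : ℝ) : e n x ≠ 0 := Complex.exp_ne_zero _

lemma e_neg (n : ℤ) (x : ℝ) : e (-n) x = (e n x)⁻¹ := by
  simp only [e, ← Complex.exp_neg]; push_cast; ring_nf

lemma e_neg_arg (n : ℤ) (x : ℝ) : e n (-x) = e (-n) x := by
  simp only [e]; push_cast; ring_nf

lemma e_sub (m n : ℤ) (x : ℝ) : e (m - n) x = e m x * e (-n) x := by
  rw [sub_eq_add_neg, e_add]

lemma e_sub_arg (n : ℤ) (x y : ℝ) : e n (x - y) = e n x * e (-n) y := by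
  rw [sub_eq_add_neg, e_add_arg, e_neg_arg]

lemma e_conj (n : ℤ) (x : ℝ) : (starRingEnd ℂ) (e n x) = e (-n) x := by
  rw [e_neg, Complex.inv_eq_conj (norm_e n x)]

lemma e_int (n k : ℤ) : e n k = 1 := by
  have : (2 * π * I * n * ((k : ℝ) : ℂ) : ℂ) = ((n * k : ℤ) : ℂ) * (2 * π * I) := by
    push_cast; ring
  rw [e, this, Complex.exp_int_mul_two_pi_mul_I]

lemma e_add_int (n k : ℤ) (x : ℝ) : e n (x + k) = e n x := by
  rw [e_add_arg, e_int, mul_one]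

lemma e_periodic (n : ℤ) : Function.Periodic (e n) 1 := fun x => by
  simpa using e_add_int n 1 x

lemma e_eq_pow (n : ℕ) (x : ℝ) : e n x = e 1 x ^ n := by
  simp only [e, ← Complex.exp_nat_mul]; push_cast; ring_nf

lemma e_mul_idx (m n : ℤ) (x : ℝ) : e (m * n) x = e m (n * x) := by
  simp only [e]; push_cast; ring_nf

lemma continuous_e (n : ℤ) : Continuous (e n) := by
  unfold e; fun_prop

lemma hasDerivAt_e (n : ℤ) (x : ℝ) : HasDerivAt (e n) (2 * π * I * n * e n x) x := by
  have h : HasDerivAt (fun y : ℝ => (2 * π * I * n * (y : ℂ))) (2 * π * I * n) x := by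
    simpa using (Complex.ofRealCLM.hasDerivAt (x := x)).const_mul (2 * π * I * n : ℂ)
  have h2 := h.cexp
  rw [mul_comm (Complex.exp _)] at h2
  exact h2

lemma contDiff_e (n : ℤ) : ContDiff ℝ (⊤ : ℕ∞) (e n) := by
  unfold e
  exact ((contDiff_const.mul Complex.ofRealCLM.contDiff)).cexp

lemma integral_e (n : ℤ) : ∫ x in (0:ℝ)..1, e n x = if n = 0 then 1 else 0 := by
  split_ifs with h
  · simp [h]
  · have hn : (2 * π * I * n : ℂ) ≠ 0 := by
      simp [Real.pi_ne_zero, h]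
    have : ∀ x ∈ Set.uIcc (0:ℝ) 1,
        HasDerivAt (fun y => (2 * π * I * n : ℂ)⁻¹ * e n y) (e n x) x := fun x _ => by
      have h2 := (hasDerivAt_e n x).const_mul (2 * π * I * n : ℂ)⁻¹
      rwa [← mul_assoc, inv_mul_cancel₀ hn, one_mul] at h2
    rw [intervalIntegral.integral_eq_sub_of_hasDerivAt this
      ((continuous_e n).intervalIntegrable _ _)]
    have h1 : e n 1 = 1 := by simpa using e_int n 1
    simp [h1]

lemma normSq_one_sub_e (x : ℝ) : ‖1 - e 1 x‖ ^ 2 = 4 * Real.sin (π * x) ^ 2 := by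
  have h : e 1 x = Complex.exp (((2 * (π * x) : ℝ) : ℂ) * I) := by
    simp only [e]; push_cast; ring_nf
  rw [h, Complex.exp_mul_I, ← Complex.ofReal_cos, ← Complex.ofReal_sin, ← Complex.normSq_eq_norm_sq,
    Complex.normSq_apply]
  simp only [Complex.sub_re, Complex.one_re, Complex.add_re, Complex.ofReal_re, Complex.mul_re,
    Complex.ofReal_im, Complex.I_re, Complex.I_im, Complex.sub_im, Complex.one_im, Complex.add_im,
    Complex.mul_im]
  rw [Real.cos_two_mul, Real.sin_two_mul]
  have := Real.sin_sq_add_cos_sq (π * x)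
  have h2 : Real.cos (π * x) ^ 2 = 1 - Real.sin (π * x) ^ 2 := by linarith
  ring_nf
  rw [show Real.cos (π * x) ^ 4 = (Real.cos (π * x) ^ 2) ^ 2 by ring, h2]
  ring

lemma ell_eq (x : ℝ) (hx : e 1 x ≠ 1) : ell x = 2 * Real.log ‖1 - e 1 x‖ := by
  have h1 : ‖1 - e 1 x‖ ≠ 0 := by
    rw [norm_ne_zero_iff, sub_ne_zero]; exact fun h => hx h.symm
  have h2 : Real.sin (π * x) ^ 2 ≠ 0 := by
    intro h
    have := normSq_one_sub_e x
    rw [h] at this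
    simp at this
    exact h1 (by simp [this])
  have := congrArg Real.log (normSq_one_sub_e x)
  rw [Real.log_pow, Real.log_mul (by norm_num) h2] at this
  rw [ell]; push_cast at this; linarith

lemma ell_periodic : Function.Periodic ell 1 := fun x => by
  unfold ell
  rw [mul_add, mul_one, Real.sin_add_pi, neg_sq]

lemma ell_neg (x : ℝ) : ell (-x) = ell x := by
  unfold ell
  rw [mul_neg, Real.sin_neg, neg_sq]

/-! ### The absolutely convergent Fourier series of `(1 − e(x)) log(4 sin²(πx))` -/

/-- The `n`-th Fourier coefficient of `(1 − e(x)) log(4 sin²(πx))`; the convention `0⁻¹ = 0`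
makes the formula valid for `n = 0` and `n = 1` too. -/
def cc (n : ℤ) : ℝ := -(|(n:ℝ)|)⁻¹ + (|(n:ℝ) - 1|)⁻¹

/-- Summable majorant `8/(1+|n|)²` of the coefficients `cc`. -/
lemma abs_cc_le (n : ℤ) : |cc n| ≤ 8 / (1 + |(n:ℝ)|) ^ 2 := by
  unfold cc
  rcases le_or_gt n 0 with h | h
  · obtain ⟨k, rfl⟩ : ∃ k : ℕ, n = -(k:ℤ) := ⟨n.natAbs, by omega⟩
    have h1 : |((-(k:ℤ) : ℤ) : ℝ)| = k := by simp
    have h2 : |((-(k:ℤ) : ℤ) : ℝ) - 1| = k + 1 := by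
      push_cast
      rw [show (-(k:ℝ) - 1) = -((k:ℝ)+1) by ring, abs_neg, abs_of_nonneg (by positivity)]
    rw [h1, h2]
    rcases Nat.eq_zero_or_pos k with rfl | hk
    · norm_num
    · have hk' : (1:ℝ) ≤ k := by exact_mod_cast hk
      have : -(k:ℝ)⁻¹ + ((k:ℝ)+1)⁻¹ = -(1 / (k * (k+1))) := by field_simp; ring
      rw [this, abs_neg, abs_of_nonneg (by positivity), div_le_div_iff₀ (by positivity) (by positivity)]
      nlinarith
  · obtain ⟨k, rfl⟩ : ∃ k : ℕ, n = (k:ℤ) + 1 := ⟨(n-1).natAbs, by omega⟩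
    have h1 : |(((k:ℤ) + 1 : ℤ) : ℝ)| = k + 1 := by
      push_cast; exact abs_of_nonneg (by positivity)
    have h2 : |(((k:ℤ) + 1 : ℤ) : ℝ) - 1| = k := by simp
    rw [h1, h2]
    rcases Nat.eq_zero_or_pos k with rfl | hk
    · norm_num
    · have hk' : (1:ℝ) ≤ k := by exact_mod_cast hk
      have : -((k:ℝ)+1)⁻¹ + (k:ℝ)⁻¹ = (1 / (k * (k+1))) := by field_simp; ring
      rw [this, abs_of_nonneg (by positivity), div_le_div_iff₀ (by positivity) (by positivity)]
      nlinarith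

lemma summable_inv_sq_int : Summable (fun n : ℤ => 1 / (1 + |(n:ℝ)|) ^ 2) := by
  refine Summable.of_nat_of_neg ?_ ?_
  · have := (summable_nat_add_iff 1).2 (Real.summable_one_div_nat_pow.2 (one_lt_two))
    refine this.congr fun n => ?_
    simp [add_comm]
  · have := (summable_nat_add_iff 1).2 (Real.summable_one_div_nat_pow.2 (one_lt_two))
    refine this.congr fun n => ?_
    simp [add_comm]

lemma summable_cc : Summable (fun n : ℤ => |cc n|) := by
  refine Summable.of_nonneg_of_le (fun _ => abs_nonneg _) abs_cc_le ?_
  simpa [div_eq_mul_inv] using summable_inv_sq_int.mul_left 8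

/-- Expansion of `−(1−z) log(1−z)`, absolutely convergent up to the boundary of the disc. -/
lemma hasSum_disc (z : ℂ) (hz : ‖z‖ ≤ 1) (hz1 : z ≠ 1) :
    HasSum (fun n : ℕ => ((-cc (n+1) : ℝ) : ℂ) * z ^ (n+1)) (-((1 - z) * Complex.log (1 - z))) := by
  have hcc : ∀ n : ℕ, ((-cc (n+1) : ℝ) : ℂ) = ((n:ℂ)+1)⁻¹ - (n:ℂ)⁻¹ := fun n => by
    have h1 : |((n:ℝ) + 1)| = n + 1 := abs_of_nonneg (by positivity)
    simp only [cc]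
    push_cast
    rw [h1]
    simp
    ring
  have hin : ∀ w : ℂ, ‖w‖ < 1 →
      HasSum (fun n : ℕ => ((-cc (n+1) : ℝ) : ℂ) * w ^ (n+1)) (-((1 - w) * Complex.log (1 - w))) := by
    intro w hw
    have h0 := Complex.hasSum_taylorSeries_neg_log hw
    have h1 := (hasSum_nat_add_iff' 1).2 h0
    have h2 := h0.mul_left w
    have h3 := h1.sub h2
    have hv : -((1 - w) * Complex.log (1 - w)) =
        -Complex.log (1 - w) - ∑ i ∈ Finset.range 1, w ^ i / (i : ℂ) - w * -Complex.log (1 - w) := by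
      simp; ring
    rw [hv]
    refine hasSum_of_eq h3 fun n => ?_
    rw [hcc]; push_cast; ring
  have hsum : Summable fun n : ℕ => |cc (n+1)| :=
    summable_cc.comp_injective (i := fun n : ℕ => (n:ℤ)+1) (fun a b h => by simpa using h)
  have hsumz : Summable (fun n : ℕ => ((-cc (n+1) : ℝ) : ℂ) * z ^ (n+1)) := by
    refine Summable.of_norm_bounded hsum fun n => ?_
    rw [norm_mul, norm_pow, Complex.norm_real, norm_neg, Real.norm_eq_abs]
    exact mul_le_of_le_one_right (abs_nonneg _) (pow_le_one₀ (norm_nonneg _) hz)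
  have hcont : ContinuousOn (fun r : ℝ => ∑' n : ℕ, ((-cc (n+1) : ℝ) : ℂ) * ((r:ℂ) * z) ^ (n+1))
      (Set.Icc 0 1) := by
    refine continuousOn_tsum (u := fun n : ℕ => |cc (n+1)|) (fun n => by fun_prop) hsum ?_
    intro n r hr
    rw [norm_mul, norm_pow, Complex.norm_real, norm_neg, Real.norm_eq_abs]
    refine mul_le_of_le_one_right (abs_nonneg _) (pow_le_one₀ (norm_nonneg _) ?_)
    rw [norm_mul, Complex.norm_real, Real.norm_of_nonneg hr.1]
    exact mul_le_one₀ hr.2 (norm_nonneg _) hz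
  have hslit : 1 - z ∈ Complex.slitPlane := by
    left
    have hre : z.re < 1 := by
      refine lt_of_le_of_ne ((Complex.re_le_norm z).trans hz) fun h => hz1 ?_
      have := Complex.sq_norm z
      rw [Complex.normSq_apply, h] at this
      have him : z.im = 0 := by nlinarith [norm_nonneg z]
      exact Complex.ext (by simp [h]) (by simp [him])
    simpa using hre
  have hR : ContinuousAt (fun r : ℝ => -((1 - (r:ℂ)*z) * Complex.log (1 - (r:ℂ)*z))) 1 := by
    have h1 : ContinuousAt (fun r : ℝ => 1 - (r:ℂ)*z) 1 := by fun_prop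
    exact (h1.mul (h1.clog (by simpa using hslit))).neg
  have hL : Filter.Tendsto (fun r : ℝ => ∑' n : ℕ, ((-cc (n+1) : ℝ) : ℂ) * ((r:ℂ) * z) ^ (n+1))
      (nhdsWithin 1 (Set.Ico 0 1)) (nhds (∑' n : ℕ, ((-cc (n+1) : ℝ) : ℂ) * z ^ (n+1))) := by
    have := (hcont 1 (by simp)).mono (Set.Ico_subset_Icc_self)
    simpa [ContinuousWithinAt] using this
  have hR' := hR.tendsto.mono_left (nhdsWithin_le_nhds (s := Set.Ico (0:ℝ) 1))
  have heq : (fun r : ℝ => ∑' n : ℕ, ((-cc (n+1) : ℝ) : ℂ) * ((r:ℂ) * z) ^ (n+1))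
      =ᶠ[nhdsWithin 1 (Set.Ico 0 1)] (fun r : ℝ => -((1 - (r:ℂ)*z) * Complex.log (1 - (r:ℂ)*z))) := by
    filter_upwards [self_mem_nhdsWithin] with r hr
    refine (hin _ ?_).tsum_eq
    rw [norm_mul, Complex.norm_real, Real.norm_of_nonneg hr.1]
    exact mul_lt_one_of_nonneg_of_lt_one_left hr.1 hr.2 hz
  have : (nhdsWithin (1:ℝ) (Set.Ico 0 1)).NeBot := by
    rw [← mem_closure_iff_nhdsWithin_neBot, closure_Ico (by norm_num)]; simp
  have := tendsto_nhds_unique (hL.congr' heq) hR'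
  simp only [Complex.ofReal_one, one_mul] at this
  rw [← this]
  exact hsumz.hasSum

lemma cc_symm (n : ℤ) : cc (1 - n) = - cc n := by
  unfold cc
  push_cast
  rw [show (1 - (n:ℝ)) = -(n - 1) by ring, abs_neg, show (-((n:ℝ) - 1) - 1) = -n by ring, abs_neg]
  ring

lemma hasSum_ell (x : ℝ) (hx : e 1 x ≠ 1) :
    HasSum (fun n : ℤ => (cc n : ℂ) * e n x) ((1 - e 1 x) * (ell x : ℂ)) := by
  set z := e 1 x with hz
  have hzn : ‖z‖ = 1 := norm_e _ _
  have hz0 : z ≠ 0 := e_ne_zero _ _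
  have hzc : (starRingEnd ℂ) z = z⁻¹ := by rw [hz, e_conj, e_neg]
  have h1 := (hasSum_disc z hzn.le hx).neg
  have hx' : z⁻¹ ≠ 1 := by simpa using hx
  have h2 := (hasSum_disc z⁻¹ (by simp [hzn]) hx').mul_left z
  have hlog : ((ell x : ℝ) : ℂ) = Complex.log (1 - z) + Complex.log (1 - z⁻¹) := by
    have : (1 - z).arg ≠ π := by
      intro h
      rw [Complex.arg_eq_pi_iff] at h
      have := Complex.re_le_norm z
      simp at h
      linarith [h.1]
    rw [← hzc, show (1 - (starRingEnd ℂ) z) = (starRingEnd ℂ) (1 - z) by simp,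
      Complex.log_conj _ this, Complex.add_conj, Complex.log_re, ell_eq x hx]
  have h3 : HasSum (fun n : ℤ => (cc (n+1) : ℂ) * e (n+1) x) ((1 - z) * (ell x : ℂ)) := by
    have := HasSum.of_nat_of_neg_add_one (f := fun n : ℤ => (cc (n+1) : ℂ) * e (n+1) x)
      (m := -(-((1 - z) * Complex.log (1 - z)))) (m' := z * (-((1 - z⁻¹) * Complex.log (1 - z⁻¹)))) ?_ ?_
    · have hv : (1 - z) * (ell x : ℂ) = -(-((1 - z) * Complex.log (1 - z))) +
          z * (-((1 - z⁻¹) * Complex.log (1 - z⁻¹))) := by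
        rw [hlog]; field_simp; ring
      rw [hv]; exact this
    · refine hasSum_of_eq h1 fun n => ?_
      rw [show ((n:ℤ)+1) = ((n+1:ℕ):ℤ) by push_cast; ring, e_eq_pow]
      push_cast; ring
    · refine hasSum_of_eq h2 fun n => ?_
      rw [show (-((n:ℤ)+1)+1) = 1 - ((n:ℤ)+1) by ring, cc_symm, e_sub,
        show ((n:ℤ)+1) = ((n+1:ℕ):ℤ) by push_cast; ring, e_neg, e_eq_pow, ← hz]
      rw [inv_pow]; push_cast; ring
  exact ((Equiv.addRight (1:ℤ)).hasSum_iff (f := fun n : ℤ => (cc n : ℂ) * e n x)).1 h3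

end NysLog

end

noncomputable section

namespace NysLog

open Complex (I)
open scoped Real

/-! ### Discrete symbols on the shifted grid -/

/-- Symbol of the logarithmic convolution: the `n`-th discrete Fourier coefficient of `ell` on the
grid `(j+ε)/N`. The value `N = 0` encodes the continuous limit, the exact coefficient `−1/|n|`. -/
def lS (ε : ℝ) (N : ℕ) (n : ℤ) : ℂ :=
  if N = 0 then -((|(n:ℝ)|⁻¹ : ℝ) : ℂ)
  else (1 / (N:ℂ)) * ∑ j ∈ Finset.range N, (ell ((j + ε) / N) : ℂ) * e (-n) ((j + ε) / N)

/-- Symbol of the mean value: the `n`-th discrete Fourier coefficient of `1` on the shifted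
grid, with the exact coefficient for `N = 0`. -/
def dS (ε : ℝ) (N : ℕ) (n : ℤ) : ℂ :=
  if N = 0 then (if n = 0 then 1 else 0)
  else (1 / (N:ℂ)) * ∑ j ∈ Finset.range N, e (-n) ((j + ε) / N)

/-- Symbol (up to a factor `I`) of the central difference quotient with step `1/N`,
of the derivative for `N = 0`. -/
def gS (N : ℕ) (n : ℤ) : ℝ := if N = 0 then 2 * π * n else 2 * N * Real.sin (π * n / N)

/-- The aliased frequency: the representative of `n` modulo `N` of least absolute value
(`n` itself for `N = 0`). -/
def nu (N : ℕ) (n : ℤ) : ℤ := ((n : ℤ) : ZMod N).valMinAbs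

/-- The weight `1 + |ν_N(n)|`. -/
def tw (N : ℕ) (n : ℤ) : ℝ := 1 + |((nu N n : ℤ) : ℝ)|

lemma nu_spec (N : ℕ) [NeZero N] (n : ℤ) : ∃ a : ℤ, n = nu N n + a * N := by
  have h : (((nu N n : ℤ)) : ZMod N) = n := ZMod.coe_valMinAbs _
  rw [ZMod.intCast_eq_intCast_iff_dvd_sub] at h
  obtain ⟨a, ha⟩ := h
  exact ⟨a, by rw [mul_comm]; omega⟩

lemma nu_le (N : ℕ) [NeZero N] (n : ℤ) : 2 * |((nu N n : ℤ) : ℝ)| ≤ N := by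
  have h := ZMod.valMinAbs_mem_Ioc (n : ZMod N)
  have : 2 * |nu N n| ≤ (N : ℤ) := by
    unfold nu
    rw [abs_eq_max_neg]
    simp only [Set.mem_Ioc] at h
    omega
  exact_mod_cast this

lemma nu_zero_left (n : ℤ) : nu 0 n = n := rfl

lemma nu_of_le (N : ℕ) (n : ℤ) (h : 2 * |(n:ℝ)| < N) : nu N n = n := by
  have h' : 2 * |n| < (N:ℤ) := by exact_mod_cast h
  have : NeZero N := ⟨by rintro rfl; have := abs_nonneg n; simp at h'; omega⟩
  rw [nu, ZMod.valMinAbs_spec]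
  refine ⟨rfl, ?_⟩
  rw [abs_eq_max_neg] at h'
  simp only [Set.mem_Ioc]; omega

lemma one_le_tw (N : ℕ) (n : ℤ) : 1 ≤ tw N n := by unfold tw; linarith [abs_nonneg ((nu N n : ℤ) : ℝ)]

lemma tw_pos (N : ℕ) (n : ℤ) : 0 < tw N n := by linarith [one_le_tw N n]

lemma abs_nu_add_le (N : ℕ) (n k : ℤ) :
    |((nu N (n + k) : ℤ) : ℝ)| ≤ |((nu N n : ℤ) : ℝ)| + |(k:ℝ)| := by
  rcases Nat.eq_zero_or_pos N with rfl | hN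
  · simp only [nu_zero_left]; push_cast; exact abs_add_le _ _
  · have : NeZero N := ⟨hN.ne'⟩
    have h1 : (nu N (n+k)).natAbs ≤ (nu N n + k).natAbs := by
      refine ZMod.natAbs_min_of_le_div_two N _ _ ?_ (ZMod.natAbs_valMinAbs_le _)
      simp [nu, ZMod.coe_valMinAbs]
    have h2 : |nu N (n+k)| ≤ |nu N n + k| := by
      rw [Int.abs_eq_natAbs, Int.abs_eq_natAbs]; exact_mod_cast h1
    have h3 := h2.trans (abs_add_le _ _)
    exact_mod_cast h3

lemma abs_nu_le (N : ℕ) (n : ℤ) : |((nu N n : ℤ) : ℝ)| ≤ |(n:ℝ)| := by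
  have := abs_nu_add_le N 0 n
  have h0 : nu N 0 = 0 := by simp [nu]
  simpa [h0] using this

lemma tw_le (N : ℕ) (n : ℤ) : tw N n ≤ 1 + |(n:ℝ)| := by
  unfold tw; linarith [abs_nu_le N n]

lemma tw_add_le (N : ℕ) (n k : ℤ) : tw N (n + k) ≤ tw N n * (1 + |(k:ℝ)|) := by
  unfold tw
  have := abs_nu_add_le N n k
  nlinarith [abs_nonneg ((nu N n : ℤ) : ℝ), abs_nonneg (k:ℝ)]

lemma e_one_eq_one_iff (x : ℝ) : e 1 x = 1 ↔ ∃ k : ℤ, x = k := by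
  constructor
  · intro h
    rw [e, Complex.exp_eq_one_iff] at h
    obtain ⟨k, hk⟩ := h
    refine ⟨k, ?_⟩
    have h2 : (2 * π * I : ℂ) ≠ 0 := by simp [Real.pi_ne_zero]
    have h3 : (2 * π * I : ℂ) * (x:ℂ) = (2 * π * I) * (k:ℂ) := by
      rw [mul_comm _ (k:ℂ), ← hk]; push_cast; ring
    have := mul_left_cancel₀ h2 h3
    exact_mod_cast this
  · rintro ⟨k, rfl⟩; exact e_int 1 k

/-- Orthogonality of characters on the shifted grid. -/
lemma char_sum (ε : ℝ) (N : ℕ) [NeZero N] (k : ℤ) :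
    (1 / (N:ℂ)) * ∑ j ∈ Finset.range N, e k ((j + ε) / N) =
      if (N:ℤ) ∣ k then e (k / N) ε else 0 := by
  have hN : (N:ℝ) ≠ 0 := NeZero.ne _
  have hN' : (N:ℂ) ≠ 0 := NeZero.ne _
  split_ifs with h
  · obtain ⟨q, rfl⟩ := h
    have hNZ : (N:ℤ) ≠ 0 := NeZero.ne _
    rw [Int.mul_ediv_cancel_left _ hNZ]
    have : ∀ j ∈ Finset.range N, e ((N:ℤ) * q) ((j + ε) / N) = e q ε := fun j _ => by
      rw [mul_comm, e_mul_idx]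
      have h1 : (((N:ℤ)):ℝ) * (((j:ℝ) + ε) / N) = ε + ((j:ℤ):ℝ) := by
        push_cast; field_simp; ring
      rw [h1, e_add_int]
    rw [Finset.sum_congr rfl this]
    simp [hN']
  · have h1 : ∀ j ∈ Finset.range N, e k ((j + ε) / N) = e k (ε / N) * (e k (1 / N)) ^ j := fun j _ => by
      simp only [e, ← Complex.exp_nat_mul, ← Complex.exp_add]
      congr 1; push_cast; field_simp; ring
    rw [Finset.sum_congr rfl h1, ← Finset.mul_sum]
    have hw : e k (1 / (N:ℝ)) ≠ 1 := by
      intro hw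
      have h2 : e 1 ((k:ℝ) * (1 / N)) = 1 := by rw [← e_mul_idx, one_mul, hw]
      obtain ⟨q, hq⟩ := (e_one_eq_one_iff _).1 h2
      apply h
      refine ⟨q, ?_⟩
      field_simp at hq
      have : (k:ℝ) = ((q * N : ℤ) : ℝ) := by push_cast; linarith
      rw [mul_comm]; exact_mod_cast this
    have hwN : (e k (1 / (N:ℝ))) ^ N = 1 := by
      rw [e, ← Complex.exp_nat_mul, Complex.exp_eq_one_iff]
      exact ⟨k, by push_cast; field_simp⟩
    rw [geom_sum_eq hw, hwN]; simp

lemma dS_eq (ε : ℝ) (N : ℕ) [NeZero N] (n : ℤ) :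
    dS ε N n = if (N:ℤ) ∣ n then e (-n / N) ε else 0 := by
  rw [dS, if_neg (NeZero.ne N), char_sum]; simp

lemma ell_eps {ε : ℝ} (hε : ε = 1 / 6 ∨ ε = -(1 / 6)) : ell ε = 0 := by
  have h : ell (1/6) = 0 := by
    unfold ell
    rw [show π * (1/6) = π / 6 by ring, Real.sin_pi_div_six, ← Real.log_mul (by norm_num) (by norm_num)]
    norm_num
  rcases hε with rfl | rfl
  · exact h
  · rw [ell_neg, h]

lemma e_grid_ne_one {ε : ℝ} (hε : ε = 1 / 6 ∨ ε = -(1 / 6)) (N : ℕ) [NeZero N] (j : ℤ) :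
    e 1 ((j + ε) / N) ≠ 1 := by
  intro h
  obtain ⟨k, hk⟩ := (e_one_eq_one_iff _).1 h
  have hN : (N:ℝ) ≠ 0 := NeZero.ne _
  rw [div_eq_iff hN] at hk
  rcases hε with rfl | rfl
  · have : (6 * (k * N - j) : ℝ) = 1 := by linarith
    have h2 : 6 * (k * N - j) = 1 := by exact_mod_cast this
    omega
  · have : (6 * (k * N - j) : ℝ) = -1 := by linarith
    have h2 : 6 * (k * N - j) = -1 := by exact_mod_cast this
    omega

lemma e_eps_ne_one {ε : ℝ} (hε : ε = 1 / 6 ∨ ε = -(1 / 6)) : e 1 ε ≠ 1 := by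
  have := e_grid_ne_one hε 1 0
  simpa using this

/-- The grid average of `ell` is `ell(ε)/N`, which vanishes exactly because `ε = ±1/6`. -/
lemma sum_ell {ε : ℝ} (hε : ε = 1 / 6 ∨ ε = -(1 / 6)) (N : ℕ) [NeZero N] :
    ∑ j ∈ Finset.range N, ell ((j + ε) / N) = 0 := by
  have hN' : (N:ℂ) ≠ 0 := NeZero.ne _
  have hpr := Complex.isPrimitiveRoot_exp N (NeZero.ne N)
  have hα : (e 1 (ε / N)) ^ N = e 1 ε := by
    simp only [e, ← Complex.exp_nat_mul]; congr 1; push_cast; field_simp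
  have hp := X_pow_sub_C_eq_prod hpr (NeZero.pos N) hα
  have hp1 := congrArg (Polynomial.eval 1) hp
  rw [Polynomial.eval_prod] at hp1
  simp only [Polynomial.eval_sub, Polynomial.eval_pow, Polynomial.eval_X, Polynomial.eval_C,
    one_pow] at hp1
  have h1 : ∀ j ∈ Finset.range N, (1 - Complex.exp (2 * π * I / N) ^ j * e 1 (ε / N)) =
      1 - e 1 ((j + ε) / N) := fun j _ => by
    simp only [e, ← Complex.exp_nat_mul, ← Complex.exp_add]
    congr 2; push_cast; field_simp
  rw [Finset.prod_congr rfl h1] at hp1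
  have hne : ∀ j ∈ Finset.range N, ‖1 - e 1 (((j:ℕ) + ε) / N)‖ ≠ 0 := fun j _ => by
    rw [norm_ne_zero_iff, sub_ne_zero]
    have := e_grid_ne_one hε N (j:ℤ)
    push_cast at this
    exact this.symm
  have h2 : ∑ j ∈ Finset.range N, ell ((j + ε) / N) = ell ε := by
    rw [ell_eq ε (e_eps_ne_one hε), hp1, norm_prod, Real.log_prod hne, Finset.mul_sum]
    refine Finset.sum_congr rfl fun j _ => ell_eq _ ?_
    have := e_grid_ne_one hε N (j:ℤ)
    push_cast at this
    exact this
  rw [h2, ell_eps hε]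

lemma lS_zero {ε : ℝ} (hε : ε = 1 / 6 ∨ ε = -(1 / 6)) (N : ℕ) : lS ε N 0 = 0 := by
  rcases Nat.eq_zero_or_pos N with rfl | hN
  · simp [lS]
  · have : NeZero N := ⟨hN.ne'⟩
    rw [lS, if_neg hN.ne']
    have h := sum_ell hε N
    have h2 : ∑ j ∈ Finset.range N, (ell ((j + ε) / N) : ℂ) * e (-0) ((j + ε) / N) = 0 := by
      simp only [neg_zero, e_zero, mul_one]
      exact_mod_cast h
    rw [h2, mul_zero]

/-- Aliasing formula for the differences of the discrete symbol. -/
lemma hasSum_lS_diff {ε : ℝ} (hε : ε = 1 / 6 ∨ ε = -(1 / 6)) (N : ℕ) [NeZero N] (n : ℤ) :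
    HasSum (fun a : ℤ => (cc (n + a * N) : ℂ) * e a ε) (lS ε N n - lS ε N (n - 1)) := by
  have hNZ : (N:ℤ) ≠ 0 := NeZero.ne _
  have h1 : ∀ j ∈ Finset.range N, HasSum (fun k : ℤ => (cc k : ℂ) * e (k - n) ((j + ε) / N))
      ((ell ((j + ε) / N) : ℂ) * e (-n) ((j + ε) / N) -
        (ell ((j + ε) / N) : ℂ) * e (-(n-1)) ((j + ε) / N)) := fun j _ => by
    have h := e_grid_ne_one hε N (j:ℤ)
    push_cast at h
    have h2 := (hasSum_ell _ h).mul_right (e (-n) ((j + ε) / N))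
    have hv : (ell ((j + ε) / N) : ℂ) * e (-n) ((j + ε) / N) -
        (ell ((j + ε) / N) : ℂ) * e (-(n-1)) ((j + ε) / N) =
        (1 - e 1 (((j:ℕ) + ε) / N)) * (ell ((j + ε) / N) : ℂ) * e (-n) ((j + ε) / N) := by
      rw [show -(n-1) = 1 + -n by ring, e_add]; ring
    rw [hv]
    exact hasSum_of_eq h2 fun k => by rw [e_sub]; ring
  have h2 := (hasSum_sum h1).mul_left (1 / (N:ℂ))
  have hv : lS ε N n - lS ε N (n - 1) = (1 / (N:ℂ)) * ∑ j ∈ Finset.range N,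
      ((ell ((j + ε) / N) : ℂ) * e (-n) ((j + ε) / N) -
        (ell ((j + ε) / N) : ℂ) * e (-(n-1)) ((j + ε) / N)) := by
    rw [lS, lS, if_neg (NeZero.ne N), if_neg (NeZero.ne N), Finset.sum_sub_distrib, mul_sub]
  rw [hv]
  have h3 : HasSum (fun k : ℤ => (cc k : ℂ) * if (N:ℤ) ∣ (k - n) then e ((k - n) / N) ε else 0)
      ((1 / (N:ℂ)) * ∑ j ∈ Finset.range N,
      ((ell ((j + ε) / N) : ℂ) * e (-n) ((j + ε) / N) -
        (ell ((j + ε) / N) : ℂ) * e (-(n-1)) ((j + ε) / N))) :=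
    hasSum_of_eq h2 fun k => by rw [← char_sum, ← Finset.mul_sum]; ring
  have hinj : Function.Injective (fun a : ℤ => n + a * N) := fun a b h => by
    have : a * (N:ℤ) = b * N := by simpa using h
    exact mul_right_cancel₀ hNZ this
  rw [← hinj.hasSum_iff] at h3
  · refine hasSum_of_eq h3 fun a => ?_
    simp [Int.mul_ediv_cancel _ hNZ]
  · intro k hk
    rw [if_neg, mul_zero]
    rintro ⟨a, ha⟩
    exact hk ⟨a, by simp only; rw [mul_comm]; omega⟩

/-- Aliasing formula for the discrete symbol; with `0⁻¹ = 0` it holds for every `n`. -/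
lemma hasSum_lS {ε : ℝ} (hε : ε = 1 / 6 ∨ ε = -(1 / 6)) (N : ℕ) [NeZero N] (n : ℤ) :
    HasSum (fun a : ℤ => e a ε * ((|(a:ℝ) * N|⁻¹ - |(n:ℝ) + a * N|⁻¹ : ℝ) : ℂ)) (lS ε N n) := by
  induction n using Int.induction_on with
  | zero => simp [lS_zero hε]
  | succ k ih =>
    have h := hasSum_lS_diff hε N (k + 1)
    rw [show (k:ℤ) + 1 - 1 = k by ring] at h
    have h2 := ih.add h
    rw [add_sub_cancel] at h2
    refine hasSum_of_eq h2 fun a => ?_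
    simp only [cc]
    rw [show (((k:ℤ) + 1 + a * N : ℤ) : ℝ) = (k:ℝ) + 1 + a * N by push_cast; ring,
      show (k:ℝ) + 1 + a * N - 1 = k + a * N by ring]
    push_cast; ring
  | pred k ih =>
    have h := hasSum_lS_diff hε N (-k)
    have h2 := ih.sub h
    rw [sub_sub_cancel] at h2
    refine hasSum_of_eq h2 fun a => ?_
    simp only [cc]
    rw [show ((-(k:ℤ) + a * N : ℤ) : ℝ) = -(k:ℝ) + a * N by push_cast; ring,
      show -(k:ℝ) + a * N - 1 = -k - 1 + a * N by ring]
    push_cast; ring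

end NysLog

end

noncomputable section

namespace NysLog

open Complex (I)
open scoped Real

/-! ### Estimates for the discrete symbols -/

lemma hasSum_inv_sq_int : HasSum (fun a : ℤ => 1 / (a:ℝ) ^ 2) (π ^ 2 / 3) := by
  have h1 : HasSum (fun n : ℕ => 1 / (((n:ℤ)):ℝ) ^ 2) (π ^ 2 / 6) := by simpa using hasSum_zeta_two
  have h2 : HasSum (fun n : ℕ => 1 / ((-(n:ℤ) : ℤ):ℝ) ^ 2) (π ^ 2 / 6) := by
    simpa using hasSum_zeta_two
  have h := HasSum.of_nat_of_neg (f := fun a : ℤ => 1 / (a:ℝ) ^ 2) h1 h2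
  have hv : π ^ 2 / 3 = π ^ 2 / 6 + π ^ 2 / 6 - 1 / (((0:ℤ)):ℝ) ^ 2 := by simp; ring
  rw [hv]; exact h

lemma pi_sq_lt : π ^ 2 < 10 := by
  nlinarith [Real.pi_lt_d2, Real.pi_pos]

lemma tail_bound {u : ℤ → ℂ} {L : ℂ} (hu : HasSum u L) {B : ℝ}
    (hb : ∀ a : ℤ, a ≠ 0 → ‖u a‖ ≤ B * (1 / (a:ℝ) ^ 2)) : ‖L - u 0‖ ≤ B * (π ^ 2 / 3) := by
  have h1 := hasSum_ite_sub_hasSum hu 0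
  rw [← h1.tsum_eq]
  refine tsum_of_norm_bounded (hasSum_inv_sq_int.mul_left B) fun a => ?_
  split_ifs with h
  · simp [h]
  · exact hb a h

lemma nonneg_of_two_mul_abs_le {N : ℕ} [NeZero N] (n a : ℤ) (hn : 2 * |(n:ℝ)| ≤ N) (ha : a ≠ 0) :
    0 < |(a:ℝ) * N| ∧ 2 * |(n:ℝ)| ≤ |(a:ℝ) * N| ∧ |(a:ℝ) * N| / 2 ≤ |(n:ℝ) + a * N| ∧
      (N:ℝ) ≤ |(a:ℝ) * N| := by
  have hN : (0:ℝ) < N := by exact_mod_cast NeZero.pos N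
  have ha1 : (1:ℝ) ≤ |(a:ℝ)| := by exact_mod_cast Int.one_le_abs ha
  have h1 : |(a:ℝ) * N| = |(a:ℝ)| * N := by rw [abs_mul, abs_of_pos hN]
  have h2 : (N:ℝ) ≤ |(a:ℝ) * N| := by rw [h1]; nlinarith
  have h3 : |(a:ℝ) * N| - |(n:ℝ)| ≤ |(n:ℝ) + a * N| := by
    have := abs_sub_abs_le_abs_sub ((a:ℝ) * N) (-(n:ℝ))
    rw [abs_neg, sub_neg_eq_add, add_comm ((a:ℝ) * N)] at this
    exact this
  exact ⟨by linarith, by linarith, by linarith, h2⟩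

lemma lS_zero_left (ε : ℝ) (n : ℤ) : lS ε 0 n = -((|(n:ℝ)|⁻¹ : ℝ) : ℂ) := by simp [lS]

/-- Second-order consistency of the discrete symbol. -/
lemma lS_conv {ε : ℝ} (hε : ε = 1 / 6 ∨ ε = -(1 / 6)) (N : ℕ) [NeZero N] (n : ℤ)
    (hn : 2 * |(n:ℝ)| ≤ N) : ‖lS ε N n - lS ε 0 n‖ ≤ 8 * |(n:ℝ)| / (N:ℝ) ^ 2 := by
  have hN : (0:ℝ) < N := by exact_mod_cast NeZero.pos N
  have h := tail_bound (hasSum_lS hε N n) (B := 2 * |(n:ℝ)| / (N:ℝ) ^ 2) ?_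
  · rw [lS_zero_left]
    have hv : e 0 ε * ((|((0:ℤ):ℝ) * N|⁻¹ - |(n:ℝ) + (0:ℤ) * N|⁻¹ : ℝ) : ℂ) =
        -((|(n:ℝ)|⁻¹ : ℝ) : ℂ) := by simp
    rw [hv] at h
    refine h.trans ?_
    have := pi_sq_lt
    have h0 : 0 ≤ 2 * |(n:ℝ)| / (N:ℝ) ^ 2 := by positivity
    calc 2 * |(n:ℝ)| / (N:ℝ) ^ 2 * (π ^ 2 / 3) ≤ 2 * |(n:ℝ)| / (N:ℝ) ^ 2 * 4 := by
          gcongr; linarith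
      _ = _ := by ring
  · intro a ha
    obtain ⟨h1, h2, h3, h4⟩ := nonneg_of_two_mul_abs_le n a hn ha
    rw [norm_mul, norm_e, one_mul, Complex.norm_real, Real.norm_eq_abs]
    have hp : 0 < |(n:ℝ) + a * N| := by linarith
    rw [inv_sub_inv h1.ne' hp.ne', abs_div,
      abs_of_pos (mul_pos h1 hp)]
    have hnum : |(|(n:ℝ) + a * N| - |(a:ℝ) * N|)| ≤ |(n:ℝ)| := by
      refine (abs_abs_sub_abs_le_abs_sub _ _).trans (by simp)
    have ha2 : (a:ℝ) ^ 2 * (N:ℝ) ^ 2 = |(a:ℝ) * N| ^ 2 := by rw [sq_abs]; ring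
    have ha0 : (0:ℝ) < (a:ℝ) ^ 2 := by positivity
    calc _ ≤ |(n:ℝ)| / (|(a:ℝ) * N| * (|(a:ℝ) * N| / 2)) := by gcongr
      _ = 2 * |(n:ℝ)| / ((a:ℝ) ^ 2 * (N:ℝ) ^ 2) := by rw [ha2]; field_simp
      _ = _ := by field_simp

lemma inv_symm_bound (n A : ℝ) (hA : A ≠ 0) (hn : 2 * |n| ≤ |A|) :
    |(|A|⁻¹ - |n + A|⁻¹ + (|-A|⁻¹ - |n + -A|⁻¹))| ≤ (8 / 3) * n ^ 2 / |A| ^ 3 := by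
  wlog h : 0 < A generalizing A
  · have := this (-A) (by simpa using hA) (by simpa using hn)
      (by rcases lt_or_gt_of_ne hA with h' | h'; linarith; exact absurd h' h)
    rw [neg_neg, abs_neg] at this
    rwa [add_comm, abs_neg]
  rw [abs_of_pos h] at hn ⊢
  have h1 := neg_abs_le n
  have h2 := le_abs_self n
  have e1 : |n + A| = A + n := by rw [abs_of_pos]; ring; linarith
  have e2 : |n + -A| = A - n := by rw [abs_of_neg]; ring; linarith
  have p1 : 0 < A + n := by linarith
  have p2 : 0 < A - n := by linarith
  rw [e1, e2, abs_neg, abs_of_pos h]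
  have h3 : A⁻¹ - (A + n)⁻¹ + (A⁻¹ - (A - n)⁻¹) = -(2 * n ^ 2 / (A * ((A + n) * (A - n)))) := by
    field_simp; ring
  rw [h3, abs_neg, abs_of_nonneg (by positivity), div_le_div_iff₀ (by positivity) (by positivity)]
  have h4 : 3 * A ^ 2 ≤ 4 * ((A + n) * (A - n)) := by nlinarith [sq_abs n, abs_nonneg n]
  have h5 : 0 ≤ n ^ 2 * A := by positivity
  nlinarith

/-- Ellipticity of the discrete logarithmic symbol. The first-order aliasing terms cancel in
`l + l̄`, and what remains is at most `π²/9` times the principal term. -/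
lemma lS_lower {ε : ℝ} (hε : ε = 1 / 6 ∨ ε = -(1 / 6)) (N : ℕ) [NeZero N] (n : ℤ)
    (hn : 2 * |(n:ℝ)| ≤ N) (hn0 : n ≠ 0) : (2 / 5) / |(n:ℝ)| ≤ ‖lS ε N n‖ := by
  have hN : (0:ℝ) < N := by exact_mod_cast NeZero.pos N
  have hnp : 0 < |(n:ℝ)| := by positivity
  have h1 := hasSum_lS hε N n
  have h2 : HasSum (fun a : ℤ => e (-a) ε * ((|(a:ℝ) * N|⁻¹ - |(n:ℝ) + a * N|⁻¹ : ℝ) : ℂ))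
      ((starRingEnd ℂ) (lS ε N n)) := by
    have := h1.star
    refine hasSum_of_eq this fun a => ?_
    rw [← starRingEnd_apply, map_mul, e_conj, Complex.conj_ofReal]
  have h3 := ((Equiv.neg ℤ).hasSum_iff).2 h2
  have h4 := h1.add h3
  have h5 := tail_bound h4 (B := (1 / 3) / |(n:ℝ)|) ?_
  · have hv : e 0 ε * ((|((0:ℤ):ℝ) * N|⁻¹ - |(n:ℝ) + (0:ℤ) * N|⁻¹ : ℝ) : ℂ) +
      ((fun a : ℤ => e (-a) ε * ((|(a:ℝ) * N|⁻¹ - |(n:ℝ) + a * N|⁻¹ : ℝ) : ℂ)) ∘ (Equiv.neg ℤ)) 0 =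
        -((2 / |(n:ℝ)| : ℝ) : ℂ) := by simp; ring
    rw [hv, sub_neg_eq_add] at h5
    have h6 := norm_add_le (lS ε N n) ((starRingEnd ℂ) (lS ε N n))
    have h7 : ‖((2 / |(n:ℝ)| : ℝ) : ℂ)‖ = 2 / |(n:ℝ)| := by
      rw [Complex.norm_real, Real.norm_of_nonneg (by positivity)]
    have h8 := norm_sub_le (lS ε N n + (starRingEnd ℂ) (lS ε N n) + ((2 / |(n:ℝ)| : ℝ) : ℂ))
      (lS ε N n + (starRingEnd ℂ) (lS ε N n))
    rw [add_sub_cancel_left, h7] at h8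
    rw [RCLike.norm_conj] at h6
    have h9 : (1 / 3) / |(n:ℝ)| * (π ^ 2 / 3) ≤ (6 / 5) / |(n:ℝ)| := by
      rw [div_mul_eq_mul_div]; gcongr; linarith [pi_sq_lt]
    have h10 : 2 / |(n:ℝ)| = (6 / 5) / |(n:ℝ)| + 2 * ((2 / 5) / |(n:ℝ)|) := by ring
    linarith
  · intro a ha
    obtain ⟨p1, p2, p3, p4⟩ := nonneg_of_two_mul_abs_le n a hn ha
    simp only [Function.comp_apply, Equiv.neg_apply, neg_neg]
    rw [← mul_add, norm_mul, norm_e, one_mul, ← Complex.ofReal_add, Complex.norm_real,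
      Real.norm_eq_abs]
    have hb := inv_symm_bound (n:ℝ) ((a:ℝ) * N) (by simpa using p1.ne') p2
    have : ((-a : ℤ) : ℝ) * N = -((a:ℝ) * N) := by push_cast; ring
    rw [this]
    refine hb.trans ?_
    have ha1 : (1:ℝ) ≤ |(a:ℝ)| := by exact_mod_cast Int.one_le_abs ha
    have hA : |(a:ℝ) * N| = |(a:ℝ)| * N := by rw [abs_mul, abs_of_pos hN]
    have hsq : (a:ℝ) ^ 2 = |(a:ℝ)| ^ 2 := (sq_abs _).symm
    have hsn : (n:ℝ) ^ 2 = |(n:ℝ)| ^ 2 := (sq_abs _).symm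
    rw [hA, hsq, hsn, div_mul_div_comm, mul_one, div_le_div_iff₀ (by positivity) (by positivity)]
    have hc : (2 * |(n:ℝ)|) ^ 3 ≤ (N:ℝ) ^ 3 := by gcongr
    calc 8 / 3 * |(n:ℝ)| ^ 2 * (|(n:ℝ)| * |(a:ℝ)| ^ 2) = 1 / 3 * (2 * |(n:ℝ)|) ^ 3 * |(a:ℝ)| ^ 2 := by ring
      _ ≤ 1 / 3 * (N:ℝ) ^ 3 * |(a:ℝ)| ^ 3 := by gcongr; norm_num
      _ = _ := by ring

lemma lS_add_mul (ε : ℝ) (N : ℕ) [NeZero N] (n a : ℤ) : lS ε N (n + a * N) = e (-a) ε * lS ε N n := by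
  rw [lS, lS, if_neg (NeZero.ne N), if_neg (NeZero.ne N), mul_left_comm]
  congr 1
  rw [Finset.mul_sum]
  refine Finset.sum_congr rfl fun j _ => ?_
  have hN : (N:ℝ) ≠ 0 := NeZero.ne _
  have h1 : e (-a * N) ((j + ε) / N) = e (-a) ε := by
    rw [e_mul_idx]
    have h1 : (((N:ℤ)):ℝ) * (((j:ℝ) + ε) / N) = ε + ((j:ℤ):ℝ) := by
      push_cast; field_simp; ring
    rw [h1, e_add_int]
  rw [show -(n + a * N) = -a * N + -n by ring, e_add, h1]; ring

lemma abs_gS_add_mul (N : ℕ) [NeZero N] (n a : ℤ) : |gS N (n + a * N)| = |gS N n| := by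
  have hN : (N:ℝ) ≠ 0 := NeZero.ne _
  rw [gS, gS, if_neg (NeZero.ne N), if_neg (NeZero.ne N)]
  have : π * ((n + a * N : ℤ) : ℝ) / N = π * n / N + a * π := by push_cast; field_simp
  rw [this, Real.sin_add_int_mul_pi, abs_mul, abs_mul, abs_mul, abs_zpow]; simp

lemma norm_lS_nu (ε : ℝ) (N : ℕ) (n : ℤ) : ‖lS ε N n‖ = ‖lS ε N (nu N n)‖ := by
  rcases Nat.eq_zero_or_pos N with rfl | hN
  · rfl
  · have : NeZero N := ⟨hN.ne'⟩
    obtain ⟨a, ha⟩ := nu_spec N n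
    conv_lhs => rw [ha, lS_add_mul, norm_mul, norm_e, one_mul]

lemma norm_lS_sub_nu (ε : ℝ) (N : ℕ) (n : ℤ) :
    ‖lS ε N n - lS ε N (n - 1)‖ = ‖lS ε N (nu N n) - lS ε N (nu N n - 1)‖ := by
  rcases Nat.eq_zero_or_pos N with rfl | hN
  · rfl
  · have : NeZero N := ⟨hN.ne'⟩
    obtain ⟨a, ha⟩ := nu_spec N n
    conv_lhs => rw [ha, show nu N n + a * N - 1 = nu N n - 1 + a * N by ring, lS_add_mul, lS_add_mul,
      ← mul_sub, norm_mul, norm_e, one_mul]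

lemma abs_gS_nu (N : ℕ) (n : ℤ) : |gS N n| = |gS N (nu N n)| := by
  rcases Nat.eq_zero_or_pos N with rfl | hN
  · rfl
  · have : NeZero N := ⟨hN.ne'⟩
    obtain ⟨a, ha⟩ := nu_spec N n
    conv_lhs => rw [ha, abs_gS_add_mul]

lemma norm_lS_le {ε : ℝ} (hε : ε = 1 / 6 ∨ ε = -(1 / 6)) (N : ℕ) (n : ℤ) :
    ‖lS ε N n‖ ≤ 8 / tw N n := by
  rw [norm_lS_nu, tw]
  set k := nu N n with hk
  rcases eq_or_ne k 0 with h0 | h0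
  · rw [h0, lS_zero hε]; simp
  have hkp : (1:ℝ) ≤ |(k:ℝ)| := by exact_mod_cast Int.one_le_abs h0
  have h0' : ‖lS ε 0 k‖ = 1 / |(k:ℝ)| := by
    rw [lS_zero_left, norm_neg, Complex.norm_real, Real.norm_of_nonneg (by positivity), one_div]
  suffices h : ‖lS ε N k‖ ≤ 3 / |(k:ℝ)| by
    refine h.trans ?_
    rw [div_le_div_iff₀ (by positivity) (by positivity)]; linarith
  rcases Nat.eq_zero_or_pos N with rfl | hN
  · rw [h0']; gcongr; norm_num
  · have : NeZero N := ⟨hN.ne'⟩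
    have hN : (0:ℝ) < N := by exact_mod_cast NeZero.pos N
    have hle := nu_le N n
    rw [← hk] at hle
    have h1 := lS_conv hε N k hle
    have h2 : 8 * |(k:ℝ)| / (N:ℝ) ^ 2 ≤ 2 / |(k:ℝ)| := by
      rw [div_le_div_iff₀ (by positivity) (by positivity)]
      nlinarith [abs_nonneg (k:ℝ)]
    have h3 := norm_le_norm_sub_add (lS ε N k) (lS ε 0 k)
    rw [h0'] at h3
    have : 3 / |(k:ℝ)| = 2 / |(k:ℝ)| + 1 / |(k:ℝ)| := by ring
    linarith

lemma norm_lS_sub_le {ε : ℝ} (hε : ε = 1 / 6 ∨ ε = -(1 / 6)) (N : ℕ) (n : ℤ) :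
    ‖lS ε N n - lS ε N (n - 1)‖ ≤ 300 / tw N n ^ 2 := by
  rw [norm_lS_sub_nu, tw]
  set k := nu N n with hk
  have hcc := abs_cc_le k
  rcases Nat.eq_zero_or_pos N with rfl | hN
  · have : lS ε 0 k - lS ε 0 (k - 1) = (cc k : ℂ) := by
      rw [lS_zero_left, lS_zero_left, cc]; push_cast; ring
    rw [this, Complex.norm_real, Real.norm_eq_abs]
    refine hcc.trans ?_
    gcongr; norm_num
  · have : NeZero N := ⟨hN.ne'⟩
    have hN : (1:ℝ) ≤ N := by exact_mod_cast NeZero.pos N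
    have hle := nu_le N n
    rw [← hk] at hle
    have h := tail_bound (hasSum_lS_diff hε N k) (B := 72 / (1 + |(k:ℝ)|) ^ 2) ?_
    · simp only [zero_mul, add_zero, e_zero, mul_one] at h
      have h2 := norm_le_norm_sub_add (lS ε N k - lS ε N (k - 1)) (cc k : ℂ)
      rw [Complex.norm_real, Real.norm_eq_abs] at h2
      have h3 : 72 / (1 + |(k:ℝ)|) ^ 2 * (π ^ 2 / 3) ≤ 72 / (1 + |(k:ℝ)|) ^ 2 * 4 := by
        gcongr; linarith [pi_sq_lt]
      have h4 : 300 / (1 + |(k:ℝ)|) ^ 2 = 72 / (1 + |(k:ℝ)|) ^ 2 * 4 + 8 / (1 + |(k:ℝ)|) ^ 2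
        + 4 / (1 + |(k:ℝ)|) ^ 2 := by ring
      have h5 : 0 ≤ 4 / (1 + |(k:ℝ)|) ^ 2 := by positivity
      linarith
    · intro a ha
      obtain ⟨p1, p2, p3, p4⟩ := nonneg_of_two_mul_abs_le k a hle ha
      rw [norm_mul, norm_e, mul_one, Complex.norm_real, Real.norm_eq_abs]
      refine (abs_cc_le _).trans ?_
      push_cast
      have ha1 : (1:ℝ) ≤ |(a:ℝ)| := by exact_mod_cast Int.one_le_abs ha
      have hA : |(a:ℝ) * N| = |(a:ℝ)| * N := by
        rw [abs_mul, Nat.abs_cast]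
      have q1 : (1 + |(k:ℝ)|) * |(a:ℝ)| / 3 ≤ 1 + |(k:ℝ) + a * N| := by
        have : (1 + |(k:ℝ)|) ≤ 3 / 2 * N := by linarith
        calc (1 + |(k:ℝ)|) * |(a:ℝ)| / 3 ≤ (3 / 2 * N) * |(a:ℝ)| / 3 := by gcongr
          _ = |(a:ℝ) * N| / 2 := by rw [hA]; ring
          _ ≤ _ := by linarith
      calc 8 / (1 + |(k:ℝ) + a * N|) ^ 2 ≤ 8 / ((1 + |(k:ℝ)|) * |(a:ℝ)| / 3) ^ 2 := by gcongr
        _ = 72 / (1 + |(k:ℝ)|) ^ 2 * (1 / (a:ℝ) ^ 2) := by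
          rw [← sq_abs (a:ℝ)]; field_simp; norm_num

end NysLog

end

noncomputable section

namespace NysLog

open Complex (I)
open scoped Real

lemma dS_zero_left (ε : ℝ) (n : ℤ) : dS ε 0 n = if n = 0 then 1 else 0 := by simp [dS]

lemma nu_eq_zero_iff (N : ℕ) (n : ℤ) : nu N n = 0 ↔ (N:ℤ) ∣ n := by
  rw [nu, ZMod.valMinAbs_eq_zero, ZMod.intCast_zmod_eq_zero_iff_dvd]

lemma norm_dS (ε : ℝ) (N : ℕ) (n : ℤ) : ‖dS ε N n‖ = if nu N n = 0 then 1 else 0 := by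
  rcases Nat.eq_zero_or_pos N with rfl | hN
  · rw [dS_zero_left, nu_zero_left]; split_ifs <;> simp
  · have : NeZero N := ⟨hN.ne'⟩
    rw [dS_eq]
    by_cases h : (N:ℤ) ∣ n
    · rw [if_pos h, if_pos ((nu_eq_zero_iff N n).2 h), norm_e]
    · rw [if_neg h, if_neg (fun h' => h ((nu_eq_zero_iff N n).1 h')), norm_zero]

lemma norm_dS_le (ε : ℝ) (N : ℕ) (n : ℤ) (p : ℕ) : ‖dS ε N n‖ ≤ 1 / tw N n ^ p := by
  rw [norm_dS]
  split_ifs with h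
  · simp [tw, h]
  · have := tw_pos N n; positivity

lemma dS_conv (ε : ℝ) (N : ℕ) [NeZero N] (n : ℤ) (hn : 2 * |(n:ℝ)| ≤ N) :
    dS ε N n = dS ε 0 n := by
  rw [dS_zero_left, dS_eq]
  by_cases h0 : n = 0
  · simp [h0]
  · rw [if_neg h0, if_neg]
    intro h
    have h1 := Int.le_of_dvd (abs_pos.2 h0) ((dvd_abs _ _).2 h)
    have h2 : 2 * |n| ≤ (N:ℤ) := by exact_mod_cast hn
    have h3 := abs_pos.2 h0
    omega

lemma gS_zero_left (n : ℤ) : gS 0 n = 2 * π * n := by simp [gS]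

lemma abs_gS_le (N : ℕ) (n : ℤ) : |gS N n| ≤ 7 * tw N n := by
  rw [abs_gS_nu, tw]
  set k := nu N n
  have hpi := Real.pi_lt_d2
  have h0 := abs_nonneg (k:ℝ)
  have hk : 2 * π * |(k:ℝ)| ≤ 7 * (1 + |(k:ℝ)|) := by nlinarith
  refine le_trans ?_ hk
  rcases Nat.eq_zero_or_pos N with rfl | hN
  · rw [gS_zero_left, abs_mul, abs_of_pos (by positivity)]
  · have : NeZero N := ⟨hN.ne'⟩
    have hN : (0:ℝ) < N := by exact_mod_cast NeZero.pos N
    rw [gS, if_neg (NeZero.ne N), abs_mul, abs_of_pos (by positivity)]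
    have := Real.abs_sin_le_abs (x := π * k / N)
    have h2 : |π * (k:ℝ) / N| = π * |(k:ℝ)| / N := by
      rw [abs_div, abs_mul, abs_of_pos Real.pi_pos, Nat.abs_cast]
    rw [h2] at this
    calc 2 * N * |Real.sin (π * k / N)| ≤ 2 * N * (π * |(k:ℝ)| / N) := by gcongr
      _ = _ := by field_simp

lemma le_abs_gS (N : ℕ) (n : ℤ) : 4 * |((nu N n : ℤ) : ℝ)| ≤ |gS N n| := by
  rw [abs_gS_nu]
  rcases Nat.eq_zero_or_pos N with rfl | hN
  · rw [gS_zero_left, abs_mul (2 * π), abs_of_pos (a := 2 * π) (by positivity)]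
    have := Real.pi_gt_three
    gcongr; linarith
  · have : NeZero N := ⟨hN.ne'⟩
    have hle := nu_le N n
    set k := nu N n
    have hN : (0:ℝ) < N := by exact_mod_cast NeZero.pos N
    have h2 : |π * (k:ℝ) / N| = π * |(k:ℝ)| / N := by
      rw [abs_div, abs_mul, abs_of_pos Real.pi_pos, Nat.abs_cast]
    have hx : |π * (k:ℝ) / N| ≤ π / 2 := by
      rw [h2, div_le_iff₀ hN]; nlinarith [Real.pi_pos]
    have h3 := Real.mul_abs_le_abs_sin hx
    rw [h2] at h3
    rw [gS, if_neg (NeZero.ne N), abs_mul (2 * (N:ℝ)), abs_of_pos (a := 2 * (N:ℝ)) (by positivity)]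
    calc 4 * |(k:ℝ)| = 2 * N * (2 / π * (π * |(k:ℝ)| / N)) := by field_simp; ring
      _ ≤ _ := by gcongr

lemma abs_sin_sub_le (x : ℝ) : |Real.sin x - x| ≤ 2 * |x| ^ 3 := by
  rcases le_or_gt |x| 1 with h | h
  · have h1 := Real.sin_bound h
    have h2 : Real.sin x - x = (Real.sin x - (x - x ^ 3 / 6)) - x ^ 3 / 6 := by ring
    rw [h2]
    refine (abs_sub _ _).trans ?_
    have h3 : |x ^ 3 / 6| = |x| ^ 3 / 6 := by rw [abs_div, abs_pow]; norm_num
    have h4 : |x| ^ 5 ≤ |x| ^ 3 := pow_le_pow_of_le_one (abs_nonneg _) h (by norm_num)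
    have h5 : 0 ≤ |x| ^ 3 := by positivity
    rw [h3]; linarith
  · have h1 := Real.abs_sin_le_abs (x := x)
    have h2 := abs_sub (Real.sin x) x
    have h3 : |x| ≤ |x| ^ 3 := le_self_pow₀ h.le (by norm_num)
    linarith

lemma gS_conv (N : ℕ) [NeZero N] (n : ℤ) : |gS N n - gS 0 n| ≤ 128 * |(n:ℝ)| ^ 3 / (N:ℝ) ^ 2 := by
  have hN : (0:ℝ) < N := by exact_mod_cast NeZero.pos N
  have h := abs_sin_sub_le (π * n / N)
  have h2 : |π * (n:ℝ) / N| = π * |(n:ℝ)| / N := by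
    rw [abs_div, abs_mul, abs_of_pos Real.pi_pos, Nat.abs_cast]
  have h3 : gS N n - gS 0 n = 2 * N * (Real.sin (π * n / N) - π * n / N) := by
    rw [gS_zero_left, gS, if_neg (NeZero.ne N)]; field_simp
  have hpi : π ^ 3 ≤ 32 := by
    have := Real.pi_lt_d2
    calc π ^ 3 ≤ 3.15 ^ 3 := by gcongr
      _ ≤ 32 := by norm_num
  rw [h3, abs_mul, abs_of_pos (by positivity)]
  rw [h2] at h
  calc 2 * N * |Real.sin (π * n / N) - π * n / N| ≤ 2 * N * (2 * (π * |(n:ℝ)| / N) ^ 3) := by gcongr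
    _ = 4 * (π ^ 3 * |(n:ℝ)| ^ 3) / (N:ℝ) ^ 2 := by field_simp; ring
    _ ≤ 4 * (32 * |(n:ℝ)| ^ 3) / (N:ℝ) ^ 2 := by gcongr
    _ = _ := by ring

lemma inv_tw_add_le (N : ℕ) (n k : ℤ) (p : ℕ) :
    1 / tw N (n + k) ^ p ≤ (1 + |(k:ℝ)|) ^ p / tw N n ^ p := by
  have h := tw_add_le N (n + k) (-k)
  rw [add_neg_cancel_right] at h
  push_cast at h
  rw [abs_neg] at h
  have h1 := tw_pos N n
  have h2 := tw_pos N (n+k)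
  rw [div_le_div_iff₀ (by positivity) (by positivity), one_mul, ← mul_pow, mul_comm]
  gcongr

lemma norm_lS_shift_nat {ε : ℝ} (hε : ε = 1 / 6 ∨ ε = -(1 / 6)) (N : ℕ) (m : ℤ) (k : ℕ) :
    ‖lS ε N (m + k) - lS ε N m‖ ≤ k * (300 * (1 + (k:ℝ)) ^ 2 / tw N m ^ 2) := by
  have htw := tw_pos N m
  induction k with
  | zero => simp
  | succ k ih =>
    have h1 := norm_lS_sub_le hε N (m + (k + 1))
    rw [show m + ((k:ℤ) + 1) - 1 = m + k by ring] at h1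
    have h2 := inv_tw_add_le N m (k + 1) 2
    have h3 : 300 / tw N (m + (k + 1)) ^ 2 ≤ 300 * (1 + (((k:ℕ):ℝ)+1)) ^ 2 / tw N m ^ 2 := by
      have : |(((k:ℤ)+1 : ℤ):ℝ)| = (k:ℝ) + 1 := by push_cast; exact abs_of_nonneg (by positivity)
      rw [this] at h2
      calc 300 / tw N (m + (k + 1)) ^ 2 = 300 * (1 / tw N (m + (k + 1)) ^ 2) := by ring
        _ ≤ 300 * ((1 + ((k:ℝ)+1)) ^ 2 / tw N m ^ 2) := by gcongr
        _ = _ := by ring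
    have h4 : (k:ℝ) * (300 * (1 + (k:ℝ)) ^ 2 / tw N m ^ 2) ≤
        k * (300 * (1 + ((k:ℝ)+1)) ^ 2 / tw N m ^ 2) := by gcongr; linarith
    have h5 := norm_sub_le_norm_sub_add_norm_sub (lS ε N (m + (k + 1))) (lS ε N (m + k)) (lS ε N m)
    push_cast
    linarith

lemma norm_lS_shift {ε : ℝ} (hε : ε = 1 / 6 ∨ ε = -(1 / 6)) (N : ℕ) (m q : ℤ) :
    ‖lS ε N (m - q) - lS ε N m‖ ≤ 300 * (1 + |(q:ℝ)|) ^ 5 / tw N m ^ 2 := by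
  have htw := tw_pos N m
  rcases le_or_gt q 0 with h | h
  · obtain ⟨k, rfl⟩ : ∃ k : ℕ, q = -(k:ℤ) := ⟨q.natAbs, by omega⟩
    have h1 := norm_lS_shift_nat hε N m k
    rw [sub_neg_eq_add]
    refine h1.trans ?_
    simp only [Int.cast_neg, Int.cast_natCast, abs_neg, Nat.abs_cast]
    have : (k:ℝ) * (1 + (k:ℝ)) ^ 2 ≤ (1 + (k:ℝ)) ^ 5 := by
      calc (k:ℝ) * (1 + (k:ℝ)) ^ 2 ≤ (1 + (k:ℝ)) * (1 + (k:ℝ)) ^ 2 := by gcongr; linarith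
        _ = (1 + (k:ℝ)) ^ 3 := by ring
        _ ≤ (1 + (k:ℝ)) ^ 5 := by
          apply pow_le_pow_right₀ _ (by norm_num)
          have : (0:ℝ) ≤ k := Nat.cast_nonneg _
          linarith
    calc (k:ℝ) * (300 * (1 + (k:ℝ)) ^ 2 / tw N m ^ 2) = 300 * ((k:ℝ) * (1 + (k:ℝ)) ^ 2) / tw N m ^ 2 := by ring
      _ ≤ _ := by gcongr
  · obtain ⟨k, rfl⟩ : ∃ k : ℕ, q = (k:ℤ) := ⟨q.natAbs, by omega⟩
    have h1 := norm_lS_shift_nat hε N (m - k) k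
    rw [sub_add_cancel, norm_sub_rev] at h1
    have htw' := tw_pos N (m - k)
    refine h1.trans ?_
    have h2 := inv_tw_add_le N m (-k) 2
    simp only [Int.cast_neg, Int.cast_natCast, abs_neg, Nat.abs_cast] at h2 ⊢
    rw [← sub_eq_add_neg] at h2
    calc (k:ℝ) * (300 * (1 + (k:ℝ)) ^ 2 / tw N (m - k) ^ 2)
        = (k:ℝ) * (300 * (1 + (k:ℝ)) ^ 2) * (1 / tw N (m - k) ^ 2) := by ring
      _ ≤ (1 + (k:ℝ)) * (300 * (1 + (k:ℝ)) ^ 2) * ((1 + (k:ℝ)) ^ 2 / tw N m ^ 2) := by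
          gcongr; linarith
      _ = _ := by ring

end NysLog

end

noncomputable section

namespace NysLog

open Complex (I)
open scoped Real

/-! ### The symbols of the Nyström operators -/

/-- The weight `1 + |n|`. -/
def jb (n : ℤ) : ℝ := 1 + |(n:ℝ)|

lemma one_le_jb (n : ℤ) : 1 ≤ jb n := by unfold jb; linarith [abs_nonneg (n:ℝ)]

lemma jb_pos (n : ℤ) : 0 < jb n := by linarith [one_le_jb n]

lemma jb_neg (n : ℤ) : jb (-n) = jb n := by simp [jb]

lemma abs_le_jb (n : ℤ) : |(n:ℝ)| ≤ jb n := by unfold jb; linarith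

lemma jb_add_le (m n : ℤ) : jb (m + n) ≤ jb m * jb n := by
  unfold jb; push_cast
  nlinarith [abs_add_le (m:ℝ) n, abs_nonneg (m:ℝ), abs_nonneg (n:ℝ)]

lemma jb_sub_le (m n : ℤ) : jb (m - n) ≤ jb m * jb n := by
  rw [sub_eq_add_neg, ← jb_neg n]; exact jb_add_le m (-n)

lemma tw_le_jb (N : ℕ) (n : ℤ) : tw N n ≤ jb n := tw_le N n

lemma tw_of_lt (N : ℕ) (n : ℤ) (h : 2 * |(n:ℝ)| < N) : tw N n = jb n := by
  rw [tw, nu_of_le N n h, jb]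

lemma tw_zero_left (n : ℤ) : tw 0 n = jb n := rfl

/-- The constant `i/(2π)` in front of the logarithm. -/
def ci : ℂ := I / (2 * π)

lemma norm_ci : ‖ci‖ = 1 / (2 * π) := by
  simp [ci, abs_of_pos Real.pi_pos]

lemma norm_ci_le : ‖ci‖ ≤ 1 := by
  rw [norm_ci, div_le_one (by positivity)]; linarith [Real.pi_gt_three]

/-- Principal symbol: the multiplier of `−D V D + ∫` with `V = α (i/2π) ell(s−t)`. -/
def pS (α : ℂ) (ε : ℝ) (N : ℕ) (n : ℤ) : ℂ :=
  α * ci * (gS N n : ℂ) ^ 2 * lS ε N n + dS ε N n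

lemma norm_pS_le (α : ℂ) {ε : ℝ} (hε : ε = 1 / 6 ∨ ε = -(1 / 6)) (N : ℕ) (n : ℤ) :
    ‖pS α ε N n‖ ≤ (392 * ‖α‖ + 1) * tw N n := by
  have ht := one_le_tw N n
  have h1 := abs_gS_le N n
  have h2 := norm_lS_le hε N n
  have h3 := norm_dS_le ε N n 0
  have h4 := norm_ci_le
  rw [pow_zero, div_one] at h3
  calc ‖pS α ε N n‖ ≤ ‖α‖ * ‖ci‖ * |gS N n| ^ 2 * ‖lS ε N n‖ + ‖dS ε N n‖ := by
        refine (norm_add_le _ _).trans (le_of_eq ?_)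
        rw [norm_mul, norm_mul, norm_mul, norm_pow, Complex.norm_real, Real.norm_eq_abs]
    _ ≤ ‖α‖ * 1 * (7 * tw N n) ^ 2 * (8 / tw N n) + 1 := by gcongr
    _ = 392 * ‖α‖ * tw N n + 1 := by field_simp; ring
    _ ≤ (392 * ‖α‖ + 1) * tw N n := by linarith

lemma le_norm_pS (α : ℂ) {ε : ℝ} (hε : ε = 1 / 6 ∨ ε = -(1 / 6)) (N : ℕ) (n : ℤ) :
    min 1 (‖α‖ / 2) * tw N n ≤ ‖pS α ε N n‖ := by
  by_cases h0 : nu N n = 0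
  · have h1 : |gS N n| ≤ 0 := by
      rw [abs_gS_nu, h0]; simp [gS]
    have h2 : gS N n = 0 := abs_nonpos_iff.1 h1
    have h3 : tw N n = 1 := by simp [tw, h0]
    have h4 := norm_dS ε N n
    rw [if_pos h0] at h4
    rw [pS, h2, h3]
    simp [h4]
  · have h4 := norm_dS ε N n
    rw [if_neg h0, norm_eq_zero] at h4
    have hk : (1:ℝ) ≤ |((nu N n : ℤ):ℝ)| := by exact_mod_cast Int.one_le_abs h0
    have h1 := le_abs_gS N n
    have h2 : (2 / 5) / |((nu N n : ℤ):ℝ)| ≤ ‖lS ε N n‖ := by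
      rw [norm_lS_nu]
      rcases Nat.eq_zero_or_pos N with rfl | hN
      · rw [lS_zero_left, norm_neg, Complex.norm_real, Real.norm_of_nonneg (by positivity),
          div_eq_mul_inv]
        exact mul_le_of_le_one_left (by positivity) (by norm_num)
      · have : NeZero N := ⟨hN.ne'⟩
        exact lS_lower hε N _ (nu_le N n) h0
    rw [pS, h4, add_zero, norm_mul, norm_mul, norm_mul, norm_pow, Complex.norm_real,
      Real.norm_eq_abs, norm_ci, tw]
    have hpi := Real.pi_lt_d2
    have hpi0 := Real.pi_pos
    calc min 1 (‖α‖ / 2) * (1 + |((nu N n : ℤ):ℝ)|) ≤ ‖α‖ / 2 * (2 * |((nu N n : ℤ):ℝ)|) := by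
          gcongr
          · exact min_le_right _ _
          · linarith
      _ = ‖α‖ * |((nu N n : ℤ):ℝ)| := by ring
      _ ≤ (32 / 5 / (2 * π)) * (‖α‖ * |((nu N n : ℤ):ℝ)|) := by
          refine le_mul_of_one_le_left (by positivity) ?_
          rw [one_le_div (by positivity)]; linarith
      _ = ‖α‖ * (1 / (2 * π)) * (4 * |((nu N n : ℤ):ℝ)|) ^ 2 * ((2 / 5) / |((nu N n : ℤ):ℝ)|) := by
          field_simp; ring
      _ ≤ _ := by gcongr

lemma pS_ne_zero {α : ℂ} (hα : α ≠ 0) {ε : ℝ} (hε : ε = 1 / 6 ∨ ε = -(1 / 6)) (N : ℕ) (n : ℤ) :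
    pS α ε N n ≠ 0 := by
  have h := le_norm_pS α hε N n
  have h1 := tw_pos N n
  have h2 : 0 < min 1 (‖α‖ / 2) := by positivity
  exact norm_pos_iff.1 (lt_of_lt_of_le (by positivity) h)

lemma gS_conv' (N : ℕ) [NeZero N] (n : ℤ) : |gS N n - gS 0 n| ≤ 128 * jb n ^ 3 / (N:ℝ) ^ 2 := by
  refine (gS_conv N n).trans ?_
  have := abs_le_jb n
  gcongr

lemma abs_gS_le' (N : ℕ) (n : ℤ) : |gS N n| ≤ 7 * jb n :=
  (abs_gS_le N n).trans (by have := tw_le_jb N n; gcongr)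

lemma lS_conv' {ε : ℝ} (hε : ε = 1 / 6 ∨ ε = -(1 / 6)) (N : ℕ) [NeZero N] (n : ℤ)
    (hn : 2 * |(n:ℝ)| ≤ N) : ‖lS ε N n - lS ε 0 n‖ ≤ 8 * jb n / (N:ℝ) ^ 2 := by
  refine (lS_conv hε N n hn).trans ?_
  have := abs_le_jb n
  gcongr

lemma one_le_of_le (N : ℕ) [NeZero N] (x : ℝ) (hx : (N:ℝ) ≤ 2 * x) : 1 ≤ 4 * x ^ 2 / (N:ℝ) ^ 2 := by
  have hN : (0:ℝ) < N := by exact_mod_cast NeZero.pos N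
  rw [one_le_div (by positivity)]
  nlinarith

lemma pS_conv (α : ℂ) {ε : ℝ} (hε : ε = 1 / 6 ∨ ε = -(1 / 6)) (N : ℕ) [NeZero N] (n : ℤ) :
    ‖pS α ε N n - pS α ε 0 n‖ ≤ (20000 * (‖α‖ + 1)) * jb n ^ 3 / (N:ℝ) ^ 2 := by
  have hN : (0:ℝ) < N := by exact_mod_cast NeZero.pos N
  have hj := one_le_jb n
  have hj0 := jb_pos n
  rcases lt_or_ge (2 * |(n:ℝ)|) N with h | h
  · have h1 := gS_conv' N n
    have h2 := lS_conv' hε N n h.le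
    have h3 := norm_lS_le hε N n
    rw [tw_of_lt N n h] at h3
    have h4 := abs_gS_le' N n
    have h5 := abs_gS_le' 0 n
    have hc := norm_ci_le
    have hid : pS α ε N n - pS α ε 0 n = α * ci * (((gS N n - gS 0 n : ℝ) : ℂ) *
        ((gS N n + gS 0 n : ℝ) : ℂ) * lS ε N n + ((gS 0 n : ℝ) : ℂ) ^ 2 * (lS ε N n - lS ε 0 n)) := by
      rw [pS, pS, dS_conv ε N n h.le]; push_cast; ring
    have hadd : |gS N n + gS 0 n| ≤ 14 * jb n := (abs_add_le _ _).trans (by linarith)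
    calc ‖pS α ε N n - pS α ε 0 n‖ ≤ ‖α‖ * ‖ci‖ * (|gS N n - gS 0 n| * |gS N n + gS 0 n| *
          ‖lS ε N n‖ + |gS 0 n| ^ 2 * ‖lS ε N n - lS ε 0 n‖) := by
          rw [hid, norm_mul, norm_mul]
          gcongr
          refine (norm_add_le _ _).trans (le_of_eq ?_)
          rw [norm_mul, norm_mul, norm_mul, norm_pow]; simp only [Complex.norm_real, Real.norm_eq_abs]
      _ ≤ ‖α‖ * 1 * (128 * jb n ^ 3 / (N:ℝ) ^ 2 * (14 * jb n) * (8 / jb n) +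
          (7 * jb n) ^ 2 * (8 * jb n / (N:ℝ) ^ 2)) := by gcongr
      _ = (14728 * ‖α‖) * jb n ^ 3 / (N:ℝ) ^ 2 := by field_simp; ring
      _ ≤ _ := by gcongr ?_ * _ / _; linarith [norm_nonneg α]
  · have h1 := norm_pS_le α hε N n
    have h2 := norm_pS_le α hε 0 n
    have h3 := tw_le_jb N n
    rw [tw_zero_left] at h2
    have h4 := one_le_of_le N (jb n) (by linarith [abs_le_jb n])
    calc ‖pS α ε N n - pS α ε 0 n‖ ≤ (392 * ‖α‖ + 1) * jb n + (392 * ‖α‖ + 1) * jb n := by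
          refine (norm_sub_le _ _).trans (add_le_add (h1.trans ?_) h2)
          gcongr
      _ = ((392 * ‖α‖ + 1) * jb n + (392 * ‖α‖ + 1) * jb n) * 1 := by ring
      _ ≤ ((392 * ‖α‖ + 1) * jb n + (392 * ‖α‖ + 1) * jb n) * (4 * jb n ^ 2 / (N:ℝ) ^ 2) := by gcongr
      _ = (8 * (392 * ‖α‖ + 1)) * jb n ^ 3 / (N:ℝ) ^ 2 := by ring
      _ ≤ _ := by gcongr ?_ * _ / _; linarith [norm_nonneg α]

/-- The coefficient families of the two kernels: `a` multiplies the logarithm,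
`b` is the smooth part. The index is (frequency in `s`, frequency in `s − t`). -/
structure Coef where
  a1 : ℤ × ℤ → ℂ
  b1 : ℤ × ℤ → ℂ
  a2 : ℤ × ℤ → ℂ
  b2 : ℤ × ℤ → ℂ

/-- Sum of the absolute values of the coefficients with a given index. -/
def Coef.nrm (c : Coef) (i : ℤ × ℤ) : ℝ := ‖c.a1 i‖ + ‖c.b1 i‖ + ‖c.a2 i‖ + ‖c.b2 i‖

lemma Coef.nrm_nonneg (c : Coef) (i : ℤ × ℤ) : 0 ≤ c.nrm i := by unfold nrm; positivity

/-- The weight `(1+|d|)(1+|q|)` of an index `(d,q)`. -/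
def jw (i : ℤ × ℤ) : ℝ := jb i.1 * jb i.2

lemma one_le_jw (i : ℤ × ℤ) : 1 ≤ jw i := one_le_mul_of_one_le_of_one_le (one_le_jb _) (one_le_jb _)

lemma jb_fst_le (i : ℤ × ℤ) : jb i.1 ≤ jw i := le_mul_of_one_le_right (jb_pos _).le (one_le_jb _)

lemma jb_snd_le (i : ℤ × ℤ) : jb i.2 ≤ jw i := le_mul_of_one_le_left (jb_pos _).le (one_le_jb _)

/-- Perturbation symbol: the coefficient of `e_{m+d}` contributed by the index `(d,q)`
in the image of `e_m`. -/
def kS (c : Coef) (ε : ℝ) (N : ℕ) (i : ℤ × ℤ) (m : ℤ) : ℂ :=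
  (gS N m : ℂ) * (gS N (m + i.1) : ℂ) *
      (c.a1 i * (lS ε N (m - i.2) - lS ε N m) + c.b1 i * dS ε N (m - i.2))
    + (c.a2 i * lS ε N (m - i.2) + c.b2 i * dS ε N (m - i.2))

lemma norm_dS_shift (ε : ℝ) (N : ℕ) (m q : ℤ) : ‖dS ε N (m - q)‖ ≤ jb q ^ 2 / tw N m ^ 2 := by
  refine (norm_dS_le ε N (m - q) 2).trans ?_
  have := inv_tw_add_le N m (-q) 2
  rw [sub_eq_add_neg]
  simpa [jb] using this

lemma norm_lS_le8 {ε : ℝ} (hε : ε = 1 / 6 ∨ ε = -(1 / 6)) (N : ℕ) (n : ℤ) : ‖lS ε N n‖ ≤ 8 := by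
  refine (norm_lS_le hε N n).trans ?_
  have := one_le_tw N n
  exact div_le_self (by norm_num) this

lemma norm_dS_le1 (ε : ℝ) (N : ℕ) (n : ℤ) : ‖dS ε N n‖ ≤ 1 := by
  simpa using norm_dS_le ε N n 0

lemma norm_kS_le (c : Coef) {ε : ℝ} (hε : ε = 1 / 6 ∨ ε = -(1 / 6)) (N : ℕ) (i : ℤ × ℤ) (m : ℤ) :
    ‖kS c ε N i m‖ ≤ 14700 * (c.nrm i * jw i ^ 6) := by
  have htw := tw_pos N m
  have h1 := abs_gS_le N m
  have h2 : |gS N (m + i.1)| ≤ 7 * (tw N m * jw i) := by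
    refine (abs_gS_le N (m + i.1)).trans ?_
    have h := tw_add_le N m i.1
    have h' := jb_fst_le i
    gcongr
    exact h.trans (mul_le_mul_of_nonneg_left h' htw.le)
  have hq := jb_snd_le i
  have hq0 := jb_pos i.2
  have hw1 := one_le_jw i
  have hw0 : 0 < jw i := by linarith
  have h3 : ‖lS ε N (m - i.2) - lS ε N m‖ ≤ 300 * jw i ^ 5 / tw N m ^ 2 :=
    (norm_lS_shift hε N m i.2).trans (by change 300 * jb i.2 ^ 5 / _ ≤ _; gcongr)
  have h4 : ‖dS ε N (m - i.2)‖ ≤ 300 * jw i ^ 5 / tw N m ^ 2 := by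
    refine (norm_dS_shift ε N m i.2).trans ?_
    gcongr
    calc jb i.2 ^ 2 ≤ jw i ^ 2 := by gcongr
      _ ≤ jw i ^ 5 := pow_le_pow_right₀ hw1 (by norm_num)
      _ ≤ _ := by linarith [pow_pos hw0 5]
  have h5 := norm_lS_le8 hε N (m - i.2)
  have h6 := norm_dS_le1 ε N (m - i.2)
  have hp : 1 ≤ jw i ^ 6 := one_le_pow₀ hw1
  calc ‖kS c ε N i m‖ ≤ |gS N m| * |gS N (m + i.1)| *
      (‖c.a1 i‖ * ‖lS ε N (m - i.2) - lS ε N m‖ + ‖c.b1 i‖ * ‖dS ε N (m - i.2)‖)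
    + (‖c.a2 i‖ * ‖lS ε N (m - i.2)‖ + ‖c.b2 i‖ * ‖dS ε N (m - i.2)‖) := by
        unfold kS
        refine (norm_add_le _ _).trans (add_le_add ?_ ?_)
        · rw [norm_mul, norm_mul]
          simp only [Complex.norm_real, Real.norm_eq_abs]
          gcongr
          refine (norm_add_le _ _).trans ?_
          rw [norm_mul, norm_mul]
        · refine (norm_add_le _ _).trans ?_
          rw [norm_mul, norm_mul]
    _ ≤ (7 * tw N m) * (7 * (tw N m * jw i)) * (‖c.a1 i‖ * (300 * jw i ^ 5 / tw N m ^ 2)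
        + ‖c.b1 i‖ * (300 * jw i ^ 5 / tw N m ^ 2)) + (‖c.a2 i‖ * 8 + ‖c.b2 i‖ * 1) := by gcongr
    _ = 14700 * ((‖c.a1 i‖ + ‖c.b1 i‖) * jw i ^ 6) + (8 * ‖c.a2 i‖ + ‖c.b2 i‖) * 1 := by
        field_simp; ring
    _ ≤ 14700 * ((‖c.a1 i‖ + ‖c.b1 i‖) * jw i ^ 6) + (14700 * (‖c.a2 i‖ + ‖c.b2 i‖)) * jw i ^ 6 := by
        gcongr; linarith [norm_nonneg (c.a2 i), norm_nonneg (c.b2 i)]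
    _ = _ := by rw [Coef.nrm]; ring

lemma kS_conv (c : Coef) {ε : ℝ} (hε : ε = 1 / 6 ∨ ε = -(1 / 6)) (N : ℕ) [NeZero N] (i : ℤ × ℤ)
    (m : ℤ) : ‖kS c ε N i m - kS c ε 0 i m‖ ≤
      1000000 * (c.nrm i * jw i ^ 8) * jb m ^ 3 / (N:ℝ) ^ 2 := by
  have hN : (0:ℝ) < N := by exact_mod_cast NeZero.pos N
  have hj := one_le_jb m
  have hj0 := jb_pos m
  have hw1 := one_le_jw i
  have hw0 : 0 < jw i := by linarith
  have hd := jb_fst_le i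
  have hd0 := jb_pos i.1
  have hq := jb_snd_le i
  have hq0 := jb_pos i.2
  have hc0 := c.nrm_nonneg i
  rcases lt_or_ge (2 * (|(m:ℝ)| + |(i.1:ℝ)| + |(i.2:ℝ)|)) N with h | h
  · have hm : 2 * |(m:ℝ)| < N := by linarith [abs_nonneg (i.1:ℝ), abs_nonneg (i.2:ℝ)]
    have hmq : 2 * |((m - i.2 : ℤ):ℝ)| ≤ N := by
      push_cast
      linarith [abs_nonneg (i.1:ℝ), abs_sub (m:ℝ) (i.2:ℝ)]
    have g1 := gS_conv' N m
    have g2 : |gS N (m + i.1) - gS 0 (m + i.1)| ≤ 128 * (jb m * jw i) ^ 3 / (N:ℝ) ^ 2 := by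
      refine (gS_conv' N _).trans ?_
      have := jb_add_le m i.1
      have h0 := jb_pos (m + i.1)
      gcongr
      exact this.trans (by gcongr)
    have g3 := abs_gS_le' 0 m
    have g4 : ∀ M, |gS M (m + i.1)| ≤ 7 * (jb m * jw i) := fun M => by
      refine (abs_gS_le' M _).trans ?_
      have := jb_add_le m i.1
      gcongr
      exact this.trans (by gcongr)
    have l1 : ‖lS ε N (m - i.2) - lS ε N m‖ ≤ 300 * jw i ^ 5 / jb m ^ 2 := by
      rw [← tw_of_lt N m hm]
      have htw := tw_pos N m
      exact (norm_lS_shift hε N m i.2).trans (by change 300 * jb i.2 ^ 5 / _ ≤ _; gcongr)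
    have d1 : ‖dS ε N (m - i.2)‖ ≤ 300 * jw i ^ 5 / jb m ^ 2 := by
      refine (norm_dS_shift ε N m i.2).trans ?_
      rw [tw_of_lt N m hm]
      gcongr
      calc jb i.2 ^ 2 ≤ jw i ^ 2 := by gcongr
        _ ≤ jw i ^ 5 := pow_le_pow_right₀ hw1 (by norm_num)
        _ ≤ _ := by linarith [pow_pos hw0 5]
    have l2 : ‖lS ε N (m - i.2) - lS ε 0 (m - i.2)‖ ≤ 8 * (jb m * jw i) / (N:ℝ) ^ 2 := by
      refine (lS_conv' hε N _ hmq).trans ?_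
      have := jb_sub_le m i.2
      gcongr
      exact this.trans (by gcongr)
    have l3 : ‖lS ε N m - lS ε 0 m‖ ≤ 8 * (jb m * jw i) / (N:ℝ) ^ 2 := by
      refine (lS_conv' hε N _ hm.le).trans ?_
      gcongr
      exact le_mul_of_one_le_right hj0.le hw1
    have l4 : ‖(lS ε N (m - i.2) - lS ε 0 (m - i.2)) - (lS ε N m - lS ε 0 m)‖ ≤
        16 * (jb m * jw i) / (N:ℝ) ^ 2 := by
      refine (norm_sub_le _ _).trans ?_
      have : 16 * (jb m * jw i) / (N:ℝ) ^ 2 = 8 * (jb m * jw i) / (N:ℝ) ^ 2 + 8 * (jb m * jw i) / (N:ℝ) ^ 2 := by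
        ring
      linarith
    have gg : |(gS N m - gS 0 m) * gS N (m + i.1) + gS 0 m * (gS N (m + i.1) - gS 0 (m + i.1))| ≤
        1792 * jb m ^ 4 * jw i ^ 3 / (N:ℝ) ^ 2 := by
      calc _ ≤ |gS N m - gS 0 m| * |gS N (m + i.1)| + |gS 0 m| * |gS N (m + i.1) - gS 0 (m + i.1)| := by
            rw [← abs_mul, ← abs_mul]; exact abs_add_le _ _
        _ ≤ (128 * jb m ^ 3 / (N:ℝ) ^ 2) * (7 * (jb m * jw i)) +
            (7 * jb m) * (128 * (jb m * jw i) ^ 3 / (N:ℝ) ^ 2) := by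
            gcongr; exact g4 N
        _ = (896 * jb m ^ 4 * (jw i ^ 1 + jw i ^ 3)) / (N:ℝ) ^ 2 := by ring
        _ ≤ (896 * jb m ^ 4 * (jw i ^ 3 + jw i ^ 3)) / (N:ℝ) ^ 2 := by
            gcongr; norm_num
        _ = _ := by ring
    have hid : kS c ε N i m - kS c ε 0 i m =
        (((gS N m - gS 0 m) * gS N (m + i.1) + gS 0 m * (gS N (m + i.1) - gS 0 (m + i.1)) : ℝ) : ℂ) *
          (c.a1 i * (lS ε N (m - i.2) - lS ε N m) + c.b1 i * dS ε N (m - i.2)) +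
        (gS 0 m : ℂ) * (gS 0 (m + i.1) : ℂ) * (c.a1 i *
          ((lS ε N (m - i.2) - lS ε 0 (m - i.2)) - (lS ε N m - lS ε 0 m))) +
        c.a2 i * (lS ε N (m - i.2) - lS ε 0 (m - i.2)) := by
      rw [kS, kS, dS_conv ε N _ hmq]; push_cast; ring
    calc ‖kS c ε N i m - kS c ε 0 i m‖ ≤
        |(gS N m - gS 0 m) * gS N (m + i.1) + gS 0 m * (gS N (m + i.1) - gS 0 (m + i.1))| *
          (‖c.a1 i‖ * ‖lS ε N (m - i.2) - lS ε N m‖ + ‖c.b1 i‖ * ‖dS ε N (m - i.2)‖) +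
        |gS 0 m| * |gS 0 (m + i.1)| * (‖c.a1 i‖ *
          ‖(lS ε N (m - i.2) - lS ε 0 (m - i.2)) - (lS ε N m - lS ε 0 m)‖) +
        ‖c.a2 i‖ * ‖lS ε N (m - i.2) - lS ε 0 (m - i.2)‖ := by
          rw [hid]
          refine (norm_add_le _ _).trans (add_le_add ((norm_add_le _ _).trans (add_le_add ?_ ?_)) ?_)
          · rw [norm_mul, Complex.norm_real, Real.norm_eq_abs]
            gcongr
            refine (norm_add_le _ _).trans ?_
            rw [norm_mul, norm_mul]
          · rw [norm_mul, norm_mul, norm_mul]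
            simp only [Complex.norm_real, Real.norm_eq_abs, le_refl]
          · rw [norm_mul]
      _ ≤ (1792 * jb m ^ 4 * jw i ^ 3 / (N:ℝ) ^ 2) *
          (‖c.a1 i‖ * (300 * jw i ^ 5 / jb m ^ 2) + ‖c.b1 i‖ * (300 * jw i ^ 5 / jb m ^ 2)) +
          (7 * jb m) * (7 * (jb m * jw i)) * (‖c.a1 i‖ * (16 * (jb m * jw i) / (N:ℝ) ^ 2)) +
          ‖c.a2 i‖ * (8 * (jb m * jw i) / (N:ℝ) ^ 2) := by
          gcongr; exact g4 0
      _ = (537600 * ((‖c.a1 i‖ + ‖c.b1 i‖) * jw i ^ 8) * jb m ^ 2 +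
          784 * (‖c.a1 i‖ * jw i ^ 2) * jb m ^ 3 + 8 * (‖c.a2 i‖ * jw i ^ 1) * jb m ^ 1) / (N:ℝ) ^ 2 := by
          field_simp; ring
      _ ≤ (537600 * (c.nrm i * jw i ^ 8) * jb m ^ 3 +
          784 * (c.nrm i * jw i ^ 8) * jb m ^ 3 + 8 * (c.nrm i * jw i ^ 8) * jb m ^ 3) / (N:ℝ) ^ 2 := by
          have n1 : ‖c.a1 i‖ + ‖c.b1 i‖ ≤ c.nrm i := by
            unfold Coef.nrm; linarith [norm_nonneg (c.a2 i), norm_nonneg (c.b2 i)]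
          have n2 : ‖c.a1 i‖ ≤ c.nrm i := by linarith [norm_nonneg (c.b1 i)]
          have n3 : ‖c.a2 i‖ ≤ c.nrm i := by
            unfold Coef.nrm
            linarith [norm_nonneg (c.a1 i), norm_nonneg (c.b1 i), norm_nonneg (c.b2 i)]
          have e1 := pow_le_pow_right₀ hw1 (show 2 ≤ 8 by norm_num)
          have e2 := pow_le_pow_right₀ hw1 (show 1 ≤ 8 by norm_num)
          have e3 := pow_le_pow_right₀ hj (show 2 ≤ 3 by norm_num)
          have e4 := pow_le_pow_right₀ hj (show 1 ≤ 3 by norm_num)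
          gcongr
      _ ≤ _ := by
          rw [← add_mul, ← add_mul]
          have : 0 ≤ c.nrm i * jw i ^ 8 := by positivity
          gcongr
          linarith
  · have h1 := norm_kS_le c hε N i m
    have h2 := norm_kS_le c hε 0 i m
    have h3 := one_le_of_le N (jb m * jw i) (by
      have : |(m:ℝ)| + |(i.1:ℝ)| + |(i.2:ℝ)| ≤ jb m * jw i := by
        unfold jw jb
        have a1 := abs_nonneg (m:ℝ)
        have a2 := abs_nonneg (i.1:ℝ)
        have a3 := abs_nonneg (i.2:ℝ)
        nlinarith [mul_nonneg a1 a2, mul_nonneg a1 a3, mul_nonneg a2 a3, mul_nonneg (mul_nonneg a1 a2) a3]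
      linarith)
    have hc6 : 0 ≤ c.nrm i * jw i ^ 6 := by positivity
    calc ‖kS c ε N i m - kS c ε 0 i m‖ ≤ 29400 * (c.nrm i * jw i ^ 6) * 1 := by
          refine (norm_sub_le _ _).trans (by linarith)
      _ ≤ 29400 * (c.nrm i * jw i ^ 6) * (4 * (jb m * jw i) ^ 2 / (N:ℝ) ^ 2) := by gcongr
      _ = 117600 * (c.nrm i * jw i ^ 8) * jb m ^ 2 / (N:ℝ) ^ 2 := by ring
      _ ≤ _ := by gcongr <;> norm_num

end NysLog

end

noncomputable section

namespace NysLog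

open Complex (I)
open scoped Real

/-! ### Exact Fourier coefficients of the logarithmic kernel -/

lemma ell_eq_two_log (x : ℝ) : ell x = 2 * Real.log (Real.sin (π * x)) + Real.log 4 := by
  rw [ell, Real.log_pow]; norm_num

lemma ell_intervalIntegrable (a b : ℝ) : IntervalIntegrable ell MeasureTheory.volume a b := by
  have h0 : IntervalIntegrable (fun x => Real.log (Real.sin x)) MeasureTheory.volume
      (π * a) (π * b) := intervalIntegrable_log_sin
  have h1 : IntervalIntegrable (fun x => Real.log (Real.sin (π * x))) MeasureTheory.volume a b := by
    have := h0.comp_mul_left (c := π)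
    simpa [Real.pi_ne_zero] using this
  have h2 := (h1.const_mul 2).add (intervalIntegrable_const (c := Real.log 4))
  have : ell = fun x => 2 * Real.log (Real.sin (π * x)) + Real.log 4 := funext ell_eq_two_log
  rw [this]; exact h2

lemma ellC_mul_intervalIntegrable (f : ℝ → ℂ) (hf : Continuous f) (a b : ℝ) :
    IntervalIntegrable (fun x => (ell x : ℂ) * f x) MeasureTheory.volume a b :=
  IntervalIntegrable.mul_continuousOn
    ⟨(ell_intervalIntegrable a b).1.ofReal, (ell_intervalIntegrable a b).2.ofReal⟩ hf.continuousOn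

lemma integral_ell : ∫ x in (0:ℝ)..1, ell x = 0 := by
  have h1 : IntervalIntegrable (fun x => Real.log (Real.sin (π * x))) MeasureTheory.volume 0 1 := by
    have h0 : IntervalIntegrable (fun x => Real.log (Real.sin x)) MeasureTheory.volume
      (π * 0) (π * 1) := intervalIntegrable_log_sin
    have := h0.comp_mul_left (c := π)
    simpa [Real.pi_ne_zero] using this
  have h2 : ∫ x in (0:ℝ)..1, Real.log (Real.sin (π * x)) = -Real.log 2 := by
    rw [intervalIntegral.integral_comp_mul_left (fun x => Real.log (Real.sin x)) Real.pi_ne_zero]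
    rw [mul_zero, mul_one, integral_log_sin_zero_pi, smul_eq_mul]
    have := Real.pi_ne_zero
    field_simp
  simp only [ell_eq_two_log]
  rw [intervalIntegral.integral_add (h1.const_mul 2) intervalIntegrable_const,
    intervalIntegral.integral_const_mul, h2]
  rw [show (4:ℝ) = 2 ^ 2 by norm_num, Real.log_pow]
  simp

lemma e_one_ne_one_of_mem {x : ℝ} (hx : x ∈ Set.Ioo (0:ℝ) 1) : e 1 x ≠ 1 := by
  intro h
  obtain ⟨k, rfl⟩ := (e_one_eq_one_iff x).1 h
  have h1 : 0 < k := by exact_mod_cast hx.1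
  have h2 : k < 1 := by exact_mod_cast hx.2
  omega

lemma integral_ell_e_diff (n : ℤ) :
    (∫ x in (0:ℝ)..1, (ell x : ℂ) * e (-n) x) - (∫ x in (0:ℝ)..1, (ell x : ℂ) * e (-(n-1)) x) = cc n := by
  rw [← intervalIntegral.integral_sub (ellC_mul_intervalIntegrable _ (continuous_e _) _ _)
    (ellC_mul_intervalIntegrable _ (continuous_e _) _ _)]
  have h1 : ∫ x in (0:ℝ)..1, ((ell x : ℂ) * e (-n) x - (ell x : ℂ) * e (-(n-1)) x) =
      ∫ x in (0:ℝ)..1, ∑' k : ℤ, (cc k : ℂ) * e (k - n) x := by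
    rw [intervalIntegral.integral_of_le zero_le_one, intervalIntegral.integral_of_le zero_le_one,
      MeasureTheory.integral_Ioc_eq_integral_Ioo, MeasureTheory.integral_Ioc_eq_integral_Ioo]
    refine MeasureTheory.setIntegral_congr_fun measurableSet_Ioo fun x hx => ?_
    have h2 := (hasSum_ell _ (e_one_ne_one_of_mem hx)).mul_right (e (-n) x)
    have h3 : HasSum (fun k : ℤ => (cc k : ℂ) * e (k - n) x) ((1 - e 1 x) * (ell x : ℂ) * e (-n) x) :=
      hasSum_of_eq h2 fun k => by rw [e_sub]; ring
    rw [h3.tsum_eq, show -(n-1) = 1 + -n by ring, e_add]; ring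
  rw [h1]
  have h2 : HasSum (fun k : ℤ => ∫ x in (0:ℝ)..1, (cc k : ℂ) * e (k - n) x)
      (∫ x in (0:ℝ)..1, ∑' k : ℤ, (cc k : ℂ) * e (k - n) x) := by
    refine intervalIntegral.hasSum_intervalIntegral_of_summable_norm
      (f := fun k : ℤ => (⟨fun x => (cc k : ℂ) * e (k - n) x,
        continuous_const.mul (continuous_e _)⟩ : C(ℝ, ℂ))) ?_
    refine Summable.of_nonneg_of_le (fun _ => norm_nonneg _) (fun k => ?_) summable_cc
    rw [ContinuousMap.norm_le _ (abs_nonneg _)]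
    rintro ⟨x, hx⟩
    simp
  have h3 : HasSum (fun k : ℤ => ∫ x in (0:ℝ)..1, (cc k : ℂ) * e (k - n) x) (cc n : ℂ) := by
    have := hasSum_ite_eq n (cc n : ℂ)
    refine hasSum_of_eq this fun k => ?_
    rw [intervalIntegral.integral_const_mul, integral_e]
    by_cases h : k = n
    · simp [h]
    · rw [if_neg h, if_neg (by omega), mul_zero]
  exact h2.unique h3

lemma integral_ell_e (ε : ℝ) (n : ℤ) : ∫ x in (0:ℝ)..1, (ell x : ℂ) * e (-n) x = lS ε 0 n := by
  have hd : ∀ k : ℤ, lS ε 0 k - lS ε 0 (k - 1) = (cc k : ℂ) := fun k => by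
    rw [lS_zero_left, lS_zero_left, cc]; push_cast; ring
  induction n using Int.induction_on with
  | zero =>
    simp only [neg_zero, e_zero, mul_one]
    rw [intervalIntegral.integral_ofReal, integral_ell]
    simp [lS]
  | succ k ih =>
    have h1 := integral_ell_e_diff (k + 1)
    have h2 := hd (k + 1)
    rw [show (k:ℤ) + 1 - 1 = k by ring] at h1 h2
    rw [ih] at h1
    linear_combination h1 - h2
  | pred k ih =>
    have h1 := integral_ell_e_diff (-k)
    have h2 := hd (-k)
    rw [ih] at h1
    linear_combination h2 - h1

lemma integral_one_e (ε : ℝ) (n : ℤ) : ∫ x in (0:ℝ)..1, e (-n) x = dS ε 0 n := by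
  rw [integral_e, dS_zero_left]; simp

/-- A convolution acts on characters as a multiplier. -/
lemma integral_conv_e (f : ℝ → ℂ) (hf : Function.Periodic f 1) (m : ℤ) (s : ℝ) :
    ∫ t in (0:ℝ)..1, f (s - t) * e m t = e m s * ∫ x in (0:ℝ)..1, f x * e (-m) x := by
  have h1 : ∀ t, f (s - t) * e m t = e m s * (fun x => f x * e (-m) x) (s - t) := fun t => by
    simp only
    rw [e_sub_arg, neg_neg, e_neg]
    have := e_ne_zero m s
    field_simp
  simp only [h1]
  rw [intervalIntegral.integral_const_mul,
    intervalIntegral.integral_comp_sub_left (fun x => f x * e (-m) x) s]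
  have hp : Function.Periodic (fun x => f x * e (-m) x) 1 := fun x => by
    simp only; rw [hf x, e_periodic (-m) x]
  have := hp.intervalIntegral_add_eq (s - 1) 0
  rw [sub_add_cancel, zero_add] at this
  simp only [sub_zero]
  rw [this]

end NysLog

end

noncomputable section

namespace NysLog

open Complex (I)
open scoped Real

/-! ### Fourier series of smooth periodic functions of one variable -/

lemma fc_eq (u : ℝ → ℂ) (m : ℤ) : fc u m = ∫ t in (0:ℝ)..1, u t * e (-m) t := by
  unfold fc e
  congr 1; ext t; congr 2; push_cast; ring

lemma fc_sub {u v : ℝ → ℂ} (hu : Continuous u) (hv : Continuous v) (m : ℤ) :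
    fc (fun t => u t - v t) m = fc u m - fc v m := by
  rw [fc_eq, fc_eq, fc_eq, ← intervalIntegral.integral_sub]
  · simp only [sub_mul]
  · exact (hu.mul (continuous_e _)).intervalIntegrable _ _
  · exact (hv.mul (continuous_e _)).intervalIntegrable _ _

lemma fc_deriv {u : ℝ → ℂ} (hu : ContDiff ℝ 1 u) (hp : Function.Periodic u 1) (m : ℤ) :
    fc (deriv u) m = 2 * π * I * m * fc u m := by
  have h := intervalIntegral.integral_deriv_mul_eq_sub (a := 0) (b := 1) (u := u) (v := e (-m))
    (u' := deriv u) (v' := fun x => 2 * π * I * ((-m : ℤ) : ℂ) * e (-m) x)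
    (fun x _ => (hu.differentiable one_ne_zero x).hasDerivAt) (fun x _ => hasDerivAt_e _ _)
    ((hu.continuous_deriv le_rfl).intervalIntegrable _ _)
    ((continuous_const.mul (continuous_e _)).intervalIntegrable _ _)
  have h1 : u 1 * e (-m) 1 - u 0 * e (-m) 0 = 0 := by
    have a := hp 0
    have b := e_periodic (-m) 0
    rw [zero_add] at a b
    rw [a, b, sub_self]
  rw [h1, intervalIntegral.integral_add] at h
  · rw [fc_eq, fc_eq, ← intervalIntegral.integral_const_mul, eq_neg_of_add_eq_zero_left h,
      ← intervalIntegral.integral_neg]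
    congr 1; ext t; push_cast; ring
  · exact ((hu.continuous_deriv le_rfl).mul (continuous_e _)).intervalIntegrable _ _
  · exact (hu.continuous.mul (continuous_const.mul (continuous_e _))).intervalIntegrable _ _

/-- The symbol of `1 − d/ds` dominates `⟨m⟩`. -/
lemma jb_le_norm (m : ℤ) : jb m ≤ ‖(1 - 2 * π * I * m : ℂ)‖ := by
  have h0 : (1 - 2 * π * I * m : ℂ) = ((1:ℝ):ℂ) + ((-(2 * π * m) : ℝ) : ℂ) * I := by
    push_cast; ring
  rw [h0, Complex.norm_add_mul_I]
  apply Real.le_sqrt_of_sq_le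
  unfold jb
  have hpi := Real.pi_gt_three
  by_cases hm : m = 0
  · simp [hm]
  · have h1 : (1:ℝ) ≤ |(m:ℝ)| := by
      rw [← Int.cast_abs]; exact_mod_cast Int.one_le_abs hm
    have h2 : (-(2 * π * (m:ℝ))) ^ 2 = 4 * π ^ 2 * |(m:ℝ)| ^ 2 := by rw [sq_abs]; ring
    rw [h2]
    have h3 : 9 * |(m:ℝ)| ^ 2 ≤ π ^ 2 * |(m:ℝ)| ^ 2 := by gcongr; nlinarith
    nlinarith

lemma norm_fc_le {u : ℝ → ℂ} {C : ℝ} (hC : ∀ x ∈ Set.Icc (0:ℝ) 1, ‖u x‖ ≤ C) (m : ℤ) :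
    ‖fc u m‖ ≤ C := by
  rw [fc_eq]
  have := intervalIntegral.norm_integral_le_of_norm_le_const (a := 0) (b := 1)
    (f := fun t => u t * e (-m) t) (C := C) fun x hx => by
      rw [Set.uIoc_of_le zero_le_one] at hx
      rw [norm_mul, norm_e, mul_one]; exact hC x ⟨hx.1.le, hx.2⟩
  simpa using this

lemma periodic_deriv {u : ℝ → ℂ} (hp : Function.Periodic u 1) : Function.Periodic (deriv u) 1 := by
  intro x
  have h : (fun y => u (y + 1)) = u := funext hp
  rw [← deriv_comp_add_const, h]

lemma contDiff_deriv {u : ℝ → ℂ} (hu : ContDiff ℝ (⊤ : ℕ∞) u) :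
    ContDiff ℝ (⊤ : ℕ∞) (deriv u) := by
  have := (contDiff_infty_iff_deriv (𝕜 := ℝ) (f := u)).1 hu
  exact this.2

/-- Rapid decay of the Fourier coefficients of smooth functions. -/
lemma fc_decay (k : ℕ) : ∀ u : ℝ → ℂ, ContDiff ℝ (⊤ : ℕ∞) u → Function.Periodic u 1 →
    ∃ C, ∀ m, ‖fc u m‖ * jb m ^ k ≤ C := by
  induction k with
  | zero =>
    intro u hu _
    obtain ⟨C, hC⟩ := isCompact_Icc.exists_bound_of_continuousOn
      (hu.continuous.continuousOn (s := Set.Icc (0:ℝ) 1))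
    exact ⟨C, fun m => by simpa using norm_fc_le hC m⟩
  | succ k ih =>
    intro u hu hp
    obtain ⟨C, hC⟩ := ih (fun t => u t - deriv u t) (hu.sub (contDiff_deriv hu))
      (fun x => by simp only; rw [hp x, periodic_deriv hp x])
    refine ⟨C, fun m => le_trans ?_ (hC m)⟩
    rw [fc_sub hu.continuous (contDiff_deriv hu).continuous,
      fc_deriv (hu.of_le (by exact_mod_cast le_top)) hp,
      show fc u m - 2 * π * I * m * fc u m = (1 - 2 * π * I * m) * fc u m by ring, norm_mul]
    have := jb_le_norm m
    have h2 := jb_pos m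
    calc ‖fc u m‖ * jb m ^ (k+1) = jb m * ‖fc u m‖ * jb m ^ k := by ring
      _ ≤ _ := by gcongr

lemma summable_inv_jb_sq : Summable (fun m : ℤ => 1 / jb m ^ 2) := summable_inv_sq_int

lemma fc_summable (k : ℕ) {u : ℝ → ℂ} (hu : ContDiff ℝ (⊤ : ℕ∞) u) (hp : Function.Periodic u 1) :
    Summable fun m => ‖fc u m‖ * jb m ^ k := by
  obtain ⟨C, hC⟩ := fc_decay (k + 2) u hu hp
  refine Summable.of_nonneg_of_le (fun m => by have := jb_pos m; positivity) (fun m => ?_)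
    (summable_inv_jb_sq.mul_left C)
  have := jb_pos m
  rw [mul_one_div, le_div_iff₀ (by positivity)]
  calc _ = ‖fc u m‖ * jb m ^ (k + 2) := by ring
    _ ≤ C := hC m

lemma hasSum_fc {u : ℝ → ℂ} (hu : Continuous u) (hp : Function.Periodic u 1)
    (hs : Summable fun m => ‖fc u m‖) (x : ℝ) : HasSum (fun m => fc u m * e m x) (u x) := by
  have : Fact (0 < (1:ℝ)) := ⟨zero_lt_one⟩
  let f : C(AddCircle (1:ℝ), ℂ) := ⟨hp.lift, continuous_coinduced_dom.mpr hu⟩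
  have hf : ∀ y : ℝ, f (y : AddCircle (1:ℝ)) = u y := fun y => hp.lift_coe y
  have hc : ∀ m, fourierCoeff f m = fc u m := fun m => by
    rw [fourierCoeff_eq_intervalIntegral f m 0, fc_eq]
    simp only [one_div, inv_one, one_smul, zero_add, smul_eq_mul]
    congr 1; ext t
    rw [hf, fourier_coe_apply, e, mul_comm]
    congr 2
    push_cast; ring
  have h := has_pointwise_sum_fourier_series_of_summable (f := f)
    (Summable.of_norm (by simpa only [hc] using hs)) (x : AddCircle (1:ℝ))
  rw [hf] at h
  refine hasSum_of_eq h fun m => ?_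
  rw [hc, smul_eq_mul, fourier_coe_apply, e]
  congr 2; push_cast; ring

lemma hasSum_fc_of_smooth {u : ℝ → ℂ} (hu : ContDiff ℝ (⊤ : ℕ∞) u) (hp : Function.Periodic u 1)
    (x : ℝ) : HasSum (fun m => fc u m * e m x) (u x) :=
  hasSum_fc hu.continuous hp (by simpa using fc_summable 0 hu hp) x

/-- An absolutely convergent Fourier series can be integrated against a character. -/
lemma fc_of_hasSum {a : ℤ → ℂ} (ha : Summable fun m => ‖a m‖) {u : ℝ → ℂ}
    (hu : ∀ x, HasSum (fun m => a m * e m x) (u x)) (n : ℤ) : fc u n = a n := by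
  have h2 : HasSum (fun k : ℤ => ∫ x in (0:ℝ)..1, a k * e (k - n) x)
      (∫ x in (0:ℝ)..1, ∑' k : ℤ, a k * e (k - n) x) := by
    refine intervalIntegral.hasSum_intervalIntegral_of_summable_norm
      (f := fun k : ℤ => (⟨fun x => a k * e (k - n) x,
        continuous_const.mul (continuous_e _)⟩ : C(ℝ, ℂ))) ?_
    refine Summable.of_nonneg_of_le (fun _ => norm_nonneg _) (fun k => ?_) ha
    rw [ContinuousMap.norm_le _ (norm_nonneg _)]
    rintro ⟨x, hx⟩
    simp
  have h3 : HasSum (fun k : ℤ => ∫ x in (0:ℝ)..1, a k * e (k - n) x) (a n) := by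
    refine hasSum_of_eq (hasSum_ite_eq n (a n)) fun k => ?_
    rw [intervalIntegral.integral_const_mul, integral_e]
    by_cases h : k = n
    · simp [h]
    · rw [if_neg h, if_neg (by omega), mul_zero]
  rw [fc_eq, ← h2.unique h3]
  congr 1; ext t
  have := (hu t).mul_right (e (-n) t)
  refine (HasSum.tsum_eq (hasSum_of_eq this fun k => ?_)).symm
  rw [e_sub]; ring

end NysLog

end

noncomputable section

namespace NysLog

open Complex (I)
open scoped Real

/-! ### Fourier series of smooth doubly periodic kernels -/

/-- Double Fourier coefficient of a doubly periodic kernel. -/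
def fc2 (B : ℝ → ℝ → ℂ) (d q : ℤ) : ℂ := fc (fun s => fc (B s) q) d

/-- Partial derivative in the first variable. -/
def D1 (B : ℝ → ℝ → ℂ) (s x : ℝ) : ℂ := deriv (fun s => B s x) s

/-- Partial derivative in the second variable. -/
def D2 (B : ℝ → ℝ → ℂ) (s x : ℝ) : ℂ := deriv (B s) x

lemma spk_continuous {B : ℝ → ℝ → ℂ} (hB : SPK B) : Continuous (fun p : ℝ × ℝ => B p.1 p.2) :=
  hB.1.continuous

lemma spk_left {B : ℝ → ℝ → ℂ} (hB : SPK B) (x : ℝ) : ContDiff ℝ (⊤ : ℕ∞) (fun s => B s x) :=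
  hB.1.comp (contDiff_id.prodMk contDiff_const)

lemma spk_right {B : ℝ → ℝ → ℂ} (hB : SPK B) (s : ℝ) : ContDiff ℝ (⊤ : ℕ∞) (B s) :=
  hB.1.comp (contDiff_const.prodMk contDiff_id)

lemma spk_swap {B : ℝ → ℝ → ℂ} (hB : SPK B) : SPK (fun s x => B x s) :=
  ⟨hB.1.comp (contDiff_snd.prodMk contDiff_fst), fun s t => hB.2.2 t s, fun s t => hB.2.1 t s⟩

lemma spk_D2 {B : ℝ → ℝ → ℂ} (hB : SPK B) : SPK (D2 B) := by
  refine ⟨?_, fun s t => ?_, fun s t => periodic_deriv (hB.2.2 s) t⟩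
  · have h1 : (fun p : ℝ × ℝ => D2 B p.1 p.2) =
        fun p : ℝ × ℝ => fderiv ℝ (fun p : ℝ × ℝ => B p.1 p.2) p (0, 1) := by
      ext ⟨s, x⟩
      have hd := (hB.1.differentiable (by simp) (s, x)).hasFDerivAt
      have hg : HasDerivAt (fun y : ℝ => (s, y)) ((0:ℝ), (1:ℝ)) x :=
        (hasDerivAt_const x s).prodMk (hasDerivAt_id x)
      exact (hd.comp_hasDerivAt x hg).deriv
    rw [h1]
    exact (hB.1.fderiv_right (m := (⊤ : ℕ∞)) (by simp)).clm_apply contDiff_const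
  · unfold D2
    rw [show B (s + 1) = B s from funext fun t => hB.2.1 s t]

lemma spk_D1 {B : ℝ → ℝ → ℂ} (hB : SPK B) : SPK (D1 B) := spk_swap (spk_D2 (spk_swap hB))

lemma spk_sub {A B : ℝ → ℝ → ℂ} (hA : SPK A) (hB : SPK B) : SPK (fun s t => A s t - B s t) :=
  ⟨hA.1.sub hB.1, fun s t => by simp only; rw [hA.2.1, hB.2.1],
    fun s t => by simp only; rw [hA.2.2, hB.2.2]⟩

lemma spk_const (z : ℂ) : SPK (fun _ _ => z) := ⟨contDiff_const, fun _ _ => rfl, fun _ _ => rfl⟩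

lemma spk_const_mul {A : ℝ → ℝ → ℂ} (z : ℂ) (hA : SPK A) : SPK (fun s t => z * A s t) :=
  ⟨contDiff_const.mul hA.1, fun s t => by simp only; rw [hA.2.1],
    fun s t => by simp only; rw [hA.2.2]⟩

/-- The kernel in the variables `(s, x) = (s, s − t)`. -/
lemma spk_shear {A : ℝ → ℝ → ℂ} (hA : SPK A) : SPK (fun s x => A s (s - x)) := by
  refine ⟨hA.1.comp (contDiff_fst.prodMk (contDiff_fst.sub contDiff_snd)), fun s x => ?_,
    fun s x => ?_⟩
  · simp only; rw [hA.2.1, show s + 1 - x = s - x + 1 by ring, hA.2.2]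
  · simp only
    rw [← hA.2.2 s (s - (x + 1))]; congr 1; ring

lemma continuous_fc {B : ℝ → ℝ → ℂ} (hB : Continuous (fun p : ℝ × ℝ => B p.1 p.2)) (q : ℤ) :
    Continuous fun s => fc (B s) q := by
  simp only [fc_eq]
  refine intervalIntegral.continuous_parametric_intervalIntegral_of_continuous' ?_ 0 1
  exact hB.mul ((continuous_e _).comp continuous_snd)

lemma periodic_fc {B : ℝ → ℝ → ℂ} (hB : SPK B) (q : ℤ) :
    Function.Periodic (fun s => fc (B s) q) 1 := fun s => by
  simp only
  rw [show B (s + 1) = B s from funext fun t => hB.2.1 s t]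

lemma fc2_swap {B : ℝ → ℝ → ℂ} (hB : Continuous (fun p : ℝ × ℝ => B p.1 p.2)) (d q : ℤ) :
    fc2 B d q = fc2 (fun s x => B x s) q d := by
  simp only [fc2, fc_eq, ← intervalIntegral.integral_mul_const]
  rw [MeasureTheory.intervalIntegral_intervalIntegral_swap]
  · congr 1; ext x; congr 1; ext s; ring
  · have hc : Continuous (Function.uncurry fun x y : ℝ => B x y * e (-q) y * e (-d) x) :=
      (hB.mul ((continuous_e _).comp continuous_snd)).mul ((continuous_e _).comp continuous_fst)
    refine (hc.continuousOn.integrableOn_compact (isCompact_Icc.prod isCompact_Icc)).mono_set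
      (t := Set.Icc (0:ℝ) 1 ×ˢ Set.Icc (0:ℝ) 1) ?_
    rw [Set.uIoc_of_le zero_le_one]
    exact Set.prod_mono Set.Ioc_subset_Icc_self Set.Ioc_subset_Icc_self

lemma fc2_sub {A B : ℝ → ℝ → ℂ} (hA : SPK A) (hB : SPK B) (d q : ℤ) :
    fc2 (fun s t => A s t - B s t) d q = fc2 A d q - fc2 B d q := by
  unfold fc2
  simp only [fun s => fc_sub (spk_right hA s).continuous (spk_right hB s).continuous q]
  exact fc_sub (continuous_fc (spk_continuous hA) q) (continuous_fc (spk_continuous hB) q) d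

lemma fc_const_mul (z : ℂ) (u : ℝ → ℂ) (m : ℤ) : fc (fun t => z * u t) m = z * fc u m := by
  simp only [fc_eq, mul_assoc, intervalIntegral.integral_const_mul]

lemma fc2_D2 {B : ℝ → ℝ → ℂ} (hB : SPK B) (d q : ℤ) :
    fc2 (D2 B) d q = 2 * π * I * q * fc2 B d q := by
  unfold fc2 D2
  have : ∀ s, fc (fun x => deriv (B s) x) q = 2 * π * I * q * fc (B s) q := fun s =>
    fc_deriv ((spk_right hB s).of_le (by exact_mod_cast le_top)) (hB.2.2 s) q
  simp only [this]
  rw [fc_const_mul]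

lemma fc2_D1 {B : ℝ → ℝ → ℂ} (hB : SPK B) (d q : ℤ) :
    fc2 (D1 B) d q = 2 * π * I * d * fc2 B d q := by
  rw [fc2_swap (spk_continuous (spk_D1 hB)), fc2_swap (spk_continuous hB)]
  exact fc2_D2 (spk_swap hB) q d

lemma fc2_decay (k : ℕ) : ∀ B : ℝ → ℝ → ℂ, SPK B →
    ∃ C, ∀ i : ℤ × ℤ, ‖fc2 B i.1 i.2‖ * jw i ^ k ≤ C := by
  induction k with
  | zero =>
    intro B hB
    obtain ⟨C, hC⟩ := (isCompact_Icc.prod isCompact_Icc).exists_bound_of_continuousOn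
      ((spk_continuous hB).continuousOn (s := Set.Icc (0:ℝ) 1 ×ˢ Set.Icc (0:ℝ) 1))
    refine ⟨C, fun i => ?_⟩
    rw [pow_zero, mul_one]
    exact norm_fc_le (fun s hs => norm_fc_le (fun x hx => hC (s, x) ⟨hs, hx⟩) _) _
  | succ k ih =>
    intro B hB
    have hB1 := spk_sub hB (spk_D1 hB)
    have hB2 := spk_sub hB1 (spk_D2 hB1)
    obtain ⟨C, hC⟩ := ih _ hB2
    refine ⟨C, fun i => le_trans ?_ (hC i)⟩
    rw [fc2_sub hB1 (spk_D2 hB1), fc2_D2 hB1, fc2_sub hB (spk_D1 hB), fc2_D1 hB]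
    rw [show fc2 B i.1 i.2 - 2 * π * I * i.1 * fc2 B i.1 i.2 - 2 * π * I * i.2 *
      (fc2 B i.1 i.2 - 2 * π * I * i.1 * fc2 B i.1 i.2) =
      (1 - 2 * π * I * i.1) * (1 - 2 * π * I * i.2) * fc2 B i.1 i.2 by ring, norm_mul, norm_mul]
    have h1 := jb_le_norm i.1
    have h2 := jb_le_norm i.2
    have h3 := jb_pos i.1
    have h4 := jb_pos i.2
    have h5 : (0:ℝ) ≤ jw i := by linarith [one_le_jw i]
    calc ‖fc2 B i.1 i.2‖ * jw i ^ (k+1) = jb i.1 * jb i.2 * ‖fc2 B i.1 i.2‖ * jw i ^ k := by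
          rw [pow_succ, jw]; ring
      _ ≤ _ := by gcongr

lemma summable_inv_jw_sq : Summable (fun i : ℤ × ℤ => 1 / jw i ^ 2) := by
  refine (summable_inv_jb_sq.mul_of_nonneg summable_inv_jb_sq
    (fun m => by positivity) (fun m => by positivity)).congr fun i => ?_
  simp [jw, mul_pow, mul_comm]

lemma fc2_summable (k : ℕ) {B : ℝ → ℝ → ℂ} (hB : SPK B) :
    Summable fun i : ℤ × ℤ => ‖fc2 B i.1 i.2‖ * jw i ^ k := by
  obtain ⟨C, hC⟩ := fc2_decay (k + 2) B hB
  have hj : ∀ i, 0 < jw i := fun i => by linarith [one_le_jw i]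
  refine Summable.of_nonneg_of_le (fun m => by have := hj m; positivity) (fun m => ?_)
    (summable_inv_jw_sq.mul_left C)
  have := hj m
  rw [mul_one_div, le_div_iff₀ (by positivity)]
  calc _ = ‖fc2 B m.1 m.2‖ * jw m ^ (k + 2) := by ring
    _ ≤ C := hC m

lemma hasSum_fc2 {B : ℝ → ℝ → ℂ} (hB : SPK B) (s x : ℝ) :
    HasSum (fun i : ℤ × ℤ => fc2 B i.1 i.2 * e i.1 s * e i.2 x) (B s x) := by
  have hs : Summable fun i : ℤ × ℤ => ‖fc2 B i.1 i.2‖ := by simpa using fc2_summable 0 hB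
  have hsum : Summable (fun i : ℤ × ℤ => fc2 B i.2 i.1 * e i.2 s * e i.1 x) := by
    refine Summable.of_norm ?_
    simp only [norm_mul, norm_e, mul_one]
    exact hs.prod_symm
  have h2 : ∀ q, HasSum (fun d => fc2 B d q * e d s * e q x) (fc (B s) q * e q x) := fun q => by
    refine HasSum.mul_right (e q x) ?_
    refine hasSum_fc (continuous_fc (spk_continuous hB) q) (periodic_fc hB q) ?_ s
    exact hs.prod_symm.prod_factor q
  have h3 := hsum.hasSum.prod_fiberwise h2
  have h4 := hasSum_fc_of_smooth (spk_right hB s) (hB.2.2 s) x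
  have h5 := hsum.hasSum
  rw [h3.unique h4] at h5
  exact (Equiv.prodComm ℤ ℤ).hasSum_iff.1 h5

end NysLog

end

noncomputable section

namespace NysLog

open Complex (I)
open scoped Real

/-! ### Expansion of the logarithmic kernels -/

/-- `c` holds the Fourier data of the pair `V₁`, `V₂` in the variables `(s, x) = (s, s − t)`. The
principal parts `α·ci·ell` of `V₁` and `1` of `V₂` are split off, and the factor `e(qx) − 1`
records that the coefficient of the logarithm in `V₁` is constant on the diagonal. -/
structure Rep (V1 V2 : ℝ → ℝ → ℂ) (α : ℂ) (c : Coef) : Prop where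
  hV1 : ∀ s t, HasSum (fun i : ℤ × ℤ => e i.1 s * (c.a1 i * (e i.2 (s - t) - 1) * ell (s - t)
    + c.b1 i * e i.2 (s - t))) (V1 s t - α * ci * ell (s - t))
  hV2 : ∀ s t, HasSum (fun i : ℤ × ℤ => e i.1 s * (c.a2 i * e i.2 (s - t) * ell (s - t)
    + c.b2 i * e i.2 (s - t))) (V2 s t - 1)
  int1 : ∀ s, IntervalIntegrable (V1 s) MeasureTheory.volume 0 1
  int2 : ∀ s, IntervalIntegrable (V2 s) MeasureTheory.volume 0 1
  dec : ∀ k : ℕ, Summable fun i => c.nrm i * jw i ^ k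

lemma logKer_eq (A K : ℝ → ℝ → ℂ) (s t : ℝ) :
    logKer A K s t = ci * A s t * (ell (s - t) - Real.log 4) + K s t := by
  unfold logKer ci ell; push_cast; ring

lemma logKer_intervalIntegrable {A K : ℝ → ℝ → ℂ} (hA : SPK A) (hK : SPK K) (s : ℝ) :
    IntervalIntegrable (logKer A K s) MeasureTheory.volume 0 1 := by
  have h1 : IntervalIntegrable (fun t => (ell (s - t) : ℂ)) MeasureTheory.volume 0 1 := by
    have h := (ellC_mul_intervalIntegrable (fun _ => 1) continuous_const s (s - 1)).comp_sub_left s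
    simpa using h
  have hAs := (spk_right hA s).continuous
  have hKs := (spk_right hK s).continuous
  have h2 := ((h1.sub (intervalIntegrable_const (c := ((Real.log 4 : ℝ) : ℂ)))).continuousOn_mul
    (continuous_const.mul hAs : Continuous fun t => ci * A s t).continuousOn).add
      (hKs.intervalIntegrable 0 1)
  exact h2.congr (fun t _ => (logKer_eq A K s t).symm)

lemma exists_rep {A1 K1 A2 K2 : ℝ → ℝ → ℂ} (hA1 : SPK A1) (hK1 : SPK K1) (hA2 : SPK A2)
    (hK2 : SPK K2) {α : ℂ} (hdiag : ∀ s : ℝ, A1 s s = α) :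
    ∃ c, Rep (logKer A1 K1) (logKer A2 K2) α c := by
  have sA1 := spk_shear hA1
  have sA2 := spk_shear hA2
  have sK1 := spk_shear hK1
  have sK2 := spk_shear hK2
  have h1 := spk_const_mul ci (spk_sub sA1 (spk_const α))
  have h2 := spk_sub sK1 (spk_const_mul (ci * Real.log 4) sA1)
  have h3 := spk_const_mul ci sA2
  have h4 := spk_sub (spk_sub sK2 (spk_const_mul (ci * Real.log 4) sA2)) (spk_const 1)
  refine ⟨⟨fun i => fc2 (fun s t => ci * (A1 s (s - t) - α)) i.1 i.2,
    fun i => fc2 (fun s t => K1 s (s - t) - ci * Real.log 4 * A1 s (s - t)) i.1 i.2,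
    fun i => fc2 (fun s t => ci * A2 s (s - t)) i.1 i.2,
    fun i => fc2 (fun s t => K2 s (s - t) - ci * Real.log 4 * A2 s (s - t) - 1) i.1 i.2⟩, ⟨fun s t => ?_, fun s t => ?_,
    logKer_intervalIntegrable hA1 hK1, logKer_intervalIntegrable hA2 hK2, fun k => ?_⟩⟩
  pick_goal 3
  · have := ((((fc2_summable k h1).add (fc2_summable k h2)).add (fc2_summable k h3)).add
      (fc2_summable k h4))
    refine this.congr fun i => ?_
    simp only [Coef.nrm]; ring
  · have H1 := ((hasSum_fc2 h1 s (s - t)).sub (hasSum_fc2 h1 s 0)).mul_right (ell (s - t) : ℂ)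
    have H2 := H1.add (hasSum_fc2 h2 s (s - t))
    have he : ((ci * (A1 s (s - (s - t)) - α) - ci * (A1 s (s - 0) - α)) * (ell (s - t) : ℂ) +
        (K1 s (s - (s - t)) - ci * Real.log 4 * A1 s (s - (s - t)))) =
        logKer A1 K1 s t - α * ci * ell (s - t) := by
      rw [logKer_eq, sub_zero, hdiag, sub_sub_cancel]; ring
    rw [he] at H2
    refine hasSum_of_eq H2 fun i => ?_
    simp only [e_zero_arg]; ring
  · have H1 := (hasSum_fc2 h3 s (s - t)).mul_right (ell (s - t) : ℂ)
    have H2 := H1.add (hasSum_fc2 h4 s (s - t))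
    have he : (ci * A2 s (s - (s - t))) * (ell (s - t) : ℂ) +
        (K2 s (s - (s - t)) - ci * Real.log 4 * A2 s (s - (s - t)) - 1) =
        logKer A2 K2 s t - 1 := by
      rw [logKer_eq, sub_sub_cancel]; ring
    rw [he] at H2
    refine hasSum_of_eq H2 fun i => ?_
    ring

end NysLog

end

noncomputable section

namespace NysLog

open Complex (I)
open scoped Real

/-! ### The Nyström matrix on characters -/

lemma periodic_val {N : ℕ} [NeZero N] {G : ℤ → ℂ} (hG : Function.Periodic G (N:ℤ)) (j : ℤ) :
    G (((j : ZMod N).val : ℕ) : ℤ) = G j := by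
  rw [ZMod.val_intCast]
  have h := hG.int_mul (j / N) (j % N)
  rw [← h]
  congr 1
  have := Int.emod_add_mul_ediv j N
  simp only [Int.cast_id]
  linarith

lemma sum_zmod_eq_range {N : ℕ} [NeZero N] (H : ZMod N → ℂ) :
    ∑ z : ZMod N, H z = ∑ j ∈ Finset.range N, H ((j : ℤ) : ZMod N) := by
  refine Finset.sum_nbij' (fun z => z.val) (fun j => ((j : ℤ) : ZMod N)) ?_ ?_ ?_ ?_ ?_
  · intro z _; simpa using ZMod.val_lt z
  · intro j _; simp
  · intro z _; simp
  · intro j hj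
    simpa using ZMod.val_natCast_of_lt (Finset.mem_range.1 hj)
  · intro z _; simp

lemma sum_zmod_reflect {N : ℕ} [NeZero N] {G : ℤ → ℂ} (hG : Function.Periodic G (N:ℤ)) (i : ℤ) :
    ∑ z : ZMod N, G ((z.val : ℕ) : ℤ) = ∑ j ∈ Finset.range N, G (i - j) := by
  rw [← Equiv.sum_comp (Equiv.subLeft ((i : ℤ) : ZMod N))
    (fun z : ZMod N => G ((z.val : ℕ) : ℤ)), sum_zmod_eq_range]
  refine Finset.sum_congr rfl fun j _ => ?_
  rw [Equiv.subLeft_apply, ← Int.cast_sub, periodic_val hG]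

lemma sum_zmod_shift {N : ℕ} [NeZero N] {G : ℤ → ℂ} (hG : Function.Periodic G (N:ℤ)) :
    ∑ z : ZMod N, G ((z.val : ℕ) + 1) = ∑ z : ZMod N, G ((z.val : ℕ) : ℤ) := by
  rw [← Equiv.sum_comp (Equiv.addRight (1 : ZMod N)) (fun z : ZMod N => G ((z.val : ℕ) : ℤ))]
  refine Finset.sum_congr rfl fun z _ => ?_
  have h := periodic_val hG (((z.val : ℕ) : ℤ) + 1)
  rw [Equiv.coe_addRight, ← h]
  congr 3
  simp

/-- The `m`-th discrete Fourier coefficient on the shifted grid. -/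
def mom (ε : ℝ) (N : ℕ) (m : ℤ) (f : ℝ → ℂ) : ℂ :=
  (1 / (N:ℂ)) * ∑ j ∈ Finset.range N, f ((j + ε) / N) * e (-m) ((j + ε) / N)

lemma mom_ell (ε : ℝ) (N : ℕ) [NeZero N] (m q : ℤ) :
    mom ε N m (fun x => e q x * ell x) = lS ε N (m - q) := by
  rw [mom, lS, if_neg (NeZero.ne N)]
  congr 1; refine Finset.sum_congr rfl fun j _ => ?_
  rw [show -(m - q) = q + -m by ring, e_add]; ring

lemma mom_one (ε : ℝ) (N : ℕ) [NeZero N] (m q : ℤ) :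
    mom ε N m (e q) = dS ε N (m - q) := by
  rw [mom, dS, if_neg (NeZero.ne N)]
  congr 1; refine Finset.sum_congr rfl fun j _ => ?_
  rw [show -(m - q) = q + -m by ring, e_add]

lemma mom_add (ε : ℝ) (N : ℕ) (m : ℤ) (f g : ℝ → ℂ) :
    mom ε N m (fun x => f x + g x) = mom ε N m f + mom ε N m g := by
  simp only [mom, add_mul, Finset.sum_add_distrib, mul_add]

lemma mom_sub (ε : ℝ) (N : ℕ) (m : ℤ) (f g : ℝ → ℂ) :
    mom ε N m (fun x => f x - g x) = mom ε N m f - mom ε N m g := by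
  simp only [mom, sub_mul, Finset.sum_sub_distrib, mul_sub]

lemma mom_const_mul (ε : ℝ) (N : ℕ) (m : ℤ) (z : ℂ) (f : ℝ → ℂ) :
    mom ε N m (fun x => z * f x) = z * mom ε N m f := by
  simp only [mom, mul_assoc, ← Finset.mul_sum]; ring

/-- A discrete convolution acts on characters as a multiplier; `σ` is the offset of the grid. -/
lemma disc_conv (ε σ : ℝ) (N : ℕ) [NeZero N] (m i : ℤ) (f : ℝ → ℂ) (hf : Function.Periodic f 1) :
    (1 / (N:ℂ)) * ∑ z : ZMod N, f ((i + σ + ε) / N - (((z.val : ℕ) : ℤ) + σ) / N)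
        * e m ((((z.val : ℕ) : ℤ) + σ) / N) = e m ((i + σ + ε) / N) * mom ε N m f := by
  have hN : (N:ℝ) ≠ 0 := NeZero.ne _
  have hG : Function.Periodic (fun j : ℤ => f ((i + σ + ε) / N - (j + σ) / N) * e m ((j + σ) / N))
      (N:ℤ) := fun j => by
    have h1 : (((j + (N:ℤ) : ℤ) : ℝ) + σ) / N = (j + σ) / N + 1 := by
      push_cast; field_simp; ring
    simp only
    rw [h1, e_periodic m _, ← hf ((i + σ + ε) / N - ((j + σ) / N + 1))]
    congr 2; ring
  have h := sum_zmod_reflect hG i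
  rw [h, mom, mul_left_comm, Finset.mul_sum (a := e m _)]
  congr 1; refine Finset.sum_congr rfl fun j _ => ?_
  have h1 : ((i:ℝ) + σ + ε) / N - (((i - (j:ℤ) : ℤ) : ℝ) + σ) / N = (j + ε) / N := by
    push_cast; ring
  have h2 : (((i - (j:ℤ) : ℤ) : ℝ) + σ) / N = ((i:ℝ) + σ + ε) / N - (j + ε) / N := by
    push_cast; ring
  rw [h1, h2, e_sub_arg]; ring

lemma ell_periodic' : Function.Periodic (fun x => (ell x : ℂ)) 1 := fun x => by
  simp only; rw [ell_periodic x]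

/-- Index-wise form of `V₁`. -/
def f1 (c : Coef) (i : ℤ × ℤ) (x : ℝ) : ℂ := c.a1 i * (e i.2 x - 1) * ell x + c.b1 i * e i.2 x

/-- Index-wise form of `V₂`. -/
def f2 (c : Coef) (i : ℤ × ℤ) (x : ℝ) : ℂ := c.a2 i * e i.2 x * ell x + c.b2 i * e i.2 x

lemma f1_periodic (c : Coef) (i : ℤ × ℤ) : Function.Periodic (f1 c i) 1 := fun x => by
  unfold f1; rw [e_periodic _ x, ell_periodic x]

lemma f2_periodic (c : Coef) (i : ℤ × ℤ) : Function.Periodic (f2 c i) 1 := fun x => by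
  unfold f2; rw [e_periodic _ x, ell_periodic x]

lemma mom_f1 (c : Coef) (i : ℤ × ℤ) (ε : ℝ) (N : ℕ) [NeZero N] (m : ℤ) : mom ε N m (f1 c i) =
    c.a1 i * (lS ε N (m - i.2) - lS ε N m) + c.b1 i * dS ε N (m - i.2) := by
  have h : f1 c i = fun x => c.a1 i * (e i.2 x * ell x - e 0 x * ell x) + c.b1 i * e i.2 x := by
    ext x; rw [f1, e_zero]; ring
  rw [h, mom_add, mom_const_mul, mom_const_mul, mom_sub, mom_ell, mom_ell, mom_one, sub_zero]

lemma mom_f2 (c : Coef) (i : ℤ × ℤ) (ε : ℝ) (N : ℕ) [NeZero N] (m : ℤ) : mom ε N m (f2 c i) =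
    c.a2 i * lS ε N (m - i.2) + c.b2 i * dS ε N (m - i.2) := by
  have h : f2 c i = fun x => c.a2 i * (e i.2 x * ell x) + c.b2 i * e i.2 x := by
    ext x; rw [f2]; ring
  rw [h, mom_add, mom_const_mul, mom_const_mul, mom_ell, mom_one]

/-- The quadrature sum of a kernel expanded in characters. -/
lemma disc_hasSum {U : ℝ → ℝ → ℂ} {f : ℤ × ℤ → ℝ → ℂ} (hf : ∀ i, Function.Periodic (f i) 1)
    (hU : ∀ s t, HasSum (fun i : ℤ × ℤ => e i.1 s * f i (s - t)) (U s t))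
    (ε σ : ℝ) (N : ℕ) [NeZero N] (m i : ℤ) :
    HasSum (fun k : ℤ × ℤ => e (m + k.1) ((i + σ + ε) / N) * mom ε N m (f k))
      ((1 / (N:ℂ)) * ∑ z : ZMod N, U ((i + σ + ε) / N) ((((z.val : ℕ) : ℤ) + σ) / N)
        * e m ((((z.val : ℕ) : ℤ) + σ) / N)) := by
  have h := (hasSum_sum (s := Finset.univ) fun (z : ZMod N) _ =>
    (hU ((i + σ + ε) / N) ((((z.val : ℕ) : ℤ) + σ) / N)).mul_right
      (e m ((((z.val : ℕ) : ℤ) + σ) / N))).mul_left (1 / (N:ℂ))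
  refine hasSum_of_eq h fun k => ?_
  have h2 := disc_conv ε σ N m i (f k) (hf k)
  rw [e_add, mul_right_comm, ← h2]
  simp only [mul_assoc, Finset.sum_mul, Finset.mul_sum]
  refine Finset.sum_congr rfl fun z _ => ?_
  ring

lemma gS_diff (N : ℕ) [NeZero N] (m : ℤ) (x : ℝ) :
    e m (x + 1 / 2 / N) - e m (x - 1 / 2 / N) = I * gS N m / N * e m x := by
  have hN : (N:ℂ) ≠ 0 := NeZero.ne _
  have h1 : e m (1 / 2 / N) - e (-m) (1 / 2 / N) = I * gS N m / N := by
    rw [gS, if_neg (NeZero.ne N)]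
    have h2 : e m (1 / 2 / N) = Complex.exp (((π * m / N : ℝ) : ℂ) * I) := by
      rw [e]; congr 1; push_cast; field_simp
    have h3 : e (-m) (1 / 2 / N) = Complex.exp (-((π * m / N : ℝ) : ℂ) * I) := by
      rw [e]; congr 1; push_cast; field_simp
    rw [h2, h3]
    push_cast
    have h4 := Complex.two_sin (x := (π * m / N : ℂ))
    have h5 : 2 * (N:ℂ) * Complex.sin (π * m / N) = N * (2 * Complex.sin (π * m / N)) := by ring
    rw [h5, h4]
    field_simp
    rw [Complex.I_sq]; ring
  rw [e_add_arg, e_sub_arg, ← h1]; ring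

end NysLog

end

noncomputable section

namespace NysLog

open Complex (I)
open scoped Real

lemma sg_eq (N : ℕ) (ε : ℝ) (j : ℤ) : sg (1 / (N:ℝ)) ε j = (j + (-(1/2)) + ε) / N := by
  unfold sg; ring

lemma sg_eq0 (N : ℕ) (j : ℤ) : sg (1 / (N:ℝ)) 0 j = (j + (-(1/2))) / N := by
  unfold sg; ring

lemma tg_eq (N : ℕ) (ε : ℝ) (j : ℤ) : tg (1 / (N:ℝ)) ε j = (j + 0 + ε) / N := by
  unfold tg; ring

lemma tg_eq0 (N : ℕ) (j : ℤ) : tg (1 / (N:ℝ)) 0 j = (j + 0) / N := by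
  unfold tg; ring

variable {V1 V2 : ℝ → ℝ → ℂ} {α : ℂ} {c : Coef}

lemma Rep.periodic1 (R : Rep V1 V2 α c) (s t : ℝ) : V1 s (t + 1) = V1 s t := by
  have h1 := R.hV1 s (t + 1)
  have h2 := R.hV1 s t
  have ha : ell (s - (t + 1)) = ell (s - t) := by
    rw [← ell_periodic (s - (t + 1))]; congr 1; ring
  have hb : ∀ q, e q (s - (t + 1)) = e q (s - t) := fun q => by
    rw [← e_periodic q (s - (t + 1))]; congr 1; ring
  simp only [ha, hb] at h1
  have := h1.unique h2
  exact sub_left_injective this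

/-- Summation by parts turns the second difference of `V₁` into the product of two central
differences. -/
lemma disc_parts (R : Rep V1 V2 α c) (ε : ℝ) (N : ℕ) [NeZero N] (m i : ℤ) :
    (N:ℂ) * ∑ z : ZMod N, Wmat V1 V2 (1 / (N:ℝ)) ε i ((z.val : ℕ) : ℤ)
        * e m (tg (1 / (N:ℝ)) 0 ((z.val : ℕ) : ℤ)) =
      -(I * gS N m * N) *
        ((1 / (N:ℂ)) * (∑ z : ZMod N, V1 (sg (1 / (N:ℝ)) ε (i + 1)) (sg (1 / (N:ℝ)) 0 ((z.val : ℕ) : ℤ))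
          * e m (sg (1 / (N:ℝ)) 0 ((z.val : ℕ) : ℤ))) -
        (1 / (N:ℂ)) * (∑ z : ZMod N, V1 (sg (1 / (N:ℝ)) ε i) (sg (1 / (N:ℝ)) 0 ((z.val : ℕ) : ℤ))
          * e m (sg (1 / (N:ℝ)) 0 ((z.val : ℕ) : ℤ)))) +
        (1 / (N:ℂ)) * ∑ z : ZMod N, V2 (tg (1 / (N:ℝ)) ε i) (tg (1 / (N:ℝ)) 0 ((z.val : ℕ) : ℤ))
          * e m (tg (1 / (N:ℝ)) 0 ((z.val : ℕ) : ℤ)) := by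
  have hN : (N:ℂ) ≠ 0 := NeZero.ne _
  have hNr : (N:ℝ) ≠ 0 := NeZero.ne _
  set h : ℝ := 1 / (N:ℝ) with hh
  have hper : ∀ (ε' : ℝ) (j : ℤ), sg h ε' (j + (N:ℤ)) = sg h ε' j + 1 := fun ε' j => by
    rw [hh]; unfold sg; push_cast; field_simp; ring
  have hG : Function.Periodic (fun j : ℤ => (V1 (sg h ε (i + 1)) (sg h 0 j) - V1 (sg h ε i) (sg h 0 j))
      * e m (sg h 0 j - 1 / 2 / N)) (N:ℤ) := fun j => by
    simp only
    rw [hper, R.periodic1, R.periodic1, show sg h 0 j + 1 - 1 / 2 / (N:ℝ) = sg h 0 j - 1 / 2 / N + 1 by ring,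
      e_periodic m _]
  have hs := sum_zmod_shift hG
  have e1 : ∀ j : ℤ, sg h 0 (j + 1) - 1 / 2 / N = tg h 0 j := fun j => by
    rw [hh]; unfold sg tg; push_cast; field_simp; ring
  have e2 : ∀ j : ℤ, tg h 0 j = sg h 0 j + 1 / 2 / N := fun j => by
    rw [hh]; unfold sg tg; field_simp; ring
  simp only [e1] at hs
  have key : ∑ z : ZMod N, Wmat V1 V2 h ε i ((z.val : ℕ) : ℤ) * e m (tg h 0 ((z.val : ℕ) : ℤ)) =
      ∑ z : ZMod N, ((V1 (sg h ε (i + 1)) (sg h 0 ((z.val : ℕ) : ℤ)) - V1 (sg h ε i) (sg h 0 ((z.val : ℕ) : ℤ)))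
        * (-(I * gS N m / N * e m (sg h 0 ((z.val : ℕ) : ℤ))))
      + (h:ℂ) ^ 2 * V2 (tg h ε i) (tg h 0 ((z.val : ℕ) : ℤ)) * e m (tg h 0 ((z.val : ℕ) : ℤ))) := by
    have : ∀ z : ZMod N, Wmat V1 V2 h ε i ((z.val : ℕ) : ℤ) * e m (tg h 0 ((z.val : ℕ) : ℤ)) =
        (V1 (sg h ε (i + 1)) (sg h 0 (((z.val : ℕ) : ℤ) + 1)) - V1 (sg h ε i) (sg h 0 (((z.val : ℕ) : ℤ) + 1)))
          * e m (tg h 0 ((z.val : ℕ) : ℤ)) +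
        ((-(V1 (sg h ε (i + 1)) (sg h 0 ((z.val : ℕ) : ℤ)) - V1 (sg h ε i) (sg h 0 ((z.val : ℕ) : ℤ))))
          * e m (tg h 0 ((z.val : ℕ) : ℤ)) +
        (h:ℂ) ^ 2 * V2 (tg h ε i) (tg h 0 ((z.val : ℕ) : ℤ)) * e m (tg h 0 ((z.val : ℕ) : ℤ))) := fun z => by
      unfold Wmat; ring
    simp only [this]
    rw [Finset.sum_add_distrib, hs, ← Finset.sum_add_distrib]
    refine Finset.sum_congr rfl fun z _ => ?_
    rw [← gS_diff, ← e2]; ring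
  rw [key, Finset.sum_add_distrib]
  have hc : (h:ℂ) = 1 / (N:ℂ) := by rw [hh]; push_cast; rfl
  simp only [Finset.mul_sum, mul_add, mul_sub, ← Finset.sum_sub_distrib, hc]
  congr 1
  · refine Finset.sum_congr rfl fun z _ => ?_
    field_simp
    ring
  · refine Finset.sum_congr rfl fun z _ => ?_
    field_simp

/-- The Nyström matrix acts on the grid values of `e_m` through the symbols `pS` and `kS`. -/
lemma disc_main (R : Rep V1 V2 α c) (ε : ℝ) (N : ℕ) [NeZero N] (m i : ℤ) :
    HasSum (fun k : ℤ × ℤ => kS c ε N k m * e (m + k.1) (tg (1 / (N:ℝ)) ε i))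
      ((N:ℂ) * ∑ z : ZMod N, Wmat V1 V2 (1 / (N:ℝ)) ε i ((z.val : ℕ) : ℤ)
        * e m (tg (1 / (N:ℝ)) 0 ((z.val : ℕ) : ℤ)) - pS α ε N m * e m (tg (1 / (N:ℝ)) ε i)) := by
  have hN : (N:ℂ) ≠ 0 := NeZero.ne _
  rw [disc_parts R]
  have H1 : ∀ a : ℤ, HasSum (fun k : ℤ × ℤ => e (m + k.1) (sg (1 / (N:ℝ)) ε a) * mom ε N m (f1 c k))
      ((1 / (N:ℂ)) * (∑ z : ZMod N, V1 (sg (1 / (N:ℝ)) ε a) (sg (1 / (N:ℝ)) 0 ((z.val : ℕ) : ℤ))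
          * e m (sg (1 / (N:ℝ)) 0 ((z.val : ℕ) : ℤ))) - α * ci * (e m (sg (1 / (N:ℝ)) ε a) * lS ε N m)) := by
    intro a
    have h := disc_hasSum (f := f1 c) (f1_periodic c) R.hV1 ε (-(1/2)) N m a
    have h2 := disc_conv ε (-(1/2)) N m a _ ell_periodic'
    have h3 : mom ε N m (fun x => (ell x : ℂ)) = lS ε N m := by
      have := mom_ell ε N m 0
      simpa [e_zero] using this
    rw [h3] at h2
    simp only [sg_eq0, fun a => sg_eq N ε a]
    rw [← h2]
    refine (congrArg (HasSum _) ?_).mp h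
    simp only [sub_mul, Finset.sum_sub_distrib, mul_sub, Finset.mul_sum]
    congr 1
    refine Finset.sum_congr rfl fun z _ => ?_
    ring
  have H2 : HasSum (fun k : ℤ × ℤ => e (m + k.1) (tg (1 / (N:ℝ)) ε i) * mom ε N m (f2 c k))
      ((1 / (N:ℂ)) * (∑ z : ZMod N, V2 (tg (1 / (N:ℝ)) ε i) (tg (1 / (N:ℝ)) 0 ((z.val : ℕ) : ℤ))
          * e m (tg (1 / (N:ℝ)) 0 ((z.val : ℕ) : ℤ))) - (e m (tg (1 / (N:ℝ)) ε i) * dS ε N m)) := by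
    have h := disc_hasSum (f := f2 c) (f2_periodic c) R.hV2 ε 0 N m i
    have h2 := disc_conv ε 0 N m i _ (e_periodic 0)
    rw [mom_one, sub_zero] at h2
    simp only [tg_eq0, fun a => tg_eq N ε a]
    rw [← h2]
    refine (congrArg (HasSum _) ?_).mp h
    simp only [sub_mul, Finset.sum_sub_distrib, mul_sub, e_zero]
  have e1 : ∀ n, e n (sg (1 / (N:ℝ)) ε (i + 1)) - e n (sg (1 / (N:ℝ)) ε i) =
      I * gS N n / N * e n (tg (1 / (N:ℝ)) ε i) := fun n => by
    rw [← gS_diff]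
    congr 2 <;> (unfold sg tg; push_cast; ring)
  have H := (((H1 (i + 1)).sub (H1 i)).mul_left (-(I * gS N m * N))).add H2
  have hII : I * I = -1 := Complex.I_mul_I
  refine (congrArg (HasSum _) ?_).mp (hasSum_of_eq H fun k => ?_)
  · have h := e1 m
    have h' : e m (sg (1 / (N:ℝ)) ε (i + 1)) = e m (sg (1 / (N:ℝ)) ε i) +
      I * gS N m / N * e m (tg (1 / (N:ℝ)) ε i) := by rw [← h]; ring
    rw [h', pS]
    field_simp
    ring_nf
    rw [Complex.I_sq]; ring
  · have h := e1 (m + k.1)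
    have h' : e (m + k.1) (sg (1 / (N:ℝ)) ε (i + 1)) = e (m + k.1) (sg (1 / (N:ℝ)) ε i) +
      I * gS N (m + k.1) / N * e (m + k.1) (tg (1 / (N:ℝ)) ε i) := by rw [← h]; ring
    rw [h', kS, mom_f1, mom_f2]
    field_simp
    ring_nf
    rw [Complex.I_sq]; ring

end NysLog

end

noncomputable section

namespace NysLog

open Complex (I)
open scoped Real
open MeasureTheory

/-! ### The hypersingular operator on Fourier series -/

/-- Termwise integration over `[0,1]`. -/
lemma hasSum_integral01 {ι : Type} [Countable ι] {F : ι → ℝ → ℂ} {G : ℝ → ℂ}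
    (hF : ∀ i, IntervalIntegrable (F i) volume 0 1) {b : ι → ℝ} (hb : Summable b)
    (hle : ∀ i, ∫ t in (0:ℝ)..1, ‖F i t‖ ≤ b i) (hG : ∀ t, HasSum (fun i => F i t) (G t)) :
    HasSum (fun i => ∫ t in (0:ℝ)..1, F i t) (∫ t in (0:ℝ)..1, G t) := by
  simp only [intervalIntegral.integral_of_le zero_le_one] at *
  have h := hasSum_integral_of_summable_integral_norm (μ := volume.restrict (Set.Ioc (0:ℝ) 1))
    (F := F) (fun i => (hF i).1)
    (Summable.of_nonneg_of_le (fun i => integral_nonneg fun _ => norm_nonneg _) hle hb)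
  simpa only [fun t => (hG t).tsum_eq] using h

/-- `∫₀¹ |ell|`. -/
def Lc : ℝ := ∫ x in (0:ℝ)..1, |ell x|

lemma Lc_nonneg : 0 ≤ Lc := intervalIntegral.integral_nonneg zero_le_one fun _ _ => abs_nonneg _

/-- Index-wise kernels of the form `A·ell + B` with continuous periodic `A`, `B`. -/
structure LogTerm (f : ℝ → ℂ) (n : ℝ) : Prop where
  per : Function.Periodic f 1
  ex : ∃ A B : ℝ → ℂ, Continuous A ∧ Continuous B ∧ (∀ x, ‖A x‖ ≤ 2 * n) ∧ (∀ x, ‖B x‖ ≤ n) ∧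
    ∀ x, f x = ell x * A x + B x

lemma LogTerm.integrable {f : ℝ → ℂ} {n : ℝ} (h : LogTerm f n) (a b : ℝ) :
    IntervalIntegrable f volume a b := by
  obtain ⟨A, B, hA, hB, -, -, hf⟩ := h.ex
  exact ((ellC_mul_intervalIntegrable A hA a b).add (hB.intervalIntegrable a b)).congr
    fun x _ => (hf x).symm

lemma LogTerm.norm_integral_le {f : ℝ → ℂ} {n : ℝ} (h : LogTerm f n) :
    ∫ x in (0:ℝ)..1, ‖f x‖ ≤ (2 * Lc + 1) * n := by
  have hi := (h.integrable 0 1).norm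
  obtain ⟨A, B, hA, hB, hA', hB', hf⟩ := h.ex
  have hn : 0 ≤ n := (norm_nonneg _).trans (hB' 0)
  have h1 : IntervalIntegrable (fun x => 2 * n * |ell x| + n) volume 0 1 :=
    ((ell_intervalIntegrable 0 1).abs.const_mul _).add intervalIntegrable_const
  calc ∫ x in (0:ℝ)..1, ‖f x‖ ≤ ∫ x in (0:ℝ)..1, (2 * n * |ell x| + n) := by
        refine intervalIntegral.integral_mono zero_le_one hi h1 fun x => ?_
        simp only
        rw [hf x]
        refine (norm_add_le _ _).trans ?_
        rw [norm_mul, Complex.norm_real, Real.norm_eq_abs]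
        have := hA' x
        have := hB' x
        have := mul_le_mul_of_nonneg_left (hA' x) (abs_nonneg (ell x))
        linarith
    _ = _ := by
        rw [intervalIntegral.integral_add ((ell_intervalIntegrable 0 1).abs.const_mul _)
          intervalIntegrable_const, intervalIntegral.integral_const_mul]
        simp [Lc]; ring

lemma integral_reflect {E : Type} [NormedAddCommGroup E] [NormedSpace ℝ E] {f : ℝ → E}
    (hf : Function.Periodic f 1) (s : ℝ) :
    ∫ t in (0:ℝ)..1, f (s - t) = ∫ x in (0:ℝ)..1, f x := by
  rw [intervalIntegral.integral_comp_sub_left f s]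
  have := hf.intervalIntegral_add_eq (s - 1) 0
  rw [sub_add_cancel, zero_add] at this
  rw [sub_zero, this]

lemma cont_hasSum {U : ℝ → ℝ → ℂ} {f : ℤ × ℤ → ℝ → ℂ} {n : ℤ × ℤ → ℝ} (hn : Summable n)
    (hf : ∀ i, LogTerm (f i) (n i)) (s : ℝ)
    (hU : ∀ t, HasSum (fun i : ℤ × ℤ => e i.1 s * f i (s - t)) (U s t)) (m : ℤ) :
    HasSum (fun k : ℤ × ℤ => e (m + k.1) s * ∫ x in (0:ℝ)..1, f k x * e (-m) x)
      (∫ t in (0:ℝ)..1, U s t * e m t) := by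
  have h := hasSum_integral01 (F := fun (k : ℤ × ℤ) t => e k.1 s * f k (s - t) * e m t)
    (b := fun k => (2 * Lc + 1) * n k) (G := fun t => U s t * e m t) (fun k => ?_)
    (hn.mul_left _) (fun k => ?_) (fun t => (hU t).mul_right _)
  · refine hasSum_of_eq h fun k => ?_
    simp only [mul_assoc]
    rw [intervalIntegral.integral_const_mul, integral_conv_e _ (hf k).per, e_add]; ring
  · have h1 := ((hf k).integrable s (s - 1)).comp_sub_left s
    simp only [sub_self, sub_sub_cancel] at h1
    exact (h1.const_mul _).mul_continuousOn (continuous_e m).continuousOn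
  · simp only [norm_mul, norm_e, one_mul, mul_one]
    have hp : Function.Periodic (fun x => ‖f k x‖) 1 := fun x => by simp only; rw [(hf k).per x]
    rw [integral_reflect hp]
    exact (hf k).norm_integral_le

lemma cont_series {U : ℝ → ℂ} (hU : IntervalIntegrable U volume 0 1) {a : ℤ → ℂ}
    (ha : Summable fun m => ‖a m‖) {φ : ℝ → ℂ} (hφ : ∀ x, HasSum (fun m => a m * e m x) (φ x)) :
    HasSum (fun m => a m * ∫ t in (0:ℝ)..1, U t * e m t) (∫ t in (0:ℝ)..1, U t * φ t) := by
  have h := hasSum_integral01 (F := fun (m : ℤ) t => U t * (a m * e m t))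
    (b := fun m => (∫ t in (0:ℝ)..1, ‖U t‖) * ‖a m‖) (G := fun t => U t * φ t) (fun k => ?_)
    (ha.mul_left _) (fun k => ?_) (fun t => (hφ t).mul_left _)
  · refine hasSum_of_eq h fun m => ?_
    rw [← intervalIntegral.integral_const_mul]
    congr 1; ext t; ring
  · exact hU.mul_continuousOn (continuous_const.mul (continuous_e k)).continuousOn
  · simp only [norm_mul, norm_e, mul_one]
    rw [intervalIntegral.integral_mul_const]

lemma logTerm_f1 (c : Coef) (i : ℤ × ℤ) : LogTerm (f1 c i) (c.nrm i) := by
  refine ⟨f1_periodic c i, fun x => c.a1 i * (e i.2 x - 1), fun x => c.b1 i * e i.2 x,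
    continuous_const.mul ((continuous_e _).sub continuous_const),
    continuous_const.mul (continuous_e _), fun x => ?_, fun x => ?_, fun x => ?_⟩
  · rw [norm_mul]
    have h1 : ‖e i.2 x - 1‖ ≤ 2 := (norm_sub_le _ _).trans (by rw [norm_e]; norm_num)
    have h2 : ‖c.a1 i‖ ≤ c.nrm i := by
      unfold Coef.nrm; linarith [norm_nonneg (c.b1 i), norm_nonneg (c.a2 i), norm_nonneg (c.b2 i)]
    calc _ ≤ c.nrm i * 2 := by gcongr; exact c.nrm_nonneg i
      _ = _ := by ring
  · rw [norm_mul, norm_e, mul_one]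
    unfold Coef.nrm; linarith [norm_nonneg (c.a1 i), norm_nonneg (c.a2 i), norm_nonneg (c.b2 i)]
  · rw [f1]; ring

lemma logTerm_f2 (c : Coef) (i : ℤ × ℤ) : LogTerm (f2 c i) (c.nrm i) := by
  refine ⟨f2_periodic c i, fun x => c.a2 i * e i.2 x, fun x => c.b2 i * e i.2 x,
    continuous_const.mul (continuous_e _),
    continuous_const.mul (continuous_e _), fun x => ?_, fun x => ?_, fun x => ?_⟩
  · rw [norm_mul, norm_e, mul_one]
    have := c.nrm_nonneg i
    have h2 : ‖c.a2 i‖ ≤ c.nrm i := by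
      unfold Coef.nrm; linarith [norm_nonneg (c.b1 i), norm_nonneg (c.a1 i), norm_nonneg (c.b2 i)]
    linarith
  · rw [norm_mul, norm_e, mul_one]
    unfold Coef.nrm; linarith [norm_nonneg (c.a1 i), norm_nonneg (c.a2 i), norm_nonneg (c.b1 i)]
  · rw [f2]; ring

lemma int_ell_e (ε : ℝ) (m q : ℤ) :
    ∫ x in (0:ℝ)..1, (ell x : ℂ) * e q x * e (-m) x = lS ε 0 (m - q) := by
  rw [← integral_ell_e]; congr 1; ext x
  rw [show -(m - q) = q + -m by ring, e_add]; ring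

lemma int_one_e (ε : ℝ) (m q : ℤ) : ∫ x in (0:ℝ)..1, e q x * e (-m) x = dS ε 0 (m - q) := by
  rw [← integral_one_e]; congr 1; ext x
  rw [show -(m - q) = q + -m by ring, e_add]

lemma int_f1 (c : Coef) (i : ℤ × ℤ) (ε : ℝ) (m : ℤ) : ∫ x in (0:ℝ)..1, f1 c i x * e (-m) x =
    c.a1 i * (lS ε 0 (m - i.2) - lS ε 0 m) + c.b1 i * dS ε 0 (m - i.2) := by
  have h0 : ∀ q, IntervalIntegrable (fun x => (ell x : ℂ) * e q x * e (-m) x) volume 0 1 := fun q =>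
    (ellC_mul_intervalIntegrable (fun x => e q x * e (-m) x)
      ((continuous_e _).mul (continuous_e _)) 0 1).congr fun x _ => (mul_assoc _ _ _).symm
  have h1 : IntervalIntegrable (fun x => e i.2 x * e (-m) x) volume 0 1 :=
    ((continuous_e _).mul (continuous_e _)).intervalIntegrable _ _
  have h2 : ∀ x, f1 c i x * e (-m) x = c.a1 i * ((ell x : ℂ) * e i.2 x * e (-m) x -
      (ell x : ℂ) * e 0 x * e (-m) x) + c.b1 i * (e i.2 x * e (-m) x) := fun x => by
    rw [f1, e_zero]; ring
  simp only [h2]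
  rw [intervalIntegral.integral_add (((h0 _).sub (h0 _)).const_mul _) (h1.const_mul _),
    intervalIntegral.integral_const_mul, intervalIntegral.integral_const_mul,
    intervalIntegral.integral_sub (h0 _) (h0 _), int_ell_e ε, int_ell_e ε, int_one_e ε, sub_zero]

lemma int_f2 (c : Coef) (i : ℤ × ℤ) (ε : ℝ) (m : ℤ) : ∫ x in (0:ℝ)..1, f2 c i x * e (-m) x =
    c.a2 i * lS ε 0 (m - i.2) + c.b2 i * dS ε 0 (m - i.2) := by
  have h0 : ∀ q, IntervalIntegrable (fun x => (ell x : ℂ) * e q x * e (-m) x) volume 0 1 := fun q =>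
    (ellC_mul_intervalIntegrable (fun x => e q x * e (-m) x)
      ((continuous_e _).mul (continuous_e _)) 0 1).congr fun x _ => (mul_assoc _ _ _).symm
  have h1 : IntervalIntegrable (fun x => e i.2 x * e (-m) x) volume 0 1 :=
    ((continuous_e _).mul (continuous_e _)).intervalIntegrable _ _
  have h2 : ∀ x, f2 c i x * e (-m) x = c.a2 i * ((ell x : ℂ) * e i.2 x * e (-m) x)
      + c.b2 i * (e i.2 x * e (-m) x) := fun x => by
    rw [f2]; ring
  simp only [h2]
  rw [intervalIntegral.integral_add ((h0 _).const_mul _) (h1.const_mul _),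
    intervalIntegral.integral_const_mul, intervalIntegral.integral_const_mul,
    int_ell_e ε, int_one_e ε]

end NysLog

end

noncomputable section

namespace NysLog

open Complex (I)
open scoped Real
open MeasureTheory

lemma gS_zero_left' (n : ℤ) : (2 * π * I * n : ℂ) = I * gS 0 n := by
  rw [gS, if_pos rfl]; push_cast; ring

/-- Termwise differentiation of a series of characters. -/
lemma hasDerivAt_tsum_e {J : Type} (w : J → ℂ) (n : J → ℤ) (h : Summable fun j => ‖w j‖ * jb (n j))
    (s : ℝ) : HasDerivAt (fun s => ∑' j, w j * e (n j) s) (∑' j, w j * (I * gS 0 (n j)) * e (n j) s) s := by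
  refine hasDerivAt_tsum (𝕜 := ℝ) (F := ℂ) (u := fun j => 7 * (‖w j‖ * jb (n j)))
    (g := fun j y => w j * e (n j) y) (g' := fun j y => w j * (I * gS 0 (n j)) * e (n j) y)
    (h.mul_left 7) (fun j y => ?_) (fun j y => ?_) (y₀ := 0) ?_ s
  · have := (hasDerivAt_e (n j) y).const_mul (w j)
    rw [gS_zero_left'] at this
    rwa [mul_assoc]
  · rw [norm_mul, norm_e, mul_one, norm_mul, norm_mul, Complex.norm_I, one_mul, Complex.norm_real,
      Real.norm_eq_abs]
    have := abs_gS_le' 0 (n j)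
    calc _ ≤ ‖w j‖ * (7 * jb (n j)) := by gcongr
      _ = _ := by ring
  · refine Summable.of_norm_bounded h fun j => ?_
    rw [norm_mul, norm_e]
    gcongr; exact one_le_jb _

variable {V1 V2 : ℝ → ℝ → ℂ} {α : ℂ} {c : Coef}

/-- The symbol of `V₁` without the principal part. -/
def M1 (c : Coef) (ε : ℝ) (k : ℤ × ℤ) (m : ℤ) : ℂ :=
  c.a1 k * (lS ε 0 (m - k.2) - lS ε 0 m) + c.b1 k * dS ε 0 (m - k.2)

/-- The symbol of `V₂` without the principal part. -/
def M2 (c : Coef) (ε : ℝ) (k : ℤ × ℤ) (m : ℤ) : ℂ :=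
  c.a2 k * lS ε 0 (m - k.2) + c.b2 k * dS ε 0 (m - k.2)

lemma norm_M1_le (c : Coef) {ε : ℝ} (hε : ε = 1 / 6 ∨ ε = -(1 / 6)) (k : ℤ × ℤ) (m : ℤ) :
    ‖M1 c ε k m‖ ≤ 16 * c.nrm k := by
  have h1 := norm_lS_le8 hε 0 (m - k.2)
  have h2 := norm_lS_le8 hε 0 m
  have h3 := norm_dS_le1 ε 0 (m - k.2)
  have h4 : ‖lS ε 0 (m - k.2) - lS ε 0 m‖ ≤ 16 := (norm_sub_le _ _).trans (by linarith)
  have h5 := mul_le_mul_of_nonneg_left h4 (norm_nonneg (c.a1 k))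
  have h6 := mul_le_mul_of_nonneg_left h3 (norm_nonneg (c.b1 k))
  unfold M1 Coef.nrm
  refine (norm_add_le _ _).trans ?_
  rw [norm_mul, norm_mul]
  linarith [norm_nonneg (c.b1 k), norm_nonneg (c.a2 k), norm_nonneg (c.b2 k)]

lemma norm_M2_le (c : Coef) {ε : ℝ} (hε : ε = 1 / 6 ∨ ε = -(1 / 6)) (k : ℤ × ℤ) (m : ℤ) :
    ‖M2 c ε k m‖ ≤ 16 * c.nrm k := by
  have h1 := norm_lS_le8 hε 0 (m - k.2)
  have h3 := norm_dS_le1 ε 0 (m - k.2)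
  have h5 := mul_le_mul_of_nonneg_left h1 (norm_nonneg (c.a2 k))
  have h6 := mul_le_mul_of_nonneg_left h3 (norm_nonneg (c.b2 k))
  unfold M2 Coef.nrm
  refine (norm_add_le _ _).trans ?_
  rw [norm_mul, norm_mul]
  linarith [norm_nonneg (c.b1 k), norm_nonneg (c.a2 k), norm_nonneg (c.b2 k), norm_nonneg (c.a1 k)]

lemma Rep.summable_nrm (R : Rep V1 V2 α c) : Summable c.nrm := by simpa using R.dec 0

lemma Rep.conv1 (R : Rep V1 V2 α c) (ε : ℝ) (m : ℤ) (s : ℝ) :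
    HasSum (fun k : ℤ × ℤ => M1 c ε k m * e (m + k.1) s)
      ((∫ t in (0:ℝ)..1, V1 s t * e m t) - α * ci * lS ε 0 m * e m s) := by
  have h := cont_hasSum (U := fun s t => V1 s t - α * ci * ell (s - t)) R.summable_nrm (logTerm_f1 c)
    s (R.hV1 s) m
  have h1 : IntervalIntegrable (fun t => (ell (s - t) : ℂ) * e m t) volume 0 1 := by
    have h := (ellC_mul_intervalIntegrable (fun _ => 1) continuous_const s (s - 1)).comp_sub_left s
    simp only [sub_self, sub_sub_cancel, mul_one] at h
    exact h.mul_continuousOn (continuous_e m).continuousOn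
  have h2 : ∫ t in (0:ℝ)..1, (V1 s t - α * ci * ell (s - t)) * e m t =
      (∫ t in (0:ℝ)..1, V1 s t * e m t) - α * ci * lS ε 0 m * e m s := by
    have : ∀ t, (V1 s t - α * ci * ell (s - t)) * e m t =
      V1 s t * e m t - α * ci * ((ell (s - t) : ℂ) * e m t) := fun t => by ring
    simp only [this]
    rw [intervalIntegral.integral_sub ((R.int1 s).mul_continuousOn (continuous_e m).continuousOn)
      (h1.const_mul _), intervalIntegral.integral_const_mul,
      integral_conv_e (fun x => (ell x : ℂ)) ell_periodic', integral_ell_e ε]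
    ring
  rw [h2] at h
  refine hasSum_of_eq h fun k => ?_
  rw [int_f1 c k ε m, M1]; ring

lemma Rep.conv2 (R : Rep V1 V2 α c) (ε : ℝ) (m : ℤ) (s : ℝ) :
    HasSum (fun k : ℤ × ℤ => M2 c ε k m * e (m + k.1) s)
      ((∫ t in (0:ℝ)..1, V2 s t * e m t) - dS ε 0 m * e m s) := by
  have h := cont_hasSum (U := fun s t => V2 s t - 1) R.summable_nrm (logTerm_f2 c)
    s (R.hV2 s) m
  have h2 : ∫ t in (0:ℝ)..1, (V2 s t - 1) * e m t =
      (∫ t in (0:ℝ)..1, V2 s t * e m t) - dS ε 0 m * e m s := by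
    simp only [sub_mul]
    rw [intervalIntegral.integral_sub ((R.int2 s).mul_continuousOn (continuous_e m).continuousOn)
      (show IntervalIntegrable (fun t => (1:ℂ) * e m t) volume 0 1 from
        (continuous_const.mul (continuous_e m)).intervalIntegrable _ _),
      integral_conv_e (fun x => (1:ℂ)) (fun _ => rfl)]
    simp only [one_mul]
    rw [integral_one_e ε, mul_comm]
  rw [h2] at h
  refine hasSum_of_eq h fun k => ?_
  rw [int_f2 c k ε m, M2]; ring

/-- Summability of a double series of characters dominated by a product. -/
lemma summable_pair {b : ℤ → ℂ} {j r : ℕ} (hb : Summable fun m => ‖b m‖ * jb m ^ j)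
    (hc : Summable fun i => c.nrm i * jw i ^ r) {C : ℝ} {f : ℤ × (ℤ × ℤ) → ℝ} (hf0 : ∀ p, 0 ≤ f p)
    (hf : ∀ p, f p ≤ C * ((‖b p.1‖ * jb p.1 ^ j) * (c.nrm p.2 * jw p.2 ^ r))) : Summable f := by
  refine Summable.of_nonneg_of_le hf0 hf (Summable.mul_left _ ?_)
  refine hb.mul_of_nonneg hc (fun m => ?_) (fun i => ?_)
  · have := jb_pos m; positivity
  · have := one_le_jw i; have := c.nrm_nonneg i; positivity

lemma vop_series {V : ℝ → ℝ → ℂ} (s : ℝ) (hVint : IntervalIntegrable (V s) volume 0 1)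
    {M : ℤ × ℤ → ℤ → ℂ} {P : ℤ → ℂ} {C D : ℝ} (hM : ∀ k m, ‖M k m‖ ≤ C * c.nrm k) (hP : ∀ m, ‖P m‖ ≤ D)
    (hc : Summable c.nrm)
    (hconv : ∀ m, HasSum (fun k : ℤ × ℤ => M k m * e (m + k.1) s)
      ((∫ t in (0:ℝ)..1, V s t * e m t) - P m * e m s))
    {b : ℤ → ℂ} (hb : Summable fun m => ‖b m‖) {ψ : ℝ → ℂ}
    (hψ : ∀ x, HasSum (fun m => b m * e m x) (ψ x)) :
    Vop V ψ s = (∑' m, b m * P m * e m s) +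
      ∑' p : ℤ × (ℤ × ℤ), b p.1 * M p.2 p.1 * e (p.1 + p.2.1) s := by
  have h1 := cont_series hVint hb hψ
  have s1 : Summable fun m => b m * P m * e m s := by
    refine Summable.of_norm_bounded (hb.mul_right D) fun m => ?_
    rw [norm_mul, norm_e, mul_one, norm_mul]
    have := hP m
    gcongr
  have s2 : Summable fun p : ℤ × (ℤ × ℤ) => b p.1 * M p.2 p.1 * e (p.1 + p.2.1) s := by
    refine Summable.of_norm (summable_pair (b := b) (c := c) (j := 0) (r := 0) (C := C)
      (by simpa using hb) (by simpa using hc) (fun _ => norm_nonneg _) fun p => ?_)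
    rw [norm_mul, norm_e, mul_one, norm_mul, pow_zero, pow_zero, mul_one, mul_one]
    have := hM p.2 p.1
    calc _ ≤ ‖b p.1‖ * (C * c.nrm p.2) := by gcongr
      _ = _ := by ring
  have h2 : HasSum (fun m => b m * ((∫ t in (0:ℝ)..1, V s t * e m t) - P m * e m s))
      (∑' p : ℤ × (ℤ × ℤ), b p.1 * M p.2 p.1 * e (p.1 + p.2.1) s) := by
    refine s2.hasSum.prod_fiberwise fun m => ?_
    refine hasSum_of_eq ((hconv m).mul_left (b m)) fun k => ?_
    simp only; ring
  have h3 := s1.hasSum.add h2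
  exact h1.unique (hasSum_of_eq h3 fun m => by ring)

/-- The hypersingular operator acts on Fourier series through the symbols `pS` and `kS` with
`N = 0`. -/
lemma Rep.wop (R : Rep V1 V2 α c) {ε : ℝ} (hε : ε = 1 / 6 ∨ ε = -(1 / 6)) {φ : ℝ → ℂ}
    (hφ : ContDiff ℝ (⊤ : ℕ∞) φ) (hp : Function.Periodic φ 1) (s : ℝ) :
    Wop V1 V2 φ s = (∑' m, fc φ m * pS α ε 0 m * e m s) +
      ∑' p : ℤ × (ℤ × ℤ), fc φ p.1 * kS c ε 0 p.2 p.1 * e (p.1 + p.2.1) s := by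
  have sa : ∀ j, Summable fun m => ‖fc φ m‖ * jb m ^ j := fun j => fc_summable j hφ hp
  have hdb : ∀ m, fc (deriv φ) m = I * gS 0 m * fc φ m := fun m => by
    rw [fc_deriv (hφ.of_le (by exact_mod_cast le_top)) hp, gS_zero_left']
  have hdn : ∀ m, ‖fc (deriv φ) m‖ ≤ 7 * (‖fc φ m‖ * jb m) := fun m => by
    rw [hdb, norm_mul, norm_mul, Complex.norm_I, one_mul, Complex.norm_real, Real.norm_eq_abs]
    have := abs_gS_le' 0 m
    calc _ ≤ 7 * jb m * ‖fc φ m‖ := by gcongr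
      _ = _ := by ring
  have hl : ∀ m, ‖α * ci * lS ε 0 m‖ ≤ ‖α‖ * 8 := fun m => by
    rw [norm_mul, norm_mul]
    have h1 := norm_lS_le8 hε 0 m
    have h2 := norm_ci_le
    calc _ ≤ ‖α‖ * 1 * 8 := by gcongr
      _ = _ := by ring
  have hV1 : Vop V1 (deriv φ) = fun s => (∑' m, fc (deriv φ) m * (α * ci * lS ε 0 m) * e m s) +
      ∑' p : ℤ × (ℤ × ℤ), fc (deriv φ) p.1 * M1 c ε p.2 p.1 * e (p.1 + p.2.1) s := by
    ext s
    refine vop_series (c := c) s (R.int1 s) (fun k m => norm_M1_le c hε k m) hl R.summable_nrm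
      (fun m => R.conv1 ε m s) ?_
      (hasSum_fc_of_smooth (contDiff_deriv hφ) (periodic_deriv hp))
    simpa using fc_summable 0 (contDiff_deriv hφ) (periodic_deriv hp)
  have hV2 : Vop V2 φ s = (∑' m, fc φ m * dS ε 0 m * e m s) +
      ∑' p : ℤ × (ℤ × ℤ), fc φ p.1 * M2 c ε p.2 p.1 * e (p.1 + p.2.1) s :=
    vop_series (c := c) s (R.int2 s) (fun k m => norm_M2_le c hε k m)
      (fun m => norm_dS_le1 ε 0 m) R.summable_nrm (fun m => R.conv2 ε m s)
      (by simpa using sa 0) (hasSum_fc_of_smooth hφ hp)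
  have q1 : Summable fun m => ‖fc (deriv φ) m * (α * ci * lS ε 0 m)‖ * jb m := by
    refine Summable.of_nonneg_of_le (fun m => by have := jb_pos m; positivity) (fun m => ?_)
      ((sa 2).mul_left (7 * (‖α‖ * 8)))
    have := jb_pos m
    rw [norm_mul]
    calc _ ≤ 7 * (‖fc φ m‖ * jb m) * (‖α‖ * 8) * jb m := by
          gcongr
          exacts [hdn m, hl m]
      _ = _ := by ring
  have q2 : Summable fun p : ℤ × (ℤ × ℤ) =>
      ‖fc (deriv φ) p.1 * M1 c ε p.2 p.1‖ * jb (p.1 + p.2.1) := by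
    refine summable_pair (b := fc φ) (c := c) (j := 2) (r := 1) (C := 7 * 16) (sa 2) (R.dec 1)
      (fun p => by have := jb_pos (p.1 + p.2.1); positivity) fun p => ?_
    have h1 := jb_pos p.1
    have h2 : jb (p.1 + p.2.1) ≤ jb p.1 * jw p.2 :=
      (jb_add_le _ _).trans (by gcongr; exact jb_fst_le _)
    have h3 := norm_M1_le c hε p.2 p.1
    have h4 := hdn p.1
    have h5 := jb_pos (p.1 + p.2.1)
    have h6 := c.nrm_nonneg p.2
    rw [norm_mul]
    calc _ ≤ 7 * (‖fc φ p.1‖ * jb p.1) * (16 * c.nrm p.2) * (jb p.1 * jw p.2) := by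
          gcongr
      _ = _ := by ring
  have d := ((hasDerivAt_tsum_e _ _ q1 s).add (hasDerivAt_tsum_e _ _ q2 s)).deriv
  have hd : deriv (Vop V1 (deriv φ)) s =
      (∑' m, fc (deriv φ) m * (α * ci * lS ε 0 m) * (I * gS 0 m) * e m s) +
      ∑' p : ℤ × (ℤ × ℤ), fc (deriv φ) p.1 * M1 c ε p.2 p.1 * (I * gS 0 (p.1 + p.2.1))
        * e (p.1 + p.2.1) s := by
    rw [hV1]; exact d
  have s1 : Summable fun m => fc φ m * dS ε 0 m * e m s := by
    refine Summable.of_norm_bounded (sa 0) fun m => ?_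
    rw [norm_mul, norm_e, mul_one, norm_mul]
    have := norm_dS_le1 ε 0 m
    gcongr; simpa using this
  have s2 : Summable fun p : ℤ × (ℤ × ℤ) => fc φ p.1 * M2 c ε p.2 p.1 * e (p.1 + p.2.1) s := by
    refine Summable.of_norm (summable_pair (b := fc φ) (c := c) (j := 0) (r := 0) (C := 16)
      (sa 0) (R.dec 0) (fun _ => norm_nonneg _) fun p => ?_)
    rw [norm_mul, norm_e, mul_one, norm_mul, pow_zero, pow_zero, mul_one, mul_one]
    have := norm_M2_le c hε p.2 p.1
    calc _ ≤ ‖fc φ p.1‖ * (16 * c.nrm p.2) := by gcongr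
      _ = _ := by ring
  have s3 : Summable fun m => fc (deriv φ) m * (α * ci * lS ε 0 m) * (I * gS 0 m) * e m s := by
    refine Summable.of_norm_bounded (q1.mul_left 7) fun m => ?_
    rw [norm_mul, norm_e, mul_one, norm_mul, norm_mul I, Complex.norm_I, one_mul, Complex.norm_real,
      Real.norm_eq_abs]
    have := abs_gS_le' 0 m
    calc _ ≤ ‖fc (deriv φ) m * (α * ci * lS ε 0 m)‖ * (7 * jb m) := by gcongr
      _ = _ := by ring
  have s4 : Summable fun p : ℤ × (ℤ × ℤ) =>
      fc (deriv φ) p.1 * M1 c ε p.2 p.1 * (I * gS 0 (p.1 + p.2.1)) * e (p.1 + p.2.1) s := by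
    refine Summable.of_norm_bounded (q2.mul_left 7) fun p => ?_
    rw [norm_mul, norm_e, mul_one, norm_mul, norm_mul I, Complex.norm_I, one_mul, Complex.norm_real,
      Real.norm_eq_abs]
    have := abs_gS_le' 0 (p.1 + p.2.1)
    calc _ ≤ ‖fc (deriv φ) p.1 * M1 c ε p.2 p.1‖ * (7 * jb (p.1 + p.2.1)) := by gcongr
      _ = _ := by ring
  have hII : I * I = -1 := Complex.I_mul_I
  have t1 : ∑' m, fc φ m * pS α ε 0 m * e m s =
      -(∑' m, fc (deriv φ) m * (α * ci * lS ε 0 m) * (I * gS 0 m) * e m s) +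
        ∑' m, fc φ m * dS ε 0 m * e m s := by
    rw [← tsum_neg, ← s3.neg.tsum_add s1]
    refine tsum_congr fun m => ?_
    rw [hdb, pS]
    linear_combination (gS 0 m * fc φ m * (α * ci * lS ε 0 m) * gS 0 m * e m s) * hII
  have t2 : ∑' p : ℤ × (ℤ × ℤ), fc φ p.1 * kS c ε 0 p.2 p.1 * e (p.1 + p.2.1) s =
      -(∑' p : ℤ × (ℤ × ℤ), fc (deriv φ) p.1 * M1 c ε p.2 p.1 * (I * gS 0 (p.1 + p.2.1))
        * e (p.1 + p.2.1) s) +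
        ∑' p : ℤ × (ℤ × ℤ), fc φ p.1 * M2 c ε p.2 p.1 * e (p.1 + p.2.1) s := by
    rw [← tsum_neg, ← s4.neg.tsum_add s2]
    refine tsum_congr fun p => ?_
    rw [hdb, kS, M1, M2]
    linear_combination (gS 0 p.1 * fc φ p.1 * (c.a1 p.2 * (lS ε 0 (p.1 - p.2.2) - lS ε 0 p.1) +
      c.b1 p.2 * dS ε 0 (p.1 - p.2.2)) * gS 0 (p.1 + p.2.1) * e (p.1 + p.2.1) s) * hII
  rw [Wop, hd, hV2, t1, t2]
  ring

end NysLog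

end

/-! ### Operators on `ℓ¹(ℤ)` given by bounded columns -/

noncomputable section

namespace NysLog

open Complex (I)
open scoped Real

/-- The space `ℓ¹(ℤ)` of absolutely summable Fourier coefficients. -/
abbrev LOne := lp (fun _ : ℤ => ℂ) 1

/-- The unit coordinate sequence at `m`, the coefficient sequence of the character `e m`. -/
def unitVec (m : ℤ) : LOne := lp.single 1 m (1 : ℂ)

lemma norm_unit (m : ℤ) : ‖unitVec m‖ = 1 := by
  unfold unitVec
  rw [lp.norm_single (by norm_num)]
  simp

lemma unit_apply (m n : ℤ) : unitVec m n = if n = m then 1 else 0 := by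
  unfold unitVec
  rw [lp.single_apply]
  by_cases h : n = m
  · subst h; simp
  · simp [h]

lemma seq_hasSum_norm (a : LOne) : HasSum (fun m => ‖a m‖) ‖a‖ := by
  have h := lp.hasSum_norm (p := 1) (by norm_num) a
  simpa using h

lemma seq_hasSum (a : LOne) : HasSum (fun m => a m • unitVec m) a := by
  have h := lp.hasSum_single (p := 1) (by norm_num) a
  refine hasSum_of_eq h fun m => ?_
  unfold unitVec
  rw [← lp.single_smul]
  simp

variable {F : Type} [NormedAddCommGroup F] [NormedSpace ℂ F]

lemma col_summable_norm {c : ℤ → F} {C : ℝ} (hc : ∀ m, ‖c m‖ ≤ C) (a : LOne) :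
    Summable fun m => ‖a m • c m‖ := by
  refine Summable.of_nonneg_of_le (fun _ => norm_nonneg _) (fun m => ?_)
    ((seq_hasSum_norm a).summable.mul_right C)
  rw [norm_smul]
  have := hc m
  gcongr

open Classical in
/-- The bounded operator on `ℓ¹(ℤ)` with columns `c m`; the zero operator when the columns are
unbounded. -/
def colOp [CompleteSpace F] (c : ℤ → F) : LOne →L[ℂ] F :=
  if h : ∃ C, ∀ m, ‖c m‖ ≤ C then
    LinearMap.mkContinuous
      { toFun := fun a => ∑' m, a m • c m
        map_add' := fun a b => by
          obtain ⟨C, hC⟩ := h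
          rw [← (col_summable_norm hC a).of_norm.tsum_add (col_summable_norm hC b).of_norm]
          refine tsum_congr fun m => ?_
          rw [lp.coeFn_add, Pi.add_apply, add_smul]
        map_smul' := fun x a => by
          obtain ⟨C, hC⟩ := h
          rw [RingHom.id_apply, ← (col_summable_norm hC a).of_norm.tsum_const_smul x]
          refine tsum_congr fun m => ?_
          rw [lp.coeFn_smul, Pi.smul_apply, smul_eq_mul, mul_smul] }
      h.choose (fun a => by
        refine tsum_of_norm_bounded ((seq_hasSum_norm a).mul_left _) fun m => ?_
        rw [norm_smul, mul_comm]
        have := h.choose_spec m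
        gcongr)
  else 0

lemma colOp_hasSum [CompleteSpace F] {c : ℤ → F} {C : ℝ} (hc : ∀ m, ‖c m‖ ≤ C) (a : LOne) :
    HasSum (fun m => a m • c m) (colOp c a) := by
  have h : ∃ C, ∀ m, ‖c m‖ ≤ C := ⟨C, hc⟩
  have : colOp c a = ∑' m, a m • c m := by
    rw [colOp, dif_pos h]; rfl
  rw [this]
  exact (col_summable_norm hc a).of_norm.hasSum

lemma norm_colOp_apply_le [CompleteSpace F] {c : ℤ → F} {C : ℝ} (hc : ∀ m, ‖c m‖ ≤ C) (a : LOne) :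
    ‖colOp c a‖ ≤ C * ‖a‖ := by
  rw [← (colOp_hasSum hc a).tsum_eq]
  refine tsum_of_norm_bounded ((seq_hasSum_norm a).mul_left _) fun m => ?_
  rw [norm_smul, mul_comm]
  have := hc m
  gcongr

lemma norm_colOp_le [CompleteSpace F] {c : ℤ → F} {C : ℝ} (hc : ∀ m, ‖c m‖ ≤ C) : ‖colOp c‖ ≤ C :=
  ContinuousLinearMap.opNorm_le_bound _ ((norm_nonneg _).trans (hc 0)) (norm_colOp_apply_le hc)

lemma colOp_unit [CompleteSpace F] {c : ℤ → F} {C : ℝ} (hc : ∀ m, ‖c m‖ ≤ C) (m : ℤ) : colOp c (unitVec m) = c m := by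
  refine (colOp_hasSum hc (unitVec m)).unique ?_
  have := hasSum_single (f := fun n => (unitVec m) n • c n) m (fun n hn => by
    rw [unit_apply, if_neg hn, zero_smul])
  rwa [unit_apply, if_pos rfl, one_smul] at this

/-- Bounded operators on `ℓ¹(ℤ)` are determined by their columns. -/
lemma clm_ext {S T : LOne →L[ℂ] F} (h : ∀ m, S (unitVec m) = T (unitVec m)) : S = T := by
  ext a
  have h1 := (seq_hasSum a).mapL S
  have h2 := (seq_hasSum a).mapL T
  refine h1.unique (hasSum_of_eq h2 fun m => ?_)
  rw [map_smul, map_smul, h]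

/-- Evaluation at `s` of the Fourier series with given coefficients. -/
def ev (s : ℝ) : LOne →L[ℂ] ℂ := colOp fun m => e m s

lemma norm_e_le (s : ℝ) (m : ℤ) : ‖e m s‖ ≤ 1 := (norm_e m s).le

lemma ev_unit (s : ℝ) (m : ℤ) : ev s (unitVec m) = e m s := colOp_unit (norm_e_le s) m

lemma ev_hasSum (s : ℝ) (a : LOne) : HasSum (fun m => a m * e m s) (ev s a) :=
  colOp_hasSum (norm_e_le s) a

lemma norm_ev_le (s : ℝ) (a : LOne) : ‖ev s a‖ ≤ ‖a‖ := by
  have h := norm_colOp_apply_le (norm_e_le s) a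
  rwa [one_mul] at h

/-- The `n`-th coordinate functional. -/
def coord (n : ℤ) : LOne →L[ℂ] ℂ := colOp fun m => if n = m then 1 else 0

lemma coord_apply (n : ℤ) (a : LOne) : coord n a = a n := by
  have hb : ∀ m : ℤ, ‖(if n = m then 1 else 0 : ℂ)‖ ≤ 1 := fun m => by split_ifs <;> simp
  refine (colOp_hasSum hb a).unique ?_
  have := hasSum_single (f := fun m => a m • (if n = m then 1 else 0 : ℂ)) n (fun m hm => by
    rw [if_neg (Ne.symm hm), smul_zero])
  rwa [if_pos rfl, smul_eq_mul, mul_one] at this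

lemma norm_apply_le (a : LOne) (n : ℤ) : ‖a n‖ ≤ ‖a‖ :=
  lp.norm_apply_le_norm (by norm_num) a n

/-- Weighted summability of the coordinates of a superposition of unit sequences. -/
lemma weighted_summable {J : Type} {x : J → ℂ} {n : J → ℤ} {a : LOne}
    (ha : HasSum (fun j => x j • unitVec (n j)) a) {w : ℤ → ℝ} (hw : ∀ m, 0 ≤ w m)
    (hx : Summable fun j => ‖x j‖) (h : Summable fun j => ‖x j‖ * w (n j)) :
    Summable fun m => ‖a m‖ * w m := by
  refine summable_of_sum_le (c := ∑' j, ‖x j‖ * w (n j))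
    (fun m => mul_nonneg (norm_nonneg _) (hw m)) fun s => ?_
  have hs : ∀ m : ℤ, Summable fun j => if m = n j then ‖x j‖ else 0 := fun m =>
    Summable.of_nonneg_of_le (fun j => by split_ifs <;> simp)
      (fun j => by split_ifs <;> simp) hx
  have hm : ∀ m, ‖a m‖ ≤ ∑' j, if m = n j then ‖x j‖ else 0 := fun m => by
    have h1 := ha.mapL (coord m)
    rw [coord_apply] at h1
    rw [← h1.tsum_eq]
    refine tsum_of_norm_bounded (hs m).hasSum fun j => ?_
    rw [map_smul, coord_apply, unit_apply]
    split_ifs <;> simp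
  calc ∑ m ∈ s, ‖a m‖ * w m ≤ ∑ m ∈ s, (∑' j, if m = n j then ‖x j‖ else 0) * w m :=
        Finset.sum_le_sum fun m _ => mul_le_mul_of_nonneg_right (hm m) (hw m)
    _ = ∑ m ∈ s, ∑' j, (if m = n j then ‖x j‖ else 0) * w m := by
        simp only [tsum_mul_right]
    _ = ∑' j, ∑ m ∈ s, (if m = n j then ‖x j‖ else 0) * w m :=
        (Summable.tsum_finsetSum fun m _ => (hs m).mul_right _).symm
    _ ≤ ∑' j, ‖x j‖ * w (n j) := by
        have hle : ∀ j, ∑ m ∈ s, (if m = n j then ‖x j‖ else 0) * w m ≤ ‖x j‖ * w (n j) := by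
          intro j
          simp only [ite_mul, zero_mul]
          rw [Finset.sum_ite_eq' s (n j)]
          split_ifs
          · exact le_rfl
          · exact mul_nonneg (norm_nonneg _) (hw _)
        refine Summable.tsum_le_tsum hle ?_ h
        refine Summable.of_nonneg_of_le (fun j => ?_) hle h
        refine Finset.sum_nonneg fun m _ => mul_nonneg ?_ (hw m)
        split_ifs <;> simp

/-- A column operator whose columns tend to zero is compact. -/
lemma colOp_compact {c : ℤ → LOne} {C : ℝ} (hc : ∀ m, ‖c m‖ ≤ C / jb m) :
    IsCompactOperator (colOp c) := by
  have hC : 0 ≤ C := by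
    have h1 := (norm_nonneg _).trans (hc 0)
    have h2 := jb_pos 0
    rcases (div_nonneg_iff.1 h1) with h | h
    · exact h.1
    · linarith [h.2]
  have hc1 : ∀ m, ‖c m‖ ≤ C := fun m => (hc m).trans (div_le_self hC (one_le_jb m))
  let T : ℕ → LOne →L[ℂ] LOne := fun n =>
    ∑ m ∈ Finset.Icc (-(n:ℤ)) n, (coord m).smulRight (c m)
  have hT : ∀ n, IsCompactOperator (T n) := fun n => by
    refine Submodule.sum_mem (compactOperator (RingHom.id ℂ) LOne LOne) fun m _ => ?_
    have h1 : IsCompactOperator (coord m) :=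
      (isCompactOperator_id_iff_locallyCompactSpace.2 (inferInstance : LocallyCompactSpace ℂ)).comp_clm (coord m)
    exact h1.clm_comp ((ContinuousLinearMap.id ℂ ℂ).smulRight (c m))
  refine isCompactOperator_of_tendsto (l := Filter.atTop) (F := T) ?_ (Filter.Eventually.of_forall hT)
  rw [tendsto_iff_norm_sub_tendsto_zero]
  refine squeeze_zero (fun _ => norm_nonneg _) (g := fun n : ℕ => C / (n + 1)) (fun n => ?_) ?_
  · have hb : ∀ m : ℤ, ‖(if m ∈ Finset.Icc (-(n:ℤ)) n then 0 else - c m)‖ ≤ C / (n + 1) := by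
      intro m
      split_ifs with h
      · rw [norm_zero]; positivity
      · rw [norm_neg]
        refine (hc m).trans ?_
        have : (n:ℝ) + 1 ≤ jb m := by
          rw [Finset.mem_Icc, ← abs_le, not_le] at h
          have : ((n:ℤ):ℝ) < ((|m| : ℤ) : ℝ) := by exact_mod_cast h
          unfold jb
          push_cast at this
          linarith
        gcongr
    have : T n - colOp c = colOp fun m => if m ∈ Finset.Icc (-(n:ℤ)) n then 0 else - c m := by
      refine clm_ext fun m => ?_
      rw [colOp_unit hb, sub_apply, colOp_unit hc1]
      simp only [T, sum_apply, ContinuousLinearMap.smulRight_apply, coord_apply,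
        unit_apply, ite_smul, one_smul, zero_smul]
      rw [Finset.sum_ite_eq']
      split_ifs <;> simp
    rw [this]
    exact norm_colOp_le hb
  · exact tendsto_const_div_atTop_nhds_zero_nat C |>.comp (Filter.tendsto_add_atTop_nat 1)
      |>.congr fun n => by simp

end NysLog

end

/-! ### The preconditioned operators `R_N` and their limit -/

noncomputable section

namespace NysLog

open Complex (I)
open scoped Real

variable {V1 V2 : ℝ → ℝ → ℂ} {α : ℂ} {c : Coef} {ε : ℝ}

/-- The ellipticity constant of the principal symbol. -/
def ellip (α : ℂ) : ℝ := min 1 (‖α‖ / 2)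

lemma ellip_pos (hα : α ≠ 0) : 0 < ellip α :=
  lt_min one_pos (by have := norm_pos_iff.2 hα; positivity)

lemma norm_inv_pS_le (hα : α ≠ 0) (hε : ε = 1 / 6 ∨ ε = -(1 / 6)) (N : ℕ) (k : ℤ) :
    ‖(pS α ε N k)⁻¹‖ ≤ (ellip α)⁻¹ * (1 / tw N k) := by
  have h := le_norm_pS α hε N k
  have h1 := ellip_pos hα
  have h2 := tw_pos N k
  rw [norm_inv, one_div, ← mul_inv]
  exact inv_anti₀ (mul_pos h1 h2) h

lemma norm_inv_pS_le' (hα : α ≠ 0) (hε : ε = 1 / 6 ∨ ε = -(1 / 6)) (N : ℕ) (k : ℤ) :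
    ‖(pS α ε N k)⁻¹‖ ≤ (ellip α)⁻¹ := by
  refine (norm_inv_pS_le hα hε N k).trans ?_
  have h1 := ellip_pos hα
  have h2 := one_le_tw N k
  refine mul_le_of_le_one_right (by positivity) ?_
  rw [div_le_one (by linarith)]; exact h2

/-- The weighted coefficient sums `∑ ‖c_i‖ ⟨i⟩^k`. -/
def cS (c : Coef) (k : ℕ) : ℝ := ∑' i, c.nrm i * jw i ^ k

lemma cS_nonneg (c : Coef) (k : ℕ) : 0 ≤ cS c k := tsum_nonneg fun i => by
  have := one_le_jw i; have := c.nrm_nonneg i; positivity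

/-- The coefficients of the non-principal part of the operator applied to `e m`. -/
def Kcol (c : Coef) (ε : ℝ) (N : ℕ) (m : ℤ) : LOne := ∑' i : ℤ × ℤ, kS c ε N i m • unitVec (m + i.1)

lemma Rep.kcol_hasSum (R : Rep V1 V2 α c) (hε : ε = 1 / 6 ∨ ε = -(1 / 6)) (N : ℕ) (m : ℤ) :
    HasSum (fun i : ℤ × ℤ => kS c ε N i m • unitVec (m + i.1)) (Kcol c ε N m) := by
  refine Summable.hasSum (Summable.of_norm_bounded ((R.dec 6).mul_left 14700) fun i => ?_)
  rw [norm_smul, norm_unit, mul_one]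
  exact norm_kS_le c hε N i m

lemma Rep.norm_kcol_le (R : Rep V1 V2 α c) (hε : ε = 1 / 6 ∨ ε = -(1 / 6)) (N : ℕ) (m : ℤ) :
    ‖Kcol c ε N m‖ ≤ 14700 * cS c 6 := by
  refine tsum_of_norm_bounded ((R.dec 6).hasSum.mul_left 14700) fun i => ?_
  rw [norm_smul, norm_unit, mul_one]
  exact norm_kS_le c hε N i m

lemma Rep.kcol_conv (R : Rep V1 V2 α c) (hε : ε = 1 / 6 ∨ ε = -(1 / 6)) (N : ℕ) [NeZero N] (m : ℤ) :
    ‖Kcol c ε N m - Kcol c ε 0 m‖ ≤ 1000000 * cS c 8 * (jb m ^ 3 / N ^ 2) := by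
  rw [← ((R.kcol_hasSum hε N m).sub (R.kcol_hasSum hε 0 m)).tsum_eq]
  refine tsum_of_norm_bounded (((R.dec 8).hasSum.mul_left 1000000).mul_right _) fun i => ?_
  rw [← sub_smul, norm_smul, norm_unit, mul_one]
  refine (kS_conv c hε N i m).trans (le_of_eq ?_)
  ring

/-- The operator dividing by the principal symbol after aliasing every mode `k` to its
representative `nu N k`. It only sees the values of a function on the collocation grid. -/
def Bop (α : ℂ) (ε : ℝ) (N : ℕ) : LOne →L[ℂ] LOne :=
  colOp fun k => (pS α ε N k)⁻¹ • unitVec (nu N k)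

lemma norm_Bcol_le (hα : α ≠ 0) (hε : ε = 1 / 6 ∨ ε = -(1 / 6)) (N : ℕ) (k : ℤ) :
    ‖(pS α ε N k)⁻¹ • unitVec (nu N k)‖ ≤ (ellip α)⁻¹ := by
  rw [norm_smul, norm_unit, mul_one]
  exact norm_inv_pS_le' hα hε N k

lemma Bop_unit (hα : α ≠ 0) (hε : ε = 1 / 6 ∨ ε = -(1 / 6)) (N : ℕ) (k : ℤ) :
    Bop α ε N (unitVec k) = (pS α ε N k)⁻¹ • unitVec (nu N k) :=
  colOp_unit (norm_Bcol_le hα hε N) k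

lemma norm_Bop_apply_le (hα : α ≠ 0) (hε : ε = 1 / 6 ∨ ε = -(1 / 6)) (N : ℕ) (a : LOne) :
    ‖Bop α ε N a‖ ≤ (ellip α)⁻¹ * ‖a‖ := norm_colOp_apply_le (norm_Bcol_le hα hε N) a

lemma Rep.bk_hasSum (R : Rep V1 V2 α c) (hα : α ≠ 0) (hε : ε = 1 / 6 ∨ ε = -(1 / 6)) (N : ℕ)
    (m : ℤ) : HasSum (fun i : ℤ × ℤ =>
      (kS c ε N i m * (pS α ε N (m + i.1))⁻¹) • unitVec (nu N (m + i.1)))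
      (Bop α ε N (Kcol c ε N m)) := by
  refine hasSum_of_eq ((R.kcol_hasSum hε N m).mapL (Bop α ε N)) fun i => ?_
  rw [map_smul, Bop_unit hα hε, mul_smul]

lemma Rep.norm_bk_le (R : Rep V1 V2 α c) (hα : α ≠ 0) (hε : ε = 1 / 6 ∨ ε = -(1 / 6)) (N : ℕ)
    (m : ℤ) : ‖Bop α ε N (Kcol c ε N m)‖ ≤ 14700 * (ellip α)⁻¹ * cS c 7 / tw N m := by
  have h1 := ellip_pos hα
  have h2 := tw_pos N m
  have : 14700 * (ellip α)⁻¹ * cS c 7 / tw N m = (14700 * (ellip α)⁻¹ / tw N m) * cS c 7 := by ring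
  rw [this, ← (R.bk_hasSum hα hε N m).tsum_eq]
  refine tsum_of_norm_bounded ((R.dec 7).hasSum.mul_left _) fun i => ?_
  rw [norm_smul, norm_unit, mul_one, norm_mul]
  have h3 := norm_kS_le c hε N i m
  have h4 := norm_inv_pS_le hα hε N (m + i.1)
  have h5 : 1 / tw N (m + i.1) ≤ jw i / tw N m := by
    have := inv_tw_add_le N m i.1 1
    simp only [pow_one] at this
    refine this.trans ?_
    gcongr
    exact jb_fst_le i
  have h6 := one_le_jw i
  have h7 := c.nrm_nonneg i
  calc _ ≤ (14700 * (c.nrm i * jw i ^ 6)) * ((ellip α)⁻¹ * (jw i / tw N m)) := by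
        refine mul_le_mul h3 (h4.trans ?_) (norm_nonneg _) (by positivity)
        gcongr
    _ = _ := by ring

/-- Second order convergence of a fixed column. -/
lemma Rep.bk_conv (R : Rep V1 V2 α c) (hα : α ≠ 0) (hε : ε = 1 / 6 ∨ ε = -(1 / 6)) (N : ℕ) [NeZero N]
    (m : ℤ) : ‖Bop α ε N (Kcol c ε N m) - Bop α ε 0 (Kcol c ε 0 m)‖ ≤
      (1000000 * (ellip α)⁻¹ + 294000000 * (ellip α)⁻¹ ^ 2 * (‖α‖ + 1)) * cS c 9 *
        (jb m ^ 3 / N ^ 2) := by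
  have hN : (0:ℝ) < N := by exact_mod_cast Nat.pos_of_ne_zero (NeZero.ne N)
  have hd : 0 < (ellip α)⁻¹ := inv_pos.2 (ellip_pos hα)
  set d := (ellip α)⁻¹ with hdd
  rw [← ((R.bk_hasSum hα hε N m).sub (R.bk_hasSum hα hε 0 m)).tsum_eq]
  refine tsum_of_norm_bounded (((R.dec 9).hasSum.mul_left _).mul_right _) fun i => ?_
  set k := m + i.1 with hk
  have h6 := one_le_jw i
  have h7 := c.nrm_nonneg i
  have h8 := one_le_jb m
  have h9 := one_le_jb k
  have hj : jb k ≤ jb m * jw i := (jb_add_le _ _).trans (by gcongr; exact jb_fst_le i)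
  have k1 := norm_kS_le c hε N i m
  have k2 := norm_kS_le c hε 0 i m
  have k3 := kS_conv c hε N i m
  have p1 := norm_inv_pS_le' hα hε N k
  have p2 := norm_inv_pS_le' hα hε 0 k
  have p3 := pS_conv α hε N k
  rw [← hdd] at p1 p2
  have hα0 := norm_nonneg α
  by_cases hlt : 2 * |(k:ℝ)| < N
  · rw [nu_of_le N k hlt, nu_zero_left, ← sub_smul, norm_smul, norm_unit, mul_one]
    have n1 := pS_ne_zero hα hε N k
    have n2 := pS_ne_zero hα hε 0 k
    have e1 : kS c ε N i m * (pS α ε N k)⁻¹ - kS c ε 0 i m * (pS α ε 0 k)⁻¹ =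
        (kS c ε N i m - kS c ε 0 i m) * (pS α ε N k)⁻¹ -
        kS c ε 0 i m * ((pS α ε N k - pS α ε 0 k) * ((pS α ε N k)⁻¹ * (pS α ε 0 k)⁻¹)) := by
      field_simp; ring
    rw [e1]
    refine (norm_sub_le _ _).trans ?_
    simp only [norm_mul]
    have q1 : ‖kS c ε N i m - kS c ε 0 i m‖ * ‖(pS α ε N k)⁻¹‖ ≤
        (1000000 * (c.nrm i * jw i ^ 8) * jb m ^ 3 / N ^ 2) * d := by gcongr
    have q2 : ‖kS c ε 0 i m‖ * (‖pS α ε N k - pS α ε 0 k‖ *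
        (‖(pS α ε N k)⁻¹‖ * ‖(pS α ε 0 k)⁻¹‖)) ≤
        (14700 * (c.nrm i * jw i ^ 6)) * ((20000 * (‖α‖ + 1) * (jb m * jw i) ^ 3 / N ^ 2) * (d * d)) := by
      refine mul_le_mul k2 (mul_le_mul (p3.trans ?_) (mul_le_mul p1 p2 (norm_nonneg _) hd.le)
        (by positivity) (by positivity)) (by positivity) (by positivity)
      gcongr
    refine (add_le_add q1 q2).trans ?_
    have q3 : jw i ^ 8 ≤ jw i ^ 9 := pow_le_pow_right₀ h6 (by norm_num)
    calc _ ≤ (1000000 * (c.nrm i * jw i ^ 9) * jb m ^ 3 / N ^ 2) * d +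
        (14700 * (c.nrm i * jw i ^ 6)) * ((20000 * (‖α‖ + 1) * (jb m * jw i) ^ 3 / N ^ 2) * (d * d)) := by
          gcongr
      _ = _ := by ring
  · push Not at hlt
    have hkN : (N:ℝ) ≤ 2 * (jb m * jw i) := by
      have : |(k:ℝ)| ≤ jb k := abs_le_jb k
      linarith
    have hone : 1 ≤ 4 * (jb m * jw i) ^ 2 / N ^ 2 := by
      rw [le_div_iff₀ (by positivity), one_mul]
      nlinarith
    have q1 : ‖(kS c ε N i m * (pS α ε N k)⁻¹) • unitVec (nu N k)‖ ≤ 14700 * (c.nrm i * jw i ^ 6) * d := by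
      rw [norm_smul, norm_unit, mul_one, norm_mul]; gcongr
    have q2 : ‖(kS c ε 0 i m * (pS α ε 0 k)⁻¹) • unitVec (nu 0 k)‖ ≤ 14700 * (c.nrm i * jw i ^ 6) * d := by
      rw [norm_smul, norm_unit, mul_one, norm_mul]; gcongr
    refine (norm_sub_le _ _).trans ((add_le_add q1 q2).trans ?_)
    have q3 : jw i ^ 8 * jb m ^ 2 ≤ jw i ^ 9 * jb m ^ 3 := by
      gcongr <;> first | assumption | norm_num
    calc _ = 29400 * (c.nrm i * jw i ^ 6) * d * 1 := by ring
      _ ≤ 29400 * (c.nrm i * jw i ^ 6) * d * (4 * (jb m * jw i) ^ 2 / N ^ 2) := by gcongr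
      _ = 117600 * d * c.nrm i / N ^ 2 * (jw i ^ 8 * jb m ^ 2) := by ring
      _ ≤ 117600 * d * c.nrm i / N ^ 2 * (jw i ^ 9 * jb m ^ 3) := by gcongr
      _ = 117600 * d * (c.nrm i * jw i ^ 9) * (jb m ^ 3 / N ^ 2) := by ring
      _ ≤ _ := by
        gcongr
        have : 0 ≤ 294000000 * d ^ 2 * (‖α‖ + 1) := by positivity
        linarith

/-- The preconditioned compact part on the modes representing trigonometric polynomials on the
grid; for `N = 0` all modes. -/
def Rop (α : ℂ) (c : Coef) (ε : ℝ) (N : ℕ) : LOne →L[ℂ] LOne :=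
  colOp fun m => if nu N m = m then Bop α ε N (Kcol c ε N m) else 0

lemma Rep.norm_rcol_le (R : Rep V1 V2 α c) (hα : α ≠ 0) (hε : ε = 1 / 6 ∨ ε = -(1 / 6)) (N : ℕ)
    (m : ℤ) : ‖(if nu N m = m then Bop α ε N (Kcol c ε N m) else 0)‖ ≤
      14700 * (ellip α)⁻¹ * cS c 7 / jb m := by
  have h0 := ellip_pos hα
  have h1 := cS_nonneg c 7
  have h2 := jb_pos m
  split_ifs with h
  · have := R.norm_bk_le hα hε N m
    rwa [show tw N m = jb m by rw [tw, h]; rfl] at this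
  · rw [norm_zero]; positivity

lemma Rep.norm_rcol_le' (R : Rep V1 V2 α c) (hα : α ≠ 0) (hε : ε = 1 / 6 ∨ ε = -(1 / 6)) (N : ℕ)
    (m : ℤ) : ‖(if nu N m = m then Bop α ε N (Kcol c ε N m) else 0)‖ ≤
      14700 * (ellip α)⁻¹ * cS c 7 := by
  have h0 := ellip_pos hα
  have h1 := cS_nonneg c 7
  exact (R.norm_rcol_le hα hε N m).trans (div_le_self (by positivity) (one_le_jb m))

lemma Rep.rop_unit (R : Rep V1 V2 α c) (hα : α ≠ 0) (hε : ε = 1 / 6 ∨ ε = -(1 / 6)) (N : ℕ)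
    (m : ℤ) (hm : nu N m = m) : Rop α c ε N (unitVec m) = Bop α ε N (Kcol c ε N m) := by
  rw [Rop, colOp_unit (R.norm_rcol_le' hα hε N), if_pos hm]

/-- Norm convergence `R_N → R_0`: low modes converge because each column does, high modes are
uniformly small. -/
lemma Rep.rop_conv (R : Rep V1 V2 α c) (hα : α ≠ 0) (hε : ε = 1 / 6 ∨ ε = -(1 / 6)) {δ : ℝ}
    (hδ : 0 < δ) : ∃ N0 : ℕ, ∀ N : ℕ, [NeZero N] → N0 ≤ N → ‖Rop α c ε N - Rop α c ε 0‖ ≤ δ := by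
  set C := 14700 * (ellip α)⁻¹ * cS c 7 with hC
  set D := (1000000 * (ellip α)⁻¹ + 294000000 * (ellip α)⁻¹ ^ 2 * (‖α‖ + 1)) * cS c 9 with hD
  have hd := ellip_pos hα
  have hC0 : 0 ≤ C := by have := cS_nonneg c 7; positivity
  have hD0 : 0 ≤ D := by have := cS_nonneg c 9; positivity
  set X := 2 * C / δ + 1 with hX
  have hX1 : 1 ≤ X := by have : 0 ≤ 2 * C / δ := by positivity
                         linarith
  obtain ⟨N0, hN0⟩ := exists_nat_ge (2 * X + D * X ^ 3 / δ + 1)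
  refine ⟨N0, fun N _ hN => ?_⟩
  have hNr : 2 * X + D * X ^ 3 / δ + 1 ≤ N := hN0.trans (by exact_mod_cast hN)
  have hq : 0 ≤ D * X ^ 3 / δ := by positivity
  have hN1 : (1:ℝ) ≤ N := by linarith
  have hcol : ∀ m, ‖(if nu N m = m then Bop α ε N (Kcol c ε N m) else 0) -
      (if nu 0 m = m then Bop α ε 0 (Kcol c ε 0 m) else 0)‖ ≤ δ := by
    intro m
    have hj := jb_pos m
    by_cases hm : jb m ≤ X
    · have h2 : nu N m = m := by
        refine nu_of_le N m ?_
        have := abs_le_jb m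
        linarith
      rw [if_pos h2, if_pos (nu_zero_left m)]
      refine (R.bk_conv hα hε N m).trans ?_
      rw [← hD]
      calc D * (jb m ^ 3 / N ^ 2) ≤ D * (X ^ 3 / N ^ 2) := by gcongr
        _ = D * X ^ 3 / N ^ 2 := by ring
        _ ≤ δ := by
          rw [div_le_iff₀ (by positivity)]
          have h3 : D * X ^ 3 ≤ δ * N := by
            have : D * X ^ 3 / δ ≤ N := by linarith
            rw [div_le_iff₀ hδ] at this; linarith
          have h4 : (N:ℝ) ≤ (N:ℝ) ^ 2 := by nlinarith
          nlinarith
    · push Not at hm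
      refine (norm_sub_le _ _).trans ?_
      have h1 := R.norm_rcol_le hα hε N m
      have h2 := R.norm_rcol_le hα hε 0 m
      rw [← hC] at h1 h2
      have h3 : 2 * C / jb m ≤ δ := by
        rw [div_le_iff₀ hj]
        have : 2 * C / δ ≤ jb m := by linarith
        rw [div_le_iff₀ hδ] at this; linarith
      have h4 : 2 * C / jb m = C / jb m + C / jb m := by ring
      linarith
  have : Rop α c ε N - Rop α c ε 0 = colOp fun m =>
      (if nu N m = m then Bop α ε N (Kcol c ε N m) else 0) -
      (if nu 0 m = m then Bop α ε 0 (Kcol c ε 0 m) else 0) := by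
    refine clm_ext fun m => ?_
    rw [colOp_unit hcol, sub_apply, Rop, Rop, colOp_unit (R.norm_rcol_le' hα hε N),
      colOp_unit (R.norm_rcol_le' hα hε 0)]
  rw [this]
  exact norm_colOp_le hcol

end NysLog

end

/-! ### Injectivity and bounded invertibility of the limit operator -/

noncomputable section

namespace NysLog

open Complex (I)
open scoped Real

variable {V1 V2 : ℝ → ℝ → ℂ} {α : ℂ} {c : Coef} {ε : ℝ}

lemma contDiff_tsum_e (n : ℕ) : ∀ a : ℤ → ℂ, (∀ k : ℕ, Summable fun m => ‖a m‖ * jb m ^ k) →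
    ContDiff ℝ n (fun s => ∑' m, a m * e m s) := by
  induction n with
  | zero =>
    intro a ha
    have hd : Differentiable ℝ (fun s => ∑' m, a m * e m s) := fun s =>
      (hasDerivAt_tsum_e a id (by simpa using ha 1) s).differentiableAt
    exact_mod_cast contDiff_zero.2 hd.continuous
  | succ n ih =>
    intro a ha
    have hd := fun s => hasDerivAt_tsum_e a id (by simpa using ha 1) s
    simp only [id] at hd
    have : ((n + 1 : ℕ) : WithTop ℕ∞) = (n : WithTop ℕ∞) + 1 := by push_cast; rfl
    rw [this, contDiff_succ_iff_deriv]
    refine ⟨fun s => (hd s).differentiableAt, by simp, ?_⟩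
    have hde : deriv (fun s => ∑' m, a m * e m s) = fun s => ∑' m, a m * (I * gS 0 m) * e m s :=
      funext fun s => (hd s).deriv
    rw [hde]
    refine ih _ fun k => ?_
    refine Summable.of_nonneg_of_le (fun m => by have := jb_pos m; positivity) (fun m => ?_)
      ((ha (k + 1)).mul_left 7)
    rw [norm_mul, norm_mul, Complex.norm_I, one_mul, Complex.norm_real, Real.norm_eq_abs]
    have h1 := abs_gS_le' 0 m
    have h2 := jb_pos m
    calc _ ≤ ‖a m‖ * (7 * jb m) * jb m ^ k := by gcongr
      _ = _ := by ring

/-- The non-principal part of the continuous operator, which is bounded on `ℓ¹(ℤ)`. -/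
def Kop (c : Coef) (ε : ℝ) : LOne →L[ℂ] LOne := colOp (Kcol c ε 0)

lemma Rep.rop_zero (R : Rep V1 V2 α c) (hα : α ≠ 0) (hε : ε = 1 / 6 ∨ ε = -(1 / 6)) (a : LOne) :
    Rop α c ε 0 a = Bop α ε 0 (Kop c ε a) := by
  have : Rop α c ε 0 = (Bop α ε 0).comp (Kop c ε) := clm_ext fun m => by
    rw [R.rop_unit hα hε 0 m (nu_zero_left m), ContinuousLinearMap.comp_apply, Kop,
      colOp_unit (R.norm_kcol_le hε 0)]
  rw [this]; rfl

lemma Bop_zero_apply (hα : α ≠ 0) (hε : ε = 1 / 6 ∨ ε = -(1 / 6)) (x : LOne) (n : ℤ) :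
    Bop α ε 0 x n = (pS α ε 0 n)⁻¹ * x n := by
  have : (coord n).comp (Bop α ε 0) = (pS α ε 0 n)⁻¹ • coord n := clm_ext fun m => by
    rw [ContinuousLinearMap.comp_apply, Bop_unit hα hε, map_smul, coord_apply, smul_apply,
      coord_apply, unit_apply, unit_apply, nu_zero_left]
    by_cases h : n = m
    · rw [h]
    · simp [h]
  have h2 := congrArg (fun T : LOne →L[ℂ] ℂ => T x) this
  simpa [coord_apply] using h2

lemma Rep.summable_kop (R : Rep V1 V2 α c) (hε : ε = 1 / 6 ∨ ε = -(1 / 6)) {a : ℤ → ℂ} {k : ℕ}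
    (ha : Summable fun m => ‖a m‖ * jb m ^ k) :
    Summable fun p : ℤ × (ℤ × ℤ) => ‖a p.1 * kS c ε 0 p.2 p.1‖ * jb (p.1 + p.2.1) ^ k := by
  refine summable_pair (b := a) (c := c) (j := k) (r := 6 + k) (C := 14700) ha (R.dec _)
    (fun p => by have := jb_pos (p.1 + p.2.1); positivity) fun p => ?_
  have h1 := jb_pos p.1
  have h2 : jb (p.1 + p.2.1) ≤ jb p.1 * jw p.2 :=
    (jb_add_le _ _).trans (by gcongr; exact jb_fst_le _)
  have h3 := norm_kS_le c hε 0 p.2 p.1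
  have h4 := jb_pos (p.1 + p.2.1)
  have h5 := one_le_jw p.2
  have h6 := c.nrm_nonneg p.2
  rw [norm_mul]
  calc _ ≤ ‖a p.1‖ * (14700 * (c.nrm p.2 * jw p.2 ^ 6)) * (jb p.1 * jw p.2) ^ k := by gcongr
    _ = _ := by rw [mul_pow, pow_add]; ring

lemma Rep.kop_hasSum (R : Rep V1 V2 α c) (hε : ε = 1 / 6 ∨ ε = -(1 / 6)) (a : LOne) :
    HasSum (fun p : ℤ × (ℤ × ℤ) => (a p.1 * kS c ε 0 p.2 p.1) • unitVec (p.1 + p.2.1)) (Kop c ε a) := by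
  have hs : Summable fun p : ℤ × (ℤ × ℤ) =>
      (a p.1 * kS c ε 0 p.2 p.1) • unitVec (p.1 + p.2.1) := by
    refine Summable.of_norm ?_
    have := R.summable_kop hε (a := a) (k := 0) (by simpa using (seq_hasSum_norm a).summable)
    simpa [norm_smul, norm_unit] using this
  have h1 : HasSum (fun m => a m • Kcol c ε 0 m) (∑' p : ℤ × (ℤ × ℤ),
      (a p.1 * kS c ε 0 p.2 p.1) • unitVec (p.1 + p.2.1)) := by
    refine hs.hasSum.prod_fiberwise fun m => ?_
    refine hasSum_of_eq ((R.kcol_hasSum hε 0 m).const_smul (a m)) fun i => ?_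
    rw [mul_smul]
  have h2 := (colOp_hasSum (R.norm_kcol_le hε 0) a).unique h1
  rw [Kop, h2]
  exact hs.hasSum

/-- The null space of `1 + R_0` consists of the Fourier coefficients of smooth functions
annihilated by the hypersingular operator. -/
lemma Rep.eq_zero (R : Rep V1 V2 α c) (hα : α ≠ 0) (hε : ε = 1 / 6 ∨ ε = -(1 / 6))
    (hinj : ∀ φ : ℝ → ℂ, ContDiff ℝ (⊤ : ℕ∞) φ → Function.Periodic φ 1 →
      (∀ s, Wop V1 V2 φ s = 0) → ∀ s, φ s = 0)
    {a : LOne} (ha : Rop α c ε 0 a = -a) : a = 0 := by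
  set x := Kop c ε a with hx
  have hxa : ∀ n, x n = -(pS α ε 0 n * a n) := fun n => by
    have h1 := Bop_zero_apply hα hε x n
    rw [hx, ← R.rop_zero hα hε, ha, lp.coeFn_neg, Pi.neg_apply] at h1
    have h2 := pS_ne_zero hα hε 0 n
    rw [eq_inv_mul_iff_mul_eq₀ h2] at h1
    rw [← h1]; ring
  have hd := ellip_pos hα
  -- the relation `pS · a = -x` gains one power of decay per step
  have hw : ∀ k : ℕ, Summable fun m => ‖a m‖ * jb m ^ k := by
    intro k
    induction k with
    | zero => simpa using (seq_hasSum_norm a).summable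
    | succ k ih =>
      have hs0 : Summable fun p : ℤ × (ℤ × ℤ) => ‖a p.1 * kS c ε 0 p.2 p.1‖ := by
        simpa using R.summable_kop hε (a := a) (k := 0) (by simpa using (seq_hasSum_norm a).summable)
      have h1 := weighted_summable (R.kop_hasSum hε a) (w := fun m => jb m ^ k)
        (fun m => by have := jb_pos m; positivity) hs0 (R.summable_kop hε ih)
      refine Summable.of_nonneg_of_le (fun m => by have := jb_pos m; positivity) (fun m => ?_)
        (h1.mul_left (ellip α)⁻¹)
      rw [← hx, hxa, norm_neg, norm_mul]
      have h2 := le_norm_pS α hε 0 m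
      rw [tw_zero_left] at h2
      have h3 := jb_pos m
      calc ‖a m‖ * jb m ^ (k + 1) = (ellip α)⁻¹ * ((ellip α * jb m) * ‖a m‖ * jb m ^ k) := by
            field_simp; ring
        _ ≤ _ := by gcongr; exact h2
  set φ : ℝ → ℂ := fun s => ∑' m, a m * e m s with hφ
  have hsm : ContDiff ℝ (⊤ : ℕ∞) φ := contDiff_infty.2 fun n => contDiff_tsum_e n a hw
  have hper : Function.Periodic φ 1 := fun s => by
    simp only [hφ]
    exact tsum_congr fun m => by rw [e_periodic m s]
  have hsum : ∀ s, HasSum (fun m => a m * e m s) (φ s) := fun s =>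
    (ev_hasSum s a).summable.hasSum
  have hfc : ∀ m, fc φ m = a m := fc_of_hasSum (seq_hasSum_norm a).summable hsum
  have hW : ∀ s, Wop V1 V2 φ s = 0 := fun s => by
    rw [R.wop hε hsm hper s]
    simp only [hfc]
    have h1 : ∑' p : ℤ × (ℤ × ℤ), a p.1 * kS c ε 0 p.2 p.1 * e (p.1 + p.2.1) s = ev s x := by
      have := (R.kop_hasSum hε a).mapL (ev s)
      rw [← hx] at this
      rw [← this.tsum_eq]
      exact tsum_congr fun p => by rw [map_smul, ev_unit, smul_eq_mul]
    have h2 : ∑' m, a m * pS α ε 0 m * e m s = -ev s x := by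
      rw [← (ev_hasSum s x).tsum_eq, ← tsum_neg]
      exact tsum_congr fun m => by rw [hxa]; ring
    rw [h1, h2]; ring
  have h0 := hinj φ hsm hper hW
  ext m
  rw [← hfc m, fc_eq]
  simp [h0]

/-- Uniform stability of `1 + R_N` for large `N`. -/
lemma Rep.stable (R : Rep V1 V2 α c) (hα : α ≠ 0) (hε : ε = 1 / 6 ∨ ε = -(1 / 6))
    (hinj : ∀ φ : ℝ → ℂ, ContDiff ℝ (⊤ : ℕ∞) φ → Function.Periodic φ 1 →
      (∀ s, Wop V1 V2 φ s = 0) → ∀ s, φ s = 0) :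
    ∃ (N0 : ℕ) (K : ℝ), 0 ≤ K ∧ ∀ N : ℕ, [NeZero N] → N0 ≤ N → ∀ a : LOne,
      ‖a‖ ≤ K * ‖a + Rop α c ε N a‖ := by
  have hcpt : IsCompactOperator (Rop α c ε 0) := colOp_compact (R.norm_rcol_le hα hε 0)
  have hev : ¬ Module.End.HasEigenvalue ((Rop α c ε 0 : LOne →L[ℂ] LOne) : LOne →ₗ[ℂ] LOne) (-1) := by
    intro h
    obtain ⟨a, ha⟩ := h.exists_hasEigenvector
    refine ha.2 (R.eq_zero hα hε hinj ?_)
    have := ha.apply_eq_smul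
    simpa using this
  obtain ⟨K, hK⟩ := hcpt.antilipschitz_of_not_hasEigenvalue (by norm_num) hev
  have hK' : ∀ a : LOne, ‖a‖ ≤ K * ‖a + Rop α c ε 0 a‖ := fun a => by
    have h := ContinuousLinearMap.bound_of_antilipschitz _ hK a
    have h1 : (Rop α c ε 0 - (-1 : ℂ) • (1 : LOne →L[ℂ] LOne)) a = a + Rop α c ε 0 a := by
      simp [add_comm]
    rwa [h1] at h
  obtain ⟨N0, hN0⟩ := R.rop_conv hα hε (δ := 1 / (2 * (K + 1))) (by positivity)
  refine ⟨N0, 2 * K, by positivity, fun N _ hN a => ?_⟩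
  have h1 := hN0 N hN
  have h2 : ‖a + Rop α c ε 0 a‖ ≤ ‖a + Rop α c ε N a‖ + 1 / (2 * (K + 1)) * ‖a‖ := by
    have e1 : a + Rop α c ε 0 a = (a + Rop α c ε N a) - (Rop α c ε N - Rop α c ε 0) a := by
      rw [sub_apply]; abel
    rw [e1]
    refine (norm_sub_le _ _).trans ?_
    gcongr
    exact ((Rop α c ε N - Rop α c ε 0).le_opNorm a).trans (by gcongr)
  have h3 := hK' a
  have hK0 : (0:ℝ) ≤ K := K.2
  have h4 : (K:ℝ) * (1 / (2 * (K + 1)) * ‖a‖) ≤ 1 / 2 * ‖a‖ := by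
    have : (K:ℝ) * (1 / (2 * (K + 1))) ≤ 1 / 2 := by
      rw [mul_one_div, div_le_iff₀ (by positivity)]; linarith
    calc _ = (K:ℝ) * (1 / (2 * (K + 1))) * ‖a‖ := by ring
      _ ≤ _ := by gcongr
  have h5 := mul_le_mul_of_nonneg_left h2 hK0
  rw [mul_add] at h5
  linarith

end NysLog

end

/-! ### Stability of the Nyström matrices -/

noncomputable section

namespace NysLog

open Complex (I)
open scoped Real

variable {V1 V2 : ℝ → ℝ → ℂ} {α : ℂ} {c : Coef} {ε : ℝ}

lemma nu_eq_iff (N : ℕ) (k n : ℤ) : nu N k = nu N n ↔ (N:ℤ) ∣ k - n := by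
  unfold nu
  rw [(ZMod.injective_valMinAbs).eq_iff, ← sub_eq_zero, ← Int.cast_sub,
    ZMod.intCast_zmod_eq_zero_iff_dvd]

lemma nu_nu (N : ℕ) (n : ℤ) : nu N (nu N n) = nu N n := by
  unfold nu; rw [ZMod.coe_valMinAbs]

lemma dS_add_mul (ε : ℝ) (N : ℕ) [NeZero N] (n a : ℤ) : dS ε N (n + a * N) = e (-a) ε * dS ε N n := by
  have hN : (N:ℤ) ≠ 0 := by exact_mod_cast NeZero.ne N
  rw [dS_eq, dS_eq]
  by_cases h : (N:ℤ) ∣ n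
  · obtain ⟨b, rfl⟩ := h
    rw [if_pos (Dvd.intro b rfl), if_pos ⟨b + a, by ring⟩,
      show -(N * b + a * N) = N * (-b - a : ℤ) by ring, show -(N * b : ℤ) = N * (-b) by ring,
      Int.mul_ediv_cancel_left _ hN, Int.mul_ediv_cancel_left _ hN, ← e_add]
    congr 1; ring
  · rw [if_neg h, if_neg, mul_zero]
    intro h2
    exact h ((Int.dvd_add_left (Dvd.intro_left a rfl)).1 h2)

lemma pS_add_mul (α : ℂ) (ε : ℝ) (N : ℕ) [NeZero N] (n a : ℤ) :
    pS α ε N (n + a * N) = e (-a) ε * pS α ε N n := by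
  have h : ((gS N (n + a * N) : ℝ) : ℂ) ^ 2 = (gS N n : ℂ) ^ 2 := by
    rw [← Complex.ofReal_pow, ← Complex.ofReal_pow, ← sq_abs, abs_gS_add_mul, sq_abs]
  rw [pS, pS, h, lS_add_mul, dS_add_mul]; ring

/-- A sequence whose Fourier series vanishes on the collocation grid is annihilated by `Bop`. -/
lemma Bop_eq_zero (hα : α ≠ 0) (hε : ε = 1 / 6 ∨ ε = -(1 / 6)) (N : ℕ) [NeZero N] {b : LOne}
    (hb : ∀ j : ℕ, j < N → ev (((j:ℝ) + ε) / N) b = 0) : Bop α ε N b = 0 := by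
  ext n
  rw [← coord_apply]
  by_cases hn : nu N n = n
  · have h : (coord n).comp (Bop α ε N) = (pS α ε N n)⁻¹ • ((1 / (N:ℂ)) •
        ∑ j ∈ Finset.range N, e (-n) (((j:ℝ) + ε) / N) • ev (((j:ℝ) + ε) / N)) := by
      refine clm_ext fun k => ?_
      rw [ContinuousLinearMap.comp_apply, Bop_unit hα hε, map_smul, coord_apply, unit_apply]
      simp only [smul_apply, sum_apply, ev_unit, smul_eq_mul, ← e_add]
      rw [char_sum]
      have hiff : n = nu N k ↔ (N:ℤ) ∣ -n + k := by
        rw [show -n + k = k - n by ring, ← nu_eq_iff, hn, eq_comm]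
      by_cases hk : n = nu N k
      · rw [if_pos hk, if_pos (hiff.1 hk), mul_one]
        obtain ⟨a, ha⟩ := hiff.1 hk
        have hN : (N:ℤ) ≠ 0 := by exact_mod_cast NeZero.ne N
        have hk2 : k = n + a * N := by linarith
        rw [ha, Int.mul_ediv_cancel_left _ hN, hk2, pS_add_mul, mul_inv, e_neg, inv_inv, mul_comm]
      · rw [if_neg hk, if_neg (fun h => hk (hiff.2 h)), mul_zero, mul_zero]
    have h2 := congrArg (fun T : LOne →L[ℂ] ℂ => T b) h
    simp only [ContinuousLinearMap.comp_apply, smul_apply, sum_apply] at h2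
    rw [h2, Finset.sum_eq_zero fun j hj => by rw [hb j (Finset.mem_range.1 hj), smul_zero]]
    simp
  · have h : (coord n).comp (Bop α ε N) = 0 := by
      refine clm_ext fun k => ?_
      rw [ContinuousLinearMap.comp_apply, Bop_unit hα hε, map_smul, coord_apply, unit_apply, if_neg]
      · simp
      · intro h
        exact hn (by rw [h, nu_nu])
    have h2 := congrArg (fun T : LOne →L[ℂ] ℂ => T b) h
    simpa using h2

/-- The coefficients of the (discrete or, for `N = 0`, continuous) operator applied to `e m`. -/
def Mcol (α : ℂ) (c : Coef) (ε : ℝ) (N : ℕ) (m : ℤ) : LOne := pS α ε N m • unitVec m + Kcol c ε N m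

lemma Rep.ev_kcol (R : Rep V1 V2 α c) (hε : ε = 1 / 6 ∨ ε = -(1 / 6)) (N : ℕ) (m : ℤ) (s : ℝ) :
    HasSum (fun i : ℤ × ℤ => kS c ε N i m * e (m + i.1) s) (ev s (Kcol c ε N m)) := by
  refine hasSum_of_eq ((R.kcol_hasSum hε N m).mapL (ev s)) fun i => ?_
  rw [map_smul, ev_unit, smul_eq_mul]

lemma Rep.ev_mcol (R : Rep V1 V2 α c) (hε : ε = 1 / 6 ∨ ε = -(1 / 6)) (N : ℕ) [NeZero N] (m i : ℤ) :
    ev (tg (1 / (N:ℝ)) ε i) (Mcol α c ε N m) =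
      N * ∑ z : ZMod N, Wmat V1 V2 (1 / (N:ℝ)) ε i ((z.val : ℕ) : ℤ) *
        e m (tg (1 / (N:ℝ)) 0 ((z.val : ℕ) : ℤ)) := by
  rw [Mcol, map_add, map_smul, ev_unit, smul_eq_mul,
    (R.ev_kcol hε N m _).unique (disc_main R ε N m i)]
  ring

lemma Rep.Bop_mcol (R : Rep V1 V2 α c) (hα : α ≠ 0) (hε : ε = 1 / 6 ∨ ε = -(1 / 6)) (N : ℕ) (m : ℤ)
    (hm : nu N m = m) :
    Bop α ε N (Mcol α c ε N m) = unitVec m + Rop α c ε N (unitVec m) := by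
  rw [Mcol, map_add, map_smul, Bop_unit hα hε, hm, R.rop_unit hα hε N m hm, smul_smul,
    mul_inv_cancel₀ (pS_ne_zero hα hε N m), one_smul]

/-- Trigonometric interpolation on the uniform grid. -/
lemma exists_interp (N : ℕ) [NeZero N] (v : ZMod N → ℂ) : ∃ A : ZMod N → ℂ, ∀ j : ZMod N,
    v j = ∑ z : ZMod N, A z * e z.valMinAbs (tg (1 / (N:ℝ)) 0 ((j.val : ℕ) : ℤ)) := by
  refine ⟨fun z => (N:ℂ)⁻¹ * ZMod.dft v z, fun j => ?_⟩
  have h := ZMod.invDFT_apply (ZMod.dft v) j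
  rw [LinearEquiv.symm_apply_apply] at h
  rw [h, smul_eq_mul, Finset.mul_sum]
  refine Finset.sum_congr rfl fun z _ => ?_
  have h1 : ZMod.stdAddChar (z * j) = e z.valMinAbs (tg (1 / (N:ℝ)) 0 ((j.val : ℕ) : ℤ)) := by
    have h2 : z * j = ((z.valMinAbs * (j.val : ℕ) : ℤ) : ZMod N) := by
      push_cast
      rw [ZMod.natCast_zmod_val]
    rw [h2, ZMod.stdAddChar_coe, e, tg]
    congr 1
    push_cast
    ring
  rw [h1, smul_eq_mul]; ring

/-- Uniform stability: grid data given by the Fourier series of `τ` controls the solution. -/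
lemma Rep.nys_stable (R : Rep V1 V2 α c) (hα : α ≠ 0) (hε : ε = 1 / 6 ∨ ε = -(1 / 6))
    (hinj : ∀ φ : ℝ → ℂ, ContDiff ℝ (⊤ : ℕ∞) φ → Function.Periodic φ 1 →
      (∀ s, Wop V1 V2 φ s = 0) → ∀ s, φ s = 0) :
    ∃ (N0 : ℕ) (C : ℝ), 0 ≤ C ∧ ∀ N : ℕ, [NeZero N] → N0 ≤ N → ∀ (v : ZMod N → ℂ) (τ : LOne),
      (∀ i : ZMod N, N * ∑ z : ZMod N, Wmat V1 V2 (1 / (N:ℝ)) ε ((i.val : ℕ) : ℤ) ((z.val : ℕ) : ℤ) *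
        v z = ev (tg (1 / (N:ℝ)) ε ((i.val : ℕ) : ℤ)) τ) → ∀ j, ‖v j‖ ≤ C * ‖τ‖ := by
  obtain ⟨N0, K, hK0, hK⟩ := R.stable hα hε hinj
  have hd := ellip_pos hα
  refine ⟨N0, K * (ellip α)⁻¹, by positivity, fun N _ hN v τ hτ j => ?_⟩
  obtain ⟨A, hA⟩ := exists_interp N v
  set a : LOne := ∑ z : ZMod N, A z • unitVec z.valMinAbs with ha
  set τ' : LOne := ∑ z : ZMod N, A z • Mcol α c ε N z.valMinAbs with hτ'
  have hva : ∀ j : ZMod N, v j = ev (tg (1 / (N:ℝ)) 0 ((j.val : ℕ) : ℤ)) a := fun j => by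
    rw [hA j, ha, map_sum]
    exact Finset.sum_congr rfl fun z _ => by rw [map_smul, ev_unit, smul_eq_mul]
  have h1 : ∀ i : ZMod N, ev (tg (1 / (N:ℝ)) ε ((i.val : ℕ) : ℤ)) τ' =
      ev (tg (1 / (N:ℝ)) ε ((i.val : ℕ) : ℤ)) τ := fun i => by
    rw [← hτ i, hτ', map_sum]
    simp only [map_smul, R.ev_mcol hε, smul_eq_mul, hA, Finset.mul_sum]
    rw [Finset.sum_comm]
    refine Finset.sum_congr rfl fun z _ => Finset.sum_congr rfl fun y _ => ?_
    ring
  have h2 : Bop α ε N (τ' - τ) = 0 := by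
    refine Bop_eq_zero hα hε N fun j hj => ?_
    have h3 := h1 (j : ZMod N)
    rw [ZMod.val_natCast_of_lt hj, tg_eq] at h3
    simp only [add_zero, Int.cast_natCast] at h3
    rw [map_sub, h3, sub_self]
  have h3 : Bop α ε N τ' = a + Rop α c ε N a := by
    rw [hτ', ha, map_sum, map_sum, ← Finset.sum_add_distrib]
    refine Finset.sum_congr rfl fun z _ => ?_
    rw [map_smul, map_smul, R.Bop_mcol hα hε N _ (by rw [nu, ZMod.coe_valMinAbs]), smul_add]
  have h4 := hK N hN a
  rw [map_sub, sub_eq_zero] at h2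
  rw [← h3, h2] at h4
  have h5 := norm_Bop_apply_le hα hε N τ
  rw [hva j]
  calc _ ≤ ‖a‖ := norm_ev_le _ _
    _ ≤ K * ((ellip α)⁻¹ * ‖τ‖) := h4.trans (by gcongr)
    _ = _ := by ring

end NysLog

end

/-! ### Consistency and convergence -/

noncomputable section

namespace NysLog

open Complex (I)
open scoped Real

variable {V1 V2 : ℝ → ℝ → ℂ} {α : ℂ} {c : Coef} {ε : ℝ}

/-- Sobolev embedding into the space with `⟨m⟩³`-weighted absolutely summable coefficients. -/
lemma tsum_le_sobNorm : ∃ C : ℝ, 0 ≤ C ∧ ∀ φ : ℝ → ℂ, ContDiff ℝ (⊤ : ℕ∞) φ → Function.Periodic φ 1 →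
    ∑' m, ‖fc φ m‖ * jb m ^ 3 ≤ C * sobNorm 4 φ := by
  refine ⟨(∑' m, 1 / jb m ^ 2) ^ (1 / 2 : ℝ) * 16, ?_, fun φ hφ hp => ?_⟩
  · have : 0 ≤ ∑' m, 1 / jb m ^ 2 := tsum_nonneg fun m => by have := jb_pos m; positivity
    positivity
  set g : ℤ → ℝ := fun m => ‖fc φ m‖ * jb m ^ 4 with hg
  have hg0 : ∀ m, 0 ≤ g m := fun m => by have := jb_pos m; positivity
  have hgs : Summable g := fc_summable 4 hφ hp
  have hgq : Summable fun m => g m ^ 2 := by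
    refine Summable.of_nonneg_of_le (fun m => sq_nonneg _) (fun m => ?_) (hgs.mul_left (∑' m, g m))
    have := hgs.le_tsum m (fun j _ => hg0 j)
    rw [sq]; exact mul_le_mul_of_nonneg_right this (hg0 m)
  set f : ℤ → ℝ := fun m => if m = 0 then ‖fc φ 0‖ ^ 2 else |(m : ℝ)| ^ (2 * (4:ℝ)) * ‖fc φ m‖ ^ 2 with hf
  have hrp : ∀ m : ℤ, |(m:ℝ)| ^ (2 * (4:ℝ)) = |(m:ℝ)| ^ 8 := fun m => by
    rw [show (2 * (4:ℝ)) = ((8:ℕ):ℝ) by norm_num, Real.rpow_natCast]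
  have hf0 : ∀ m, 0 ≤ f m := fun m => by simp only [hf]; split_ifs <;> positivity
  have hfg : ∀ m, f m ≤ g m ^ 2 := fun m => by
    simp only [hf, hg, hrp]
    split_ifs with h
    · subst h; simp [jb]
    · have := abs_le_jb m
      calc _ ≤ jb m ^ 8 * ‖fc φ m‖ ^ 2 := by gcongr
        _ = _ := by ring
  have hgf : ∀ m, g m ^ 2 ≤ 256 * f m := fun m => by
    simp only [hf, hg, hrp]
    split_ifs with h
    · subst h; simp only [jb]; simp; nlinarith [sq_nonneg ‖fc φ 0‖]
    · have h1 : 1 ≤ |(m:ℝ)| := by exact_mod_cast Int.one_le_abs h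
      have h2 : jb m ≤ 2 * |(m:ℝ)| := by unfold jb; linarith
      have h3 := jb_pos m
      calc _ = jb m ^ 8 * ‖fc φ m‖ ^ 2 := by ring
        _ ≤ (2 * |(m:ℝ)|) ^ 8 * ‖fc φ m‖ ^ 2 := by gcongr
        _ = _ := by ring
  have hfs : Summable f := Summable.of_nonneg_of_le hf0 hfg hgq
  have hsob : sobNorm 4 φ = Real.sqrt (∑' m, f m) := by
    rw [sobNorm, hfs.tsum_eq_add_tsum_ite 0]
    congr 2
    refine tsum_congr fun m => ?_
    by_cases h : m = 0
    · simp [h]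
    · simp [h, hf]
  have hcs := Real.inner_le_Lp_mul_Lq_tsum_of_nonneg (f := fun m : ℤ => 1 / jb m) (g := g)
    (p := 2) (q := 2) Real.HolderConjugate.two_two
    (fun m => by have := jb_pos m; positivity) hg0
    (by simpa using summable_inv_jb_sq) (by simpa using hgq)
  simp only [Real.rpow_two] at hcs
  have e1 : ∀ m, 1 / jb m * g m = ‖fc φ m‖ * jb m ^ 3 := fun m => by
    have := (jb_pos m).ne'
    simp only [hg]; field_simp
  simp only [e1, div_pow, one_pow] at hcs
  refine hcs.trans ?_
  rw [mul_assoc, hsob]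
  gcongr
  rw [← Real.sqrt_eq_rpow]
  calc _ ≤ Real.sqrt (16 ^ 2 * ∑' m, f m) := by
        refine Real.sqrt_le_sqrt ?_
        rw [← tsum_mul_left]
        exact hgq.tsum_le_tsum (fun m => by simpa [show (16:ℝ)^2 = 256 by norm_num] using hgf m)
          (hfs.mul_left _)
    _ = _ := by rw [Real.sqrt_mul (by positivity), Real.sqrt_sq (by norm_num)]

lemma Rep.mcol_conv (R : Rep V1 V2 α c) (hε : ε = 1 / 6 ∨ ε = -(1 / 6)) (N : ℕ) [NeZero N] (m : ℤ) :
    ‖Mcol α c ε 0 m - Mcol α c ε N m‖ ≤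
      (20000 * (‖α‖ + 1) + 1000000 * cS c 8) * (jb m ^ 3 / N ^ 2) := by
  have h1 := R.kcol_conv hε N m
  have h2 := pS_conv α hε N m
  have e1 : Mcol α c ε 0 m - Mcol α c ε N m =
      -((pS α ε N m - pS α ε 0 m) • unitVec m + (Kcol c ε N m - Kcol c ε 0 m)) := by
    rw [Mcol, Mcol, sub_smul]; abel
  rw [e1, norm_neg]
  refine (norm_add_le _ _).trans ?_
  rw [norm_smul, norm_unit, mul_one, add_mul, ← mul_div_assoc (20000 * (‖α‖ + 1))]
  linarith

/-- The hypersingular operator in terms of its columns. -/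
lemma Rep.wop_hasSum (R : Rep V1 V2 α c) (hε : ε = 1 / 6 ∨ ε = -(1 / 6)) {φ : ℝ → ℂ}
    (hφ : ContDiff ℝ (⊤ : ℕ∞) φ) (hp : Function.Periodic φ 1) (s : ℝ) :
    HasSum (fun m => fc φ m * ev s (Mcol α c ε 0 m)) (Wop V1 V2 φ s) := by
  rw [R.wop hε hφ hp s]
  have s1 : Summable fun m => fc φ m * pS α ε 0 m * e m s := by
    refine Summable.of_norm_bounded ((fc_summable 1 hφ hp).mul_left (392 * ‖α‖ + 1)) fun m => ?_
    have h := norm_pS_le α hε 0 m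
    rw [tw_zero_left] at h
    rw [norm_mul, norm_e, mul_one, norm_mul, pow_one]
    calc _ ≤ ‖fc φ m‖ * ((392 * ‖α‖ + 1) * jb m) := by gcongr
      _ = _ := by ring
  have s2 : Summable fun p : ℤ × (ℤ × ℤ) => fc φ p.1 * kS c ε 0 p.2 p.1 * e (p.1 + p.2.1) s := by
    have := R.summable_kop hε (a := fc φ) (k := 0) (fc_summable 0 hφ hp)
    refine Summable.of_norm ?_
    simpa [norm_mul, norm_e] using this
  have h2 : HasSum (fun m => fc φ m * ev s (Kcol c ε 0 m))
      (∑' p : ℤ × (ℤ × ℤ), fc φ p.1 * kS c ε 0 p.2 p.1 * e (p.1 + p.2.1) s) := by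
    refine s2.hasSum.prod_fiberwise fun m => ?_
    refine hasSum_of_eq ((R.ev_kcol hε 0 m s).mul_left (fc φ m)) fun i => ?_
    simp only; ring
  refine hasSum_of_eq (s1.hasSum.add h2) fun m => ?_
  rw [Mcol, map_add, map_smul, ev_unit, smul_eq_mul]; ring

/-- Consistency: the exact nodal values satisfy the discrete system up to the grid values of a
Fourier series with coefficients of size `O(h²)` in `ℓ¹(ℤ)`. -/
lemma Rep.consistency (R : Rep V1 V2 α c) (hε : ε = 1 / 6 ∨ ε = -(1 / 6)) :
    ∃ C : ℝ, 0 ≤ C ∧ ∀ φ : ℝ → ℂ, ContDiff ℝ (⊤ : ℕ∞) φ → Function.Periodic φ 1 →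
      ∀ (N : ℕ) [NeZero N], ∃ τ : LOne, ‖τ‖ ≤ C * (1 / (N:ℝ)) ^ 2 * sobNorm 4 φ ∧
        ∀ i : ℤ, Wop V1 V2 φ (tg (1 / (N:ℝ)) ε i) -
          N * ∑ z : ZMod N, Wmat V1 V2 (1 / (N:ℝ)) ε i ((z.val : ℕ) : ℤ) *
            φ (tg (1 / (N:ℝ)) 0 ((z.val : ℕ) : ℤ)) = ev (tg (1 / (N:ℝ)) ε i) τ := by
  obtain ⟨C, hC0, hC⟩ := tsum_le_sobNorm
  set D := 20000 * (‖α‖ + 1) + 1000000 * cS c 8 with hD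
  have hD0 : 0 ≤ D := by have := cS_nonneg c 8; positivity
  refine ⟨D * C, by positivity, fun φ hφ hp N _ => ?_⟩
  have hs3 := fc_summable 3 hφ hp
  have hb : ∀ m, ‖fc φ m • (Mcol α c ε 0 m - Mcol α c ε N m)‖ ≤
      D / N ^ 2 * (‖fc φ m‖ * jb m ^ 3) := fun m => by
    rw [norm_smul]
    calc _ ≤ ‖fc φ m‖ * (D * (jb m ^ 3 / N ^ 2)) := by gcongr; exact R.mcol_conv hε N m
      _ = _ := by ring
  have hsum : Summable fun m => fc φ m • (Mcol α c ε 0 m - Mcol α c ε N m) :=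
    Summable.of_norm_bounded (hs3.mul_left _) hb
  refine ⟨∑' m, fc φ m • (Mcol α c ε 0 m - Mcol α c ε N m), ?_, fun i => ?_⟩
  · refine (tsum_of_norm_bounded (hs3.hasSum.mul_left _) hb).trans ?_
    calc _ ≤ D / N ^ 2 * (C * sobNorm 4 φ) := by gcongr; exact hC φ hφ hp
      _ = _ := by ring
  · set s := tg (1 / (N:ℝ)) ε i with hs
    have h1 := R.wop_hasSum hε hφ hp s
    have h2 : HasSum (fun m => fc φ m * ev s (Mcol α c ε N m))
        (N * ∑ z : ZMod N, Wmat V1 V2 (1 / (N:ℝ)) ε i ((z.val : ℕ) : ℤ) *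
            φ (tg (1 / (N:ℝ)) 0 ((z.val : ℕ) : ℤ))) := by
      refine hasSum_of_eq ((hasSum_sum fun z (_ : z ∈ (Finset.univ : Finset (ZMod N))) =>
        (hasSum_fc_of_smooth hφ hp (tg (1 / (N:ℝ)) 0 ((z.val : ℕ) : ℤ))).mul_left
          (Wmat V1 V2 (1 / (N:ℝ)) ε i ((z.val : ℕ) : ℤ))).mul_left (N:ℂ)) fun m => ?_
      rw [hs, R.ev_mcol hε]
      simp only [Finset.mul_sum]
      exact Finset.sum_congr rfl fun z _ => by ring
    have h3 := hsum.hasSum.mapL (ev s)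
    exact (h1.sub h2).unique (hasSum_of_eq h3 fun m => by
      rw [map_smul, map_sub, smul_eq_mul, mul_sub])

end NysLog

end

/-- for `ε = ±1/6`, second-order uniform nodal convergence
`max_j |φ_j − φ(t_j)| ≤ C h² ‖φ‖₄`. -/
theorem stmt_18
    (A1 K1 A2 K2 : ℝ → ℝ → ℂ) (hA1 : SPK A1) (hK1 : SPK K1) (hA2 : SPK A2) (hK2 : SPK K2)
    (α : ℂ) (hα : α ≠ 0) (hdiag : ∀ s : ℝ, A1 s s = α)
    (hinj : ∀ φ : ℝ → ℂ, ContDiff ℝ (⊤ : ℕ∞) φ → Function.Periodic φ 1 →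
      (∀ s, Wop (logKer A1 K1) (logKer A2 K2) φ s = 0) → ∀ s, φ s = 0)
    (ε : ℝ) (hε : ε = 1 / 6 ∨ ε = -(1 / 6)) :
    ∃ h0 > (0:ℝ), ∃ C > (0:ℝ), ∀ φ : ℝ → ℂ, ContDiff ℝ (⊤ : ℕ∞) φ → Function.Periodic φ 1 →
      ∀ (N : ℕ) [NeZero N], 1 / (N : ℝ) ≤ h0 →
        (∃! v : ZMod N → ℂ, Nys (logKer A1 K1) (logKer A2 K2) ε N φ v) ∧
        ∀ v : ZMod N → ℂ, Nys (logKer A1 K1) (logKer A2 K2) ε N φ v →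
          ∀ j : ZMod N,
            ‖v j - φ (tg (1 / (N : ℝ)) 0 ((j.val : ℕ) : ℤ))‖ ≤
              C * (1 / (N : ℝ)) ^ 2 * sobNorm 4 φ := by
  obtain ⟨c, R⟩ := NysLog.exists_rep hA1 hK1 hA2 hK2 hdiag
  obtain ⟨N0, C, hC0, hstab⟩ := R.nys_stable hα hε hinj
  obtain ⟨D, hD0, hcons⟩ := R.consistency hε
  refine ⟨1 / ((N0 : ℝ) + 1), by positivity, C * D + 1, by positivity, ?_⟩
  intro φ hφ hp N _ hN
  have hNpos : (0:ℝ) < N := by exact_mod_cast Nat.pos_of_ne_zero (NeZero.ne N)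
  have hNc : (N:ℂ) ≠ 0 := by exact_mod_cast NeZero.ne N
  have hN0 : N0 ≤ N := by
    rw [one_div_le_one_div hNpos (by positivity)] at hN
    have : (N0:ℝ) ≤ N := by linarith
    exact_mod_cast this
  set V1 := logKer A1 K1
  set V2 := logKer A2 K2
  constructor
  · -- stability with zero data makes the square system injective, hence bijective
    let T : (ZMod N → ℂ) →ₗ[ℂ] (ZMod N → ℂ) := Matrix.mulVecLin (Matrix.of fun i j : ZMod N =>
      Wmat V1 V2 (1 / (N : ℝ)) ε ((i.val : ℕ) : ℤ) ((j.val : ℕ) : ℤ))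
    have hTa : ∀ v i, T v i = ∑ j : ZMod N,
        Wmat V1 V2 (1 / (N : ℝ)) ε ((i.val : ℕ) : ℤ) ((j.val : ℕ) : ℤ) * v j := fun v i => rfl
    have hTi : Function.Injective T := by
      rw [← LinearMap.ker_eq_bot, LinearMap.ker_eq_bot']
      intro v hv
      funext j
      have h := hstab N hN0 v 0 (fun i => by rw [← hTa, hv]; simp) j
      simpa using h
    obtain ⟨v, hv⟩ := (LinearMap.injective_iff_surjective.1 hTi) fun i =>
      (1 / (N : ℂ)) * Wop V1 V2 φ (tg (1 / (N : ℝ)) ε ((i.val : ℕ) : ℤ))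
    refine ⟨v, fun i => ?_, fun w hw => hTi ?_⟩
    · rw [← hTa, hv]
    · rw [hv]
      funext i
      rw [hTa]
      exact hw i
  · intro v hv j
    obtain ⟨τ, hτ, hτe⟩ := hcons φ hφ hp N
    have h := hstab N hN0 (fun j => v j - φ (tg (1 / (N : ℝ)) 0 ((j.val : ℕ) : ℤ))) τ (fun i => by
      rw [← hτe]
      simp only [mul_sub, Finset.sum_sub_distrib]
      rw [hv i]
      field_simp) j
    have hs : 0 ≤ sobNorm 4 φ := Real.sqrt_nonneg _
    calc _ ≤ C * ‖τ‖ := h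
      _ ≤ C * (D * (1 / (N:ℝ)) ^ 2 * sobNorm 4 φ) := by gcongr
      _ = C * D * ((1 / (N:ℝ)) ^ 2 * sobNorm 4 φ) := by ring
      _ ≤ (C * D + 1) * ((1 / (N:ℝ)) ^ 2 * sobNorm 4 φ) := by gcongr; linarith
      _ = _ := by ring
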